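/- arXiv:1202.4539 — 3 statements merged into one kernel-verified Lean document; each statement's English description precedes it below -/
import Mathlib

section
/- For every ε > 0 and every irrational real number θ one has liminf_{q → ∞, q ∈ ℤ_{>0}} q^{2/3 − ε} ‖q²θ‖ = 0. -/
open Filter

/-- Distance from a real number to the nearest integer. -/
noncomputable def nint (x : ℝ) : ℝ := |x - round x|

/-!
Let `p / q` be a good rational approximation to `θ`, with `q` large, and let `a q - p b = 1` with
`b` odd and `b ≤ 2 q`. For `1 ≤ y ≤ M`, where `M` is a tiny power of `q`, the moduli `Q = b + 2 q y`
are odd, have pairwise greatest common divisors at most `M`, and `|Q θ - A| ≪ M / q` for the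
numerator `A = a + 2 p y`. If all of these moduli had a nontrivial real character with a large sum
over `[1, M ^ 2]`, the `k`-th powers of these sums would contradict the duality form of the large
sieve. So for some `Q` every reduced residue class becomes a square after multiplication by some
`r ≤ M ^ 2`. In particular `r A ≡ l ^ 2` modulo `Q`, and Thue's lemma gives `n ≤ Q ^ (3 / 4)` and
`k ≤ Q ^ (1 / 4)` with `n ^ 2 A ≡ r k ^ 2` modulo `Q`. Hence
`‖n ^ 2 θ‖ ≤ r k ^ 2 / Q + (n ^ 2 / Q) |Q θ - A| ≪ M ^ 2 / √Q`, while `√Q ≥ (n ^ 2) ^ (1 / 3)`.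
-/

/-! ### The divisor function -/

section DivisorFunction

open Finset

/-- The maximal number of divisors of an integer in `[1, N]`, the uniform form of the divisor
bound. -/
def maxCardDivisors (N : ℕ) : ℕ := (Icc 1 N).sup fun n => #n.divisors

lemma card_divisors_le_maxCardDivisors {n N : ℕ} (h : n ≤ N) : #n.divisors ≤ maxCardDivisors N := by
  rcases n.eq_zero_or_pos with rfl | hn
  · simp
  · exact le_sup (f := fun n : ℕ => #n.divisors) (mem_Icc.mpr ⟨hn, h⟩)

lemma exists_succ_pow_le_mul_two_pow (j : ℕ) : ∃ K : ℕ, ∀ e : ℕ, (e + 1) ^ j ≤ K * 2 ^ e := by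
  obtain ⟨B, hB⟩ :=
    (tendsto_pow_const_div_const_pow_of_one_lt j (r := (2 : ℝ)) one_lt_two).bddAbove_range
  refine ⟨⌈B * 2⌉₊, fun e => ?_⟩
  have hBe : ((e + 1 : ℕ) : ℝ) ^ j / 2 ^ (e + 1) ≤ B := hB ⟨e + 1, rfl⟩
  have hreal : ((e + 1 : ℕ) : ℝ) ^ j ≤ ⌈B * 2⌉₊ * 2 ^ e := calc
    ((e + 1 : ℕ) : ℝ) ^ j ≤ B * 2 ^ (e + 1) := (div_le_iff₀ (by positivity)).mp hBe
    _ = B * 2 * 2 ^ e := by ring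
    _ ≤ ⌈B * 2⌉₊ * 2 ^ e := by gcongr; exact Nat.le_ceil _
  exact_mod_cast hreal

lemma exists_card_divisors_pow_le (j : ℕ) :
    ∃ C : ℕ, ∀ n : ℕ, n ≠ 0 → #n.divisors ^ j ≤ C * n := by
  obtain ⟨K, hK⟩ := exists_succ_pow_le_mul_two_pow j
  have hK1 : 1 ≤ K := by simpa using hK 0
  refine ⟨K ^ 2 ^ j, fun n hn => ?_⟩
  -- Only the primes below `2 ^ j` contribute more to `τ(n) ^ j` than to `n`.
  have hfactor : ∀ p ∈ n.primeFactors, (n.factorization p + 1) ^ j ≤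
      (if p < 2 ^ j then K else 1) * p ^ n.factorization p := by
    intro p hp
    have hp2 : 2 ≤ p := (Nat.prime_of_mem_primeFactors hp).two_le
    split_ifs with h
    · exact (hK _).trans (by gcongr)
    · calc (n.factorization p + 1) ^ j ≤ (2 ^ n.factorization p) ^ j := by
            gcongr; exact Nat.lt_two_pow_self
        _ = (2 ^ j) ^ n.factorization p := pow_right_comm ..
        _ ≤ 1 * p ^ n.factorization p := by rw [one_mul]; gcongr; lia
  have hsmall : #{p ∈ n.primeFactors | p < 2 ^ j} ≤ 2 ^ j := by
    calc #{p ∈ n.primeFactors | p < 2 ^ j} ≤ #(range (2 ^ j)) :=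
          card_le_card fun p hp => mem_range.mpr (mem_filter.mp hp).2
      _ = 2 ^ j := card_range _
  calc #n.divisors ^ j = ∏ p ∈ n.primeFactors, (n.factorization p + 1) ^ j := by
        rw [Nat.card_divisors hn, prod_pow]
    _ ≤ ∏ p ∈ n.primeFactors, (if p < 2 ^ j then K else 1) * p ^ n.factorization p :=
        prod_le_prod' hfactor
    _ = K ^ #{p ∈ n.primeFactors | p < 2 ^ j} * n := by
        rw [prod_mul_distrib, ← prod_filter, prod_const]
        exact congrArg _ (Nat.prod_factorization_pow_eq_self hn)
    _ ≤ K ^ 2 ^ j * n := by gcongr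

lemma exists_maxCardDivisors_pow_le (j : ℕ) :
    ∃ C : ℕ, ∀ N : ℕ, N ≠ 0 → maxCardDivisors N ^ j ≤ C * N := by
  obtain ⟨C, hC⟩ := exists_card_divisors_pow_le j
  refine ⟨C, fun N hN => ?_⟩
  obtain ⟨n, hn, hmax⟩ := exists_mem_eq_sup (Icc 1 N) ⟨1, mem_Icc.mpr ⟨le_rfl, by lia⟩⟩
    fun n => #n.divisors
  rw [mem_Icc] at hn
  calc maxCardDivisors N ^ j = #n.divisors ^ j := congrArg (· ^ j) hmax
    _ ≤ C * n := hC n (by lia)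
    _ ≤ C * N := by gcongr; exact hn.2

lemma eventually_mul_maxCardDivisors_pow_lt (C L j : ℕ) :
    ∀ᶠ M : ℕ in atTop, C * maxCardDivisors (M ^ L) ^ j < M := by
  obtain ⟨D, hD⟩ := exists_maxCardDivisors_pow_le (j * (L + 1))
  filter_upwards [eventually_gt_atTop (C ^ (L + 1) * D)] with M hM
  have hM0 : 0 < M := by lia
  refine lt_of_pow_lt_pow_left₀ (L + 1) hM0.le ?_
  calc (C * maxCardDivisors (M ^ L) ^ j) ^ (L + 1)
      = C ^ (L + 1) * maxCardDivisors (M ^ L) ^ (j * (L + 1)) := by rw [mul_pow, ← pow_mul]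
    _ ≤ C ^ (L + 1) * (D * M ^ L) := by gcongr; exact hD _ (pow_pos hM0 L).ne'
    _ = C ^ (L + 1) * D * M ^ L := by ring
    _ < M * M ^ L := by gcongr
    _ = M ^ (L + 1) := (pow_succ' M L).symm

end DivisorFunction

/-! ### Integers coprime to a modulus -/

section Coprime

open Finset
open scoped ArithmeticFunction.Moebius

lemma sum_divisors_moebius (n : ℕ) : ∑ d ∈ n.divisors, μ d = if n = 1 then 1 else 0 := by
  rw [← ArithmeticFunction.coe_mul_zeta_apply, ArithmeticFunction.moebius_mul_coe_zeta,
    ArithmeticFunction.one_apply]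

lemma sum_Icc_div_mul {A : Type*} [AddCommMonoid A] {d : ℕ} (hd : 0 < d) (R : ℕ) (f : ℕ → A) :
    ∑ j ∈ Icc 1 (R / d), f (d * j) = ∑ r ∈ Icc 1 R with d ∣ r, f r := by
  refine sum_bij (fun j _ => d * j) (fun j hj => ?_)
    (fun i _ j _ h => Nat.eq_of_mul_eq_mul_left hd h) (fun r hr => ?_) fun _ _ => rfl
  · rw [mem_Icc, Nat.le_div_iff_mul_le hd, mul_comm j d] at hj
    exact mem_filter.mpr ⟨mem_Icc.mpr ⟨Nat.mul_pos hd hj.1, hj.2⟩, dvd_mul_right d j⟩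
  · rw [mem_filter, mem_Icc] at hr
    obtain ⟨⟨hr1, hrR⟩, j, rfl⟩ := hr
    refine ⟨j, mem_Icc.mpr ⟨Nat.pos_of_mul_pos_left hr1, ?_⟩, rfl⟩
    rwa [Nat.le_div_iff_mul_le hd, mul_comm]

lemma sum_coprime_eq_sum_moebius {A : Type*} [AddCommGroup A] {Q : ℕ} (hQ : Q ≠ 0) (R : ℕ)
    (f : ℕ → A) :
    ∑ r ∈ Icc 1 R with r.Coprime Q, f r =
      ∑ d ∈ Q.divisors, μ d • ∑ j ∈ Icc 1 (R / d), f (d * j) := by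
  have hcoprime (r : ℕ) :
      ∑ d ∈ Q.divisors, (if d ∣ r then μ d • f r else 0) = if r.Coprime Q then f r else 0 := by
    have hdivisors : {d ∈ Q.divisors | d ∣ r} = (r.gcd Q).divisors := by
      ext d
      simp only [mem_filter, Nat.mem_divisors, Nat.dvd_gcd_iff]
      have : r.gcd Q ≠ 0 := Nat.gcd_ne_zero_right hQ
      tauto
    rw [← sum_filter, ← sum_smul, hdivisors, sum_divisors_moebius]
    simp only [Nat.coprime_iff_gcd_eq_one, ite_smul, one_smul, zero_smul]
  calc ∑ r ∈ Icc 1 R with r.Coprime Q, f r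
      = ∑ r ∈ Icc 1 R, ∑ d ∈ Q.divisors, (if d ∣ r then μ d • f r else 0) := by
        simp only [sum_filter, hcoprime]
    _ = ∑ d ∈ Q.divisors, μ d • ∑ r ∈ Icc 1 R with d ∣ r, f r := by
        rw [sum_comm]
        simp only [smul_sum, sum_filter, smul_ite, smul_zero]
    _ = ∑ d ∈ Q.divisors, μ d • ∑ j ∈ Icc 1 (R / d), f (d * j) :=
        sum_congr rfl fun d hd => by rw [sum_Icc_div_mul (Nat.pos_of_mem_divisors hd)]

lemma le_totient_mul_card_divisors (Q : ℕ) : Q ≤ Q.totient * #Q.divisors := by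
  rcases eq_or_ne Q 0 with rfl | hQ
  · exact Nat.zero_le _
  have : NeZero Q := ⟨hQ⟩
  have hsurj : Function.Surjective
      fun x : (ZMod Q)ˣ × Q.divisors => (x.1 : ZMod Q) * ((x.2 : ℕ) : ZMod Q) := by
    intro a
    obtain ⟨d, hd, u, hu, rfl⟩ := a.eq_unit_mul_divisor
    exact ⟨⟨hu.unit, ⟨d, Nat.mem_divisors.mpr ⟨hd, hQ⟩⟩⟩, rfl⟩
  simpa [ZMod.card, ZMod.card_units_eq_totient] using Fintype.card_le_of_surjective _ hsurj

lemma card_coprime_eq_sum_moebius (A : Type*) [Ring A] {Q : ℕ} (hQ : Q ≠ 0) (R : ℕ) :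
    (#{r ∈ Icc 1 R | r.Coprime Q} : A) = ∑ d ∈ Q.divisors, (μ d : A) * (R / d : ℕ) := by
  simpa using sum_coprime_eq_sum_moebius hQ R fun _ => (1 : A)

lemma totient_eq_sum_moebius (A : Type*) [Ring A] {Q : ℕ} (hQ : Q ≠ 0) :
    (Q.totient : A) = ∑ d ∈ Q.divisors, (μ d : A) * (Q / d : ℕ) := by
  rw [← card_coprime_eq_sum_moebius A hQ, ← Nat.filter_coprime_Ico_eq_totient Q 1, add_comm 1 Q]
  simp only [Nat.coprime_comm]
  rfl

lemma abs_card_coprime_sub_le {Q : ℕ} (hQ : Q ≠ 0) (R : ℕ) :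
    |(#{r ∈ Icc 1 R | r.Coprime Q} : ℝ) - R * Q.totient / Q| ≤ #Q.divisors := by
  have hQ0 : (Q : ℝ) ≠ 0 := Nat.cast_ne_zero.mpr hQ
  rw [card_coprime_eq_sum_moebius ℝ hQ, totient_eq_sum_moebius ℝ hQ, mul_sum, sum_div,
    ← sum_sub_distrib, card_eq_sum_ones, Nat.cast_sum]
  refine (abs_sum_le_sum_abs _ _).trans (sum_le_sum fun d hd => ?_)
  have hd0 : (d : ℝ) ≠ 0 := Nat.cast_ne_zero.mpr (Nat.pos_of_mem_divisors hd).ne'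
  have hterm : (μ d : ℝ) * (R / d : ℕ) - R * (μ d * (Q / d : ℕ)) / Q =
      -(μ d * Int.fract ((R : ℝ) / d)) := by
    rw [Nat.cast_div (Nat.dvd_of_mem_divisors hd) hd0, ← Int.self_sub_floor,
      ← natCast_floor_eq_intCast_floor (by positivity), Nat.floor_div_eq_div]
    field_simp
    ring
  rw [hterm, abs_neg, abs_mul, Int.abs_fract, Nat.cast_one]
  exact mul_le_one₀ (mod_cast ArithmeticFunction.abs_moebius_le_one) (Int.fract_nonneg _)
    (Int.fract_lt_one _).le

lemma div_card_divisors_sub_le_card_coprime {Q : ℕ} (hQ : Q ≠ 0) (R : ℕ) :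
    (R : ℝ) / #Q.divisors - #Q.divisors ≤ #{r ∈ Icc 1 R | r.Coprime Q} := by
  have hτ : (0 : ℝ) < #Q.divisors := mod_cast card_pos.mpr (Nat.nonempty_divisors.mpr hQ)
  have hQ0 : (0 : ℝ) < Q := mod_cast Nat.pos_of_ne_zero hQ
  have hmain : (R : ℝ) / #Q.divisors ≤ R * Q.totient / Q := by
    rw [div_le_div_iff₀ hτ hQ0, mul_assoc]
    gcongr
    exact_mod_cast le_totient_mul_card_divisors Q
  linarith [(abs_le.mp (abs_card_coprime_sub_le hQ R)).1]

end Coprime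

/-! ### Incomplete sums of Dirichlet characters -/

section CharacterSums

open Finset
open scoped ArithmeticFunction.Moebius

lemma changeLevel_natCast {R : Type*} [CommMonoidWithZero R] {g Q : ℕ} (h : g ∣ Q)
    (ψ : DirichletCharacter R g) (n : ℕ) :
    ψ.changeLevel h (n : ZMod Q) = if n.Coprime Q then ψ (n : ZMod g) else 0 := by
  split_ifs with hn
  · simpa using
      DirichletCharacter.changeLevel_eq_cast_of_dvd' ψ h (Nat.isCoprime_iff_coprime.mpr hn)
  · exact MulChar.map_nonunit _ (by rwa [ZMod.isUnit_iff_coprime])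

lemma sum_range_natCast {A : Type*} [AddCommMonoid A] (k : ℕ) [NeZero k] (f : ZMod k → A) :
    ∑ n ∈ range k, f n = ∑ a, f a :=
  sum_bij' (fun n _ => (n : ZMod k)) (fun a _ => a.val) (fun _ _ => mem_univ _)
    (fun a _ => mem_range.mpr a.val_lt) (fun _ hn => ZMod.val_cast_of_lt (mem_range.mp hn))
    (fun a _ => ZMod.natCast_zmod_val a) fun _ _ => rfl

lemma sum_range_mul_dirichletCharacter {R : Type*} [CommRing R] [IsDomain R] {k : ℕ} [NeZero k]
    {χ : DirichletCharacter R k} (hχ : χ ≠ 1) (m : ℕ) :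
    ∑ n ∈ range (k * m), χ (n : ZMod k) = 0 := by
  induction m with
  | zero => simp
  | succ m ih =>
    rw [Nat.mul_succ, sum_range_add, ih, zero_add]
    simpa only [Nat.cast_add, Nat.cast_mul, CharP.cast_eq_zero, zero_mul, zero_add] using
      (sum_range_natCast k χ).trans (MulChar.sum_eq_zero_of_ne_one hχ)

variable {F : Type*} [NormedField F]

lemma norm_sum_dirichletCharacter_le {k : ℕ} [NeZero k] {χ : DirichletCharacter F k}
    (hχ : χ ≠ 1) (N : ℕ) : ‖∑ n ∈ Icc 1 N, χ (n : ZMod k)‖ ≤ k := by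
  have hk : k ≠ 1 := fun h => hχ (χ.level_one' h)
  have hrange : ∑ n ∈ Icc 1 N, χ (n : ZMod k) = ∑ n ∈ range (N + 1), χ (n : ZMod k) := by
    rw [range_eq_Ico, sum_eq_sum_Ico_succ_bot N.succ_pos, Nat.cast_zero, χ.map_zero' hk, zero_add]
    rfl
  rw [hrange, ← Nat.div_add_mod (N + 1) k, sum_range_add, sum_range_mul_dirichletCharacter hχ,
    zero_add]
  calc ‖∑ i ∈ range ((N + 1) % k), χ ((k * ((N + 1) / k) + i : ℕ) : ZMod k)‖
      ≤ ∑ _i ∈ range ((N + 1) % k), (1 : ℝ) := norm_sum_le_of_le _ fun _ _ => χ.norm_le_one _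
    _ = ((N + 1) % k : ℕ) := by simp
    _ ≤ k := mod_cast (Nat.mod_lt _ (NeZero.pos k)).le

lemma norm_sum_dirichletCharacter_le_of_factorsThrough {Q g : ℕ} [NeZero Q]
    {χ : DirichletCharacter F Q} (hχ : χ ≠ 1) (h : χ.FactorsThrough g) (R : ℕ) :
    ‖∑ r ∈ Icc 1 R, χ (r : ZMod Q)‖ ≤ #Q.divisors * g := by
  obtain ⟨hg, ψ, rfl⟩ := h
  have : NeZero g := ⟨ne_zero_of_dvd_ne_zero (NeZero.ne Q) hg⟩
  have hψ : ψ ≠ 1 := fun h1 => hχ (by rw [h1, map_one])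
  simp only [changeLevel_natCast, ← sum_filter]
  rw [sum_coprime_eq_sum_moebius (NeZero.ne Q), card_eq_sum_ones, Nat.cast_sum, sum_mul]
  refine norm_sum_le_of_le _ fun d _ => ?_
  simp only [Nat.cast_mul, map_mul, ← mul_sum]
  calc ‖μ d • (ψ (d : ZMod g) * ∑ j ∈ Icc 1 (R / d), ψ (j : ZMod g))‖
      ≤ ‖(μ d : ℤ)‖ * (‖ψ (d : ZMod g)‖ * ‖∑ j ∈ Icc 1 (R / d), ψ (j : ZMod g)‖) := by
        rw [← norm_mul]; exact norm_zsmul_le _ _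
    _ ≤ 1 * (1 * g) := by
        gcongr
        · rw [Int.norm_eq_abs]
          exact_mod_cast ArithmeticFunction.abs_moebius_le_one
        · exact ψ.norm_le_one _
        · exact norm_sum_dirichletCharacter_le hψ _
    _ = (1 : ℕ) * g := by rw [Nat.cast_one, one_mul]

lemma norm_sum_mul_inv_dirichletCharacter_le {Q Q' : ℕ} [NeZero Q] [NeZero Q']
    {χ : DirichletCharacter F Q} {χ' : DirichletCharacter F Q'}
    (h : ¬ χ.FactorsThrough (Q.gcd Q')) (N : ℕ) :
    ‖∑ n ∈ Icc 1 N, χ (n : ZMod Q) * χ'⁻¹ (n : ZMod Q')‖ ≤ Q * Q' := by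
  set Ψ := χ.changeLevel (Q.dvd_mul_right Q') * χ'⁻¹.changeLevel (Q'.dvd_mul_left Q) with hΨ
  have hΨ1 : Ψ ≠ 1 := by
    intro h1
    rw [hΨ, map_inv, mul_inv_eq_one] at h1
    exact h (χ.factorsThrough_gcd χ' h1)
  have hprod (n : ℕ) : χ (n : ZMod Q) * χ'⁻¹ (n : ZMod Q') = Ψ (n : ZMod (Q * Q')) := by
    rw [hΨ, MulChar.mul_apply, changeLevel_natCast, changeLevel_natCast]
    split_ifs with hn
    · rfl
    · rw [mul_zero, mul_eq_zero]
      rw [Nat.coprime_mul_iff_right, not_and_or] at hn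
      exact hn.imp (fun h => χ.map_nonunit (mt (ZMod.isUnit_iff_coprime n Q).mp h))
        fun h => χ'⁻¹.map_nonunit (mt (ZMod.isUnit_iff_coprime n Q').mp h)
  simp only [hprod]
  exact_mod_cast norm_sum_dirichletCharacter_le hΨ1 N

end CharacterSums

/-! ### Real characters and squares -/

section RealCharacters

lemma map_sq_units_real {G : Type*} [Group G] [Finite G] (φ : G →* ℝˣ) (g : G) : φ (g ^ 2) = 1 := by
  have hcard : (φ g : ℝ) ^ Nat.card G = 1 := by
    rw [← Units.val_pow_eq_pow_val, ← map_pow, pow_card_eq_one', map_one, Units.val_one]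
  rw [map_pow, ← Units.val_inj, Units.val_pow_eq_pow_val, Units.val_one]
  rcases pow_eq_one_iff_cases.mp hcard with h | h | ⟨h, -⟩
  · exact absurd h Nat.card_pos.ne'
  · rw [h, one_pow]
  · rw [h, neg_one_sq]

lemma hasEnoughRootsOfUnity_real_two : HasEnoughRootsOfUnity ℝ 2 where
  prim := ⟨-1, IsPrimitiveRoot.neg_one 0 two_ne_zero.symm⟩
  cyc := rootsOfUnity.isCyclic ℝ 2

variable {G : Type*} [CommGroup G]

lemma hasEnoughRootsOfUnity_real_exponent_quotient_squares :
    HasEnoughRootsOfUnity ℝ (Monoid.exponent (G ⧸ (powMonoidHom 2 : G →* G).range)) := by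
  have := hasEnoughRootsOfUnity_real_two
  refine HasEnoughRootsOfUnity.of_dvd ℝ (n := 2) (Monoid.exponent_dvd_of_forall_pow_eq_one ?_)
  rintro ⟨g⟩
  exact (QuotientGroup.eq_one_iff (g ^ 2)).mpr ⟨g, rfl⟩

variable [Finite G]

lemma card_monoidHom_units_real :
    Nat.card (G →* ℝˣ) = Nat.card (powMonoidHom 2 : G →* G).ker := by
  have := hasEnoughRootsOfUnity_real_exponent_quotient_squares (G := G)
  have hlift : Function.Bijective
      fun ψ : G ⧸ (powMonoidHom 2 : G →* G).range →* ℝˣ => ψ.comp (QuotientGroup.mk' _) := by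
    refine ⟨fun ψ ψ' h => QuotientGroup.monoidHom_ext _ h, fun φ => ⟨QuotientGroup.lift _ φ ?_, ?_⟩⟩
    · rintro _ ⟨g, rfl⟩
      exact map_sq_units_real φ g
    · exact QuotientGroup.lift_comp_mk' _ _ _
  calc Nat.card (G →* ℝˣ) = Nat.card (G ⧸ (powMonoidHom 2 : G →* G).range →* ℝˣ) :=
        (Nat.card_congr (Equiv.ofBijective _ hlift)).symm
    _ = (powMonoidHom 2 : G →* G).range.index :=
        CommGroup.card_monoidHom_of_hasEnoughRootsOfUnity _ ℝ
    _ = Nat.card (powMonoidHom 2 : G →* G).ker := Subgroup.index_range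

lemma isSquare_of_forall_monoidHom_units_real {a : G} (h : ∀ φ : G →* ℝˣ, φ a = 1) :
    IsSquare a := by
  have := hasEnoughRootsOfUnity_real_exponent_quotient_squares (G := G)
  by_contra ha
  have ha' : (a : G ⧸ (powMonoidHom 2 : G →* G).range) ≠ 1 := by
    rw [Ne, QuotientGroup.eq_one_iff]
    rintro ⟨b, rfl⟩
    exact ha (IsSquare.sq b)
  obtain ⟨ψ, hψ⟩ := CommGroup.exists_apply_ne_one_of_hasEnoughRootsOfUnity _ ℝ ha'
  exact hψ (h (ψ.comp (QuotientGroup.mk' _)))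

lemma sq_eq_one_of_dirichletCharacter_real {Q : ℕ} [NeZero Q] (χ : DirichletCharacter ℝ Q) :
    χ ^ 2 = 1 := by
  ext u
  rw [MulChar.pow_apply_coe, MulChar.one_apply_coe, ← MulChar.coe_toUnitHom,
    ← Units.val_pow_eq_pow_val, ← map_pow, map_sq_units_real, Units.val_one]

lemma isSquare_of_sum_dirichletCharacter_real_ne_zero {Q : ℕ} [NeZero Q]
    [Fintype (DirichletCharacter ℝ Q)] {a : ZMod Q}
    (h : ∑ χ : DirichletCharacter ℝ Q, χ a ≠ 0) : ∃ u : (ZMod Q)ˣ, (u : ZMod Q) ^ 2 = a := by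
  have ha : IsUnit a := by
    by_contra ha
    exact h (Finset.sum_eq_zero fun χ _ => χ.map_nonunit ha)
  obtain ⟨a, rfl⟩ := ha
  have hker (φ : (ZMod Q)ˣ →* ℝˣ) : φ a = 1 := by
    by_contra hφ
    have hφ' : MulChar.ofUnitHom φ (a : ZMod Q) ≠ 1 := by
      rwa [MulChar.ofUnitHom_coe, Ne, Units.val_eq_one]
    refine h (eq_zero_of_mul_eq_self_left hφ' ?_)
    simp only [Finset.mul_sum, ← MulChar.mul_apply]
    exact Fintype.sum_bijective _ (Group.mulLeft_bijective (MulChar.ofUnitHom φ)) _ _ fun _ => rfl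
  obtain ⟨b, hb⟩ := isSquare_of_forall_monoidHom_units_real hker
  exact ⟨b, by rw [hb, sq, Units.val_mul]⟩

lemma dvd_sub_of_gcd_sub_one_eq {Q x y : ℤ} (hQ : Odd Q) (hx : Q ∣ x ^ 2 - 1) (hy : Q ∣ y ^ 2 - 1)
    (h : Q.gcd (x - 1) = Q.gcd (y - 1)) : Q ∣ x - y := by
  have hcross {u v : ℤ} (hu : Q ∣ u ^ 2 - 1) (huv : Q.gcd (u - 1) = Q.gcd (v - 1)) :
      Q ∣ (v - 1) * (u + 1) := by
    rw [← Int.dvd_gcd_mul_iff_dvd_mul, ← huv, Int.dvd_gcd_mul_iff_dvd_mul]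
    exact hu.trans (dvd_of_eq (by ring))
  have htwo : Q ∣ 2 * (x - y) :=
    (dvd_sub (hcross hy h.symm) (hcross hx h)).trans (dvd_of_eq (by ring))
  exact (Int.isCoprime_two_right.mpr hQ).dvd_of_dvd_mul_left htwo

lemma card_ker_powMonoidHom_two_le_card_divisors {Q : ℕ} (hQ : Odd Q) :
    Nat.card (powMonoidHom 2 : (ZMod Q)ˣ →* (ZMod Q)ˣ).ker ≤ Q.divisors.card := by
  have : NeZero Q := ⟨hQ.pos.ne'⟩
  have hsq (x : (powMonoidHom 2 : (ZMod Q)ˣ →* (ZMod Q)ˣ).ker) :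
      (Q : ℤ) ∣ ((x.1 : ZMod Q).val : ℤ) ^ 2 - 1 := by
    rw [← ZMod.intCast_zmod_eq_zero_iff_dvd]
    have hx : ((x : (ZMod Q)ˣ) : ZMod Q) ^ 2 = 1 := by
      rw [← Units.val_pow_eq_pow_val, show (x : (ZMod Q)ˣ) ^ 2 = 1 from x.2, Units.val_one]
    simp [hx]
  let f (x : (powMonoidHom 2 : (ZMod Q)ˣ →* (ZMod Q)ˣ).ker) : Q.divisors :=
    ⟨(Q : ℤ).gcd (((x.1 : ZMod Q).val : ℤ) - 1), Nat.mem_divisors.mpr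
      ⟨Int.natCast_dvd_natCast.mp (Int.gcd_dvd_left _ _), NeZero.ne Q⟩⟩
  have hf : Function.Injective f := by
    intro x y hxy
    have hdvd := dvd_sub_of_gcd_sub_one_eq (by exact_mod_cast hQ) (hsq x) (hsq y)
      (congrArg Subtype.val hxy)
    rw [← ZMod.intCast_zmod_eq_zero_iff_dvd] at hdvd
    push_cast at hdvd
    rw [ZMod.natCast_zmod_val, ZMod.natCast_zmod_val, sub_eq_zero] at hdvd
    exact Subtype.ext (Units.ext hdvd)
  exact (Nat.card_le_card_of_injective f hf).trans_eq (Nat.card_eq_finsetCard _)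

lemma card_dirichletCharacter_real_le {Q : ℕ} (hQ : Odd Q) :
    Nat.card (DirichletCharacter ℝ Q) ≤ Q.divisors.card := by
  have : NeZero Q := ⟨hQ.pos.ne'⟩
  rw [Nat.card_congr MulChar.equivToUnitHom, card_monoidHom_units_real]
  exact card_ker_powMonoidHom_two_le_card_divisors hQ

end RealCharacters

/-! ### A large sieve for multiplicative functions -/

section LargeSieve

open Finset

lemma sum_sq_sum_le_of_almost_orthogonal {ι κ : Type*} (Y : Finset ι) (S : Finset κ)
    {f : ι → κ → ℝ} {A B : ℝ} (hB : 0 ≤ B) (hdiag : ∀ y ∈ Y, ∑ n ∈ S, f y n ^ 2 ≤ A)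
    (hoff : ∀ y ∈ Y, ∀ y' ∈ Y, y ≠ y' → ∑ n ∈ S, f y n * f y' n ≤ B) :
    ∑ n ∈ S, (∑ y ∈ Y, f y n) ^ 2 ≤ #Y * (A + #Y * B) := by
  classical
  have hrow : ∀ y ∈ Y, ∑ y' ∈ Y, ∑ n ∈ S, f y n * f y' n ≤ A + #Y * B := by
    intro y hy
    rw [← add_sum_erase _ _ hy]
    refine add_le_add ((sum_congr rfl fun n _ => (sq _).symm).trans_le (hdiag y hy)) ?_
    calc ∑ y' ∈ Y.erase y, ∑ n ∈ S, f y n * f y' n ≤ #(Y.erase y) • B :=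
          sum_le_card_nsmul _ _ _ fun y' hy' =>
            hoff y hy y' (mem_of_mem_erase hy') (ne_of_mem_erase hy').symm
      _ ≤ #Y * B := by
          rw [nsmul_eq_mul]
          gcongr
          exact erase_subset _ _
  calc ∑ n ∈ S, (∑ y ∈ Y, f y n) ^ 2 = ∑ y ∈ Y, ∑ y' ∈ Y, ∑ n ∈ S, f y n * f y' n := by
        simp only [sq, sum_mul_sum]
        rw [sum_comm]
        exact sum_congr rfl fun _ _ => sum_comm
    _ ≤ #Y • (A + #Y * B) := sum_le_card_nsmul _ _ _ hrow
    _ = #Y * (A + #Y * B) := nsmul_eq_mul _ _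

lemma card_mul_sq_le_of_almost_orthogonal {ι κ : Type*} (Y : Finset ι) (S : Finset κ)
    {f : ι → κ → ℝ} {A B V : ℝ} (hA : 0 ≤ A) (hB : 0 ≤ B) (hV : 0 ≤ V)
    (hdiag : ∀ y ∈ Y, ∑ n ∈ S, f y n ^ 2 ≤ A)
    (hoff : ∀ y ∈ Y, ∀ y' ∈ Y, y ≠ y' → ∑ n ∈ S, f y n * f y' n ≤ B)
    (b : κ → ℝ) (hb : ∀ y ∈ Y, V ≤ ∑ n ∈ S, b n * f y n) :
    #Y * V ^ 2 ≤ (∑ n ∈ S, b n ^ 2) * (A + #Y * B) := by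
  rcases Y.eq_empty_or_nonempty with rfl | hY
  · simp only [card_empty, Nat.cast_zero, zero_mul, add_zero]
    positivity
  have hsum : #Y * V ≤ ∑ n ∈ S, b n * ∑ y ∈ Y, f y n := by
    simp only [mul_sum]
    rw [sum_comm, ← nsmul_eq_mul]
    exact card_nsmul_le_sum _ _ _ hb
  have hY0 : (0 : ℝ) < #Y := mod_cast hY.card_pos
  refine le_of_mul_le_mul_left ?_ hY0
  calc #Y * (#Y * V ^ 2) = (#Y * V) ^ 2 := by ring
    _ ≤ (∑ n ∈ S, b n * ∑ y ∈ Y, f y n) ^ 2 := by gcongr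
    _ ≤ (∑ n ∈ S, b n ^ 2) * ∑ n ∈ S, (∑ y ∈ Y, f y n) ^ 2 := sum_mul_sq_le_sq_mul_sq _ _ _
    _ ≤ (∑ n ∈ S, b n ^ 2) * (#Y * (A + #Y * B)) := by
        gcongr
        exact sum_sq_sum_le_of_almost_orthogonal Y S hB hdiag hoff
    _ = #Y * ((∑ n ∈ S, b n ^ 2) * (A + #Y * B)) := by ring

/-- The number of `k`-tuples of integers in `[1, R]` with product `n`: the coefficient of `f n` in
the `k`-th power of `∑ r ≤ R, f r`, for `f` completely multiplicative. -/
def tupleProductCount (k R n : ℕ) : ℕ :=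
  #{v ∈ Fintype.piFinset fun _ : Fin k => Icc 1 R | ∏ i, v i = n}

lemma sum_Icc_pow_eq_sum_tupleProductCount_mul {A : Type*} [CommSemiring A] (f : ℕ →* A) (k R : ℕ) :
    (∑ r ∈ Icc 1 R, f r) ^ k = ∑ n ∈ Icc 1 (R ^ k), tupleProductCount k R n * f n := by
  have hmaps : ∀ v ∈ Fintype.piFinset fun _ : Fin k => Icc 1 R, ∏ i, v i ∈ Icc 1 (R ^ k) := by
    intro v hv
    simp only [Fintype.mem_piFinset, mem_Icc] at hv
    refine mem_Icc.mpr ⟨one_le_prod' fun i _ => (hv i).1, ?_⟩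
    calc ∏ i, v i ≤ ∏ _i : Fin k, R := prod_le_prod' fun i _ => (hv i).2
      _ = R ^ k := by simp
  rw [sum_pow', ← sum_fiberwise_of_maps_to hmaps]
  refine sum_congr rfl fun n _ => ?_
  rw [tupleProductCount, ← nsmul_eq_mul, ← sum_const]
  refine sum_congr rfl fun v hv => ?_
  rw [← map_prod, (mem_filter.mp hv).2]

lemma tupleProductCount_le {n : ℕ} (hn : n ≠ 0) (k R : ℕ) :
    tupleProductCount k R n ≤ #n.divisors ^ k := by
  have hsub : {v ∈ Fintype.piFinset fun _ : Fin k => Icc 1 R | ∏ i, v i = n} ⊆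
      Fintype.piFinset fun _ : Fin k => n.divisors := by
    intro v hv
    have hprod : ∏ i, v i = n := (mem_filter.mp hv).2
    exact Fintype.mem_piFinset.mpr fun i =>
      Nat.mem_divisors.mpr ⟨hprod ▸ dvd_prod_of_mem v (mem_univ i), hn⟩
  calc tupleProductCount k R n ≤ #(Fintype.piFinset fun _ : Fin k => n.divisors) :=
        card_le_card hsub
    _ = #n.divisors ^ k := by simp

lemma sum_sq_tupleProductCount_le (k R : ℕ) :
    ∑ n ∈ Icc 1 (R ^ k), tupleProductCount k R n ^ 2 ≤ maxCardDivisors (R ^ k) ^ k * R ^ k := by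
  have htotal : ∑ n ∈ Icc 1 (R ^ k), tupleProductCount k R n = R ^ k := by
    simpa using (sum_Icc_pow_eq_sum_tupleProductCount_mul (1 : ℕ →* ℕ) k R).symm
  rw [← htotal, mul_sum, htotal]
  refine sum_le_sum fun n hn => ?_
  rw [mem_Icc] at hn
  rw [sq]
  refine Nat.mul_le_mul_right _ ?_
  exact (tupleProductCount_le (by lia) k R).trans
    (Nat.pow_le_pow_left (card_divisors_le_maxCardDivisors hn.2) k)

lemma card_mul_pow_le_of_large_sums {ι : Type*} (Y : Finset ι) {f : ι → ℕ →* ℝ} {k : ℕ}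
    (hk : Even k) (R : ℕ) {B D : ℝ} (hB : 0 ≤ B) (hD : 0 ≤ D) (hf : ∀ y ∈ Y, ∀ n, |f y n| ≤ 1)
    (hoff : ∀ y ∈ Y, ∀ y' ∈ Y, y ≠ y' → ∑ n ∈ Icc 1 (R ^ k), f y n * f y' n ≤ B)
    (hlarge : ∀ y ∈ Y, D ≤ |∑ r ∈ Icc 1 R, f y r|) :
    #Y * D ^ (2 * k) ≤ maxCardDivisors (R ^ k) ^ k * R ^ k * (R ^ k + #Y * B) := by
  have hdiag : ∀ y ∈ Y, ∑ n ∈ Icc 1 (R ^ k), f y n ^ 2 ≤ R ^ k := fun y hy =>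
    calc ∑ n ∈ Icc 1 (R ^ k), f y n ^ 2 ≤ #(Icc 1 (R ^ k)) • (1 : ℝ) :=
          sum_le_card_nsmul _ _ _ fun n _ => (sq_le_one_iff_abs_le_one _).mpr (hf y hy n)
      _ = R ^ k := by simp
  have hpow : ∀ y ∈ Y, D ^ k ≤ ∑ n ∈ Icc 1 (R ^ k), tupleProductCount k R n * f y n := fun y hy =>
    calc D ^ k ≤ |∑ r ∈ Icc 1 R, f y r| ^ k := pow_le_pow_left₀ hD (hlarge y hy) k
      _ = (∑ r ∈ Icc 1 R, f y r) ^ k := hk.pow_abs _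
      _ = _ := sum_Icc_pow_eq_sum_tupleProductCount_mul (f y) k R
  have hcoeff : ∑ n ∈ Icc 1 (R ^ k), (tupleProductCount k R n : ℝ) ^ 2 ≤
      maxCardDivisors (R ^ k) ^ k * R ^ k := mod_cast sum_sq_tupleProductCount_le k R
  calc #Y * D ^ (2 * k) = #Y * (D ^ k) ^ 2 := by rw [mul_comm 2 k, pow_mul]
    _ ≤ (∑ n ∈ Icc 1 (R ^ k), (tupleProductCount k R n : ℝ) ^ 2) * (R ^ k + #Y * B) :=
        card_mul_sq_le_of_almost_orthogonal Y _ (by positivity) hB (by positivity) hdiag hoff _ hpow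
    _ ≤ _ := by gcongr

end LargeSieve

/-! ### Moduli with square multiples -/

section GoodModuli

open Finset

/-- Every reduced residue class modulo `Q` becomes the square of a unit after multiplication by
some `r ∈ [1, R]`. -/
def HasSquareMultiples (Q R : ℕ) : Prop :=
  ∀ A : (ZMod Q)ˣ, ∃ r ∈ Icc 1 R, ∃ l : (ZMod Q)ˣ, (l : ZMod Q) ^ 2 = r * A

lemma sum_one_dirichletCharacter_eq_card (Q R : ℕ) :
    ∑ r ∈ Icc 1 R, (1 : DirichletCharacter ℝ Q) (r : ZMod Q) = #{r ∈ Icc 1 R | r.Coprime Q} := by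
  classical
  rw [← sum_boole]
  refine sum_congr rfl fun r _ => ?_
  split_ifs with h
  · exact MulChar.one_apply ((ZMod.isUnit_iff_coprime r Q).mpr h)
  · exact MulChar.map_nonunit _ (by rwa [ZMod.isUnit_iff_coprime])

-- Orthogonality of the real characters detects the squares among the classes `r * A`.
lemma hasSquareMultiples_of_abs_sum_le {Q R : ℕ} (hQ : Odd Q) {δ : ℝ} (hδ : 0 < δ)
    (hcard : #Q.divisors * δ ≤ #{r ∈ Icc 1 R | r.Coprime Q})
    (h : ∀ χ : DirichletCharacter ℝ Q, χ ≠ 1 → |∑ r ∈ Icc 1 R, χ (r : ZMod Q)| ≤ δ) :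
    HasSquareMultiples Q R := by
  classical
  intro A
  have : NeZero Q := ⟨hQ.pos.ne'⟩
  have := Fintype.ofFinite (DirichletCharacter ℝ Q)
  have hchar : (Fintype.card (DirichletCharacter ℝ Q) : ℝ) ≤ #Q.divisors := by
    rw [← Nat.card_eq_fintype_card]
    exact_mod_cast card_dirichletCharacter_real_le hQ
  have hone : ∑ r ∈ Icc 1 R, (1 : DirichletCharacter ℝ Q) (r * A) =
      #{r ∈ Icc 1 R | r.Coprime Q} := by
    simp only [map_mul, MulChar.one_apply_coe, mul_one, sum_one_dirichletCharacter_eq_card]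
  have hterm : ∀ χ ∈ univ.erase (1 : DirichletCharacter ℝ Q), -δ ≤ ∑ r ∈ Icc 1 R, χ (r * A) := by
    intro χ hχ
    refine (abs_le.mp ?_).1
    calc |∑ r ∈ Icc 1 R, χ (r * A)| = |∑ r ∈ Icc 1 R, χ (r : ZMod Q)| * |χ A| := by
          simp only [map_mul, ← sum_mul, abs_mul]
      _ ≤ δ * 1 := by
          gcongr
          · exact h χ (ne_of_mem_erase hχ)
          · exact χ.norm_le_one _
      _ = δ := mul_one δ
  have hpos : 0 < ∑ χ : DirichletCharacter ℝ Q, ∑ r ∈ Icc 1 R, χ (r * A) := by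
    have hrest := card_nsmul_le_sum _ _ _ hterm
    rw [nsmul_eq_mul, cast_card_erase_of_mem (mem_univ _), card_univ] at hrest
    rw [← add_sum_erase _ _ (mem_univ 1), hone]
    nlinarith
  rw [sum_comm] at hpos
  obtain ⟨r, hr, hne⟩ := exists_ne_zero_of_sum_ne_zero hpos.ne'
  exact ⟨r, hr, isSquare_of_sum_dirichletCharacter_real_ne_zero hne⟩

lemma hasSquareMultiples_or_exists_large_sum {Q R T : ℕ} (hQ : Odd Q) (hT : #Q.divisors ≤ T)
    (hR : 2 * T ^ 2 ≤ R) :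
    HasSquareMultiples Q R ∨ ∃ χ : DirichletCharacter ℝ Q, χ ≠ 1 ∧
      (R : ℝ) / (2 * T ^ 2) ≤ |∑ r ∈ Icc 1 R, χ (r : ZMod Q)| := by
  by_contra! h
  have hτ : (0 : ℝ) < #Q.divisors := mod_cast card_pos.mpr (Nat.nonempty_divisors.mpr hQ.pos.ne')
  have hT' : (#Q.divisors : ℝ) ≤ T := mod_cast hT
  have hT0 : (0 : ℝ) < T := hτ.trans_le hT'
  have hR' : 2 * (T : ℝ) ^ 2 ≤ R := mod_cast hR
  have hR0 : (0 : ℝ) < R := lt_of_lt_of_le (by positivity) hR'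
  refine h.1 (hasSquareMultiples_of_abs_sum_le hQ (by positivity) ?_ fun χ hχ => (h.2 χ hχ).le)
  calc (#Q.divisors : ℝ) * (R / (2 * T ^ 2)) ≤ T * (R / (2 * T ^ 2)) := by gcongr
    _ ≤ (R : ℝ) / T - T := by
        field_simp
        linarith
    _ ≤ (R : ℝ) / #Q.divisors - #Q.divisors := by gcongr
    _ ≤ (#{r ∈ Icc 1 R | r.Coprime Q} : ℝ) := div_card_divisors_sub_le_card_coprime hQ.pos.ne' R

lemma card_mul_pow_le_of_large_character_sums {𝒬 : Finset ℕ} {X k : ℕ} (hk : Even k) (R : ℕ)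
    {D : ℝ} (hD : 0 ≤ D) {χ : (Q : ℕ) → DirichletCharacter ℝ Q} (h0 : ∀ Q ∈ 𝒬, Q ≠ 0)
    (hX : ∀ Q ∈ 𝒬, Q ≤ X) (hχ : ∀ Q ∈ 𝒬, χ Q ≠ 1)
    (hlarge : ∀ Q ∈ 𝒬, D ≤ |∑ r ∈ Icc 1 R, χ Q r|)
    (hgcd : ∀ Q ∈ 𝒬, ∀ Q' ∈ 𝒬, Q ≠ Q' → (#Q.divisors * Q.gcd Q' : ℝ) < D) :
    #𝒬 * D ^ (2 * k) ≤
      maxCardDivisors (R ^ k) ^ k * R ^ k * (R ^ k + #𝒬 * X ^ 2) := by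
  refine card_mul_pow_le_of_large_sums 𝒬
    (f := fun Q => (χ Q).toMonoidHom.comp (Nat.castRingHom (ZMod Q) : ℕ →* ZMod Q))
    hk R (by positivity) hD (fun Q _ n => (χ Q).norm_le_one _) (fun Q hQ Q' hQ' hne => ?_) hlarge
  have : NeZero Q := ⟨h0 Q hQ⟩
  have : NeZero Q' := ⟨h0 Q' hQ'⟩
  have hprimitive : ¬ (χ Q).FactorsThrough (Q.gcd Q') := fun hfac =>
    (hgcd Q hQ Q' hQ' hne).not_ge <| (hlarge Q hQ).trans <|
      norm_sum_dirichletCharacter_le_of_factorsThrough (hχ Q hQ) hfac R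
  have hinv : (χ Q')⁻¹ = χ Q' :=
    inv_eq_of_mul_eq_one_left (by rw [← sq, sq_eq_one_of_dirichletCharacter_real])
  calc ∑ n ∈ Icc 1 (R ^ k), χ Q (n : ZMod Q) * χ Q' (n : ZMod Q')
      ≤ |∑ n ∈ Icc 1 (R ^ k), χ Q (n : ZMod Q) * (χ Q')⁻¹ (n : ZMod Q')| := by
        rw [hinv]; exact le_abs_self _
    _ ≤ Q * Q' := norm_sum_mul_inv_dirichletCharacter_le hprimitive _
    _ ≤ X ^ 2 := by
        rw [sq]
        gcongr
        · exact hX Q hQ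
        · exact hX Q' hQ'

lemma card_le_of_large_character_sums {𝒬 : Finset ℕ} {X R k : ℕ} (hk : Even k) (hR : R ≠ 0)
    (hXR : #𝒬 * X ^ 2 ≤ R ^ k) {T : ℕ} (hT : T ≠ 0) (hRT : maxCardDivisors (R ^ k) ≤ T)
    {χ : (Q : ℕ) → DirichletCharacter ℝ Q} (h0 : ∀ Q ∈ 𝒬, Q ≠ 0)
    (hX : ∀ Q ∈ 𝒬, Q ≤ X) (hχ : ∀ Q ∈ 𝒬, χ Q ≠ 1)
    (hlarge : ∀ Q ∈ 𝒬, (R : ℝ) / (2 * T ^ 2) ≤ |∑ r ∈ Icc 1 R, χ Q r|)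
    (hgcd : ∀ Q ∈ 𝒬, ∀ Q' ∈ 𝒬, Q ≠ Q' → (#Q.divisors * Q.gcd Q' : ℝ) < R / (2 * T ^ 2)) :
    #𝒬 ≤ 2 ^ (2 * k + 1) * T ^ (5 * k) := by
  have hXR' : (#𝒬 : ℝ) * X ^ 2 ≤ R ^ k := mod_cast hXR
  have : (0 : ℝ) < R := mod_cast Nat.pos_of_ne_zero hR
  have : (0 : ℝ) < T := mod_cast Nat.pos_of_ne_zero hT
  have hsieve : #𝒬 * ((R : ℝ) / (2 * T ^ 2)) ^ (2 * k) ≤ T ^ k * R ^ k * (R ^ k + R ^ k) :=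
    (card_mul_pow_le_of_large_character_sums hk R (by positivity) h0 hX hχ hlarge hgcd).trans
      (by gcongr)
  have hpow : ((R : ℝ) / (2 * T ^ 2)) ^ (2 * k) * (2 ^ (2 * k) * T ^ (4 * k)) = (R ^ k) ^ 2 := by
    rw [show (2 : ℝ) ^ (2 * k) * T ^ (4 * k) = (2 * T ^ 2) ^ (2 * k) by ring, ← mul_pow,
      div_mul_cancel₀ _ (by positivity), ← pow_mul, mul_comm]
  have hreal : (#𝒬 : ℝ) ≤ 2 ^ (2 * k + 1) * T ^ (5 * k) := by
    refine le_of_mul_le_mul_right ?_ (by positivity : (0 : ℝ) < (R ^ k) ^ 2)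
    calc (#𝒬 : ℝ) * ((R : ℝ) ^ k) ^ 2
        = #𝒬 * ((R : ℝ) / (2 * T ^ 2)) ^ (2 * k) * (2 ^ (2 * k) * T ^ (4 * k)) := by
          rw [← hpow, mul_assoc]
      _ ≤ (T : ℝ) ^ k * R ^ k * (R ^ k + R ^ k) * (2 ^ (2 * k) * T ^ (4 * k)) := by gcongr
      _ = 2 ^ (2 * k + 1) * (T : ℝ) ^ (5 * k) * ((R : ℝ) ^ k) ^ 2 := by ring
  exact_mod_cast hreal

lemma eventually_exists_hasSquareMultiples (s : ℕ) :
    ∀ᶠ M : ℕ in atTop, ∀ 𝒬 : Finset ℕ, M ≤ #𝒬 → (∀ Q ∈ 𝒬, Odd Q) → (∀ Q ∈ 𝒬, Q ≤ M ^ s) →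
      (∀ Q ∈ 𝒬, ∀ Q' ∈ 𝒬, Q ≠ Q' → Q.gcd Q' ≤ M) → ∃ Q ∈ 𝒬, HasSquareMultiples Q (M ^ 2) := by
  -- Taking `k`-th powers with `k = 2 * s` lengthens the character sums to `M ^ (4 * s)`, beyond the
  -- number of moduli times the products `Q * Q'`, so that the diagonal dominates the sieve.
  obtain ⟨k, hk⟩ : ∃ k, k = 2 * s := ⟨_, rfl⟩
  filter_upwards [eventually_mul_maxCardDivisors_pow_lt (2 ^ (2 * k + 1)) (2 * k) (5 * k),
    eventually_mul_maxCardDivisors_pow_lt 2 (2 * k) 3] with M hT5 hT3 𝒬 hcard hodd hle hgcd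
  set T := maxCardDivisors (M ^ (2 * k))
  by_contra! hbad
  have hM : 1 ≤ M := by lia
  have hτ : ∀ n ≤ M ^ s, #n.divisors ≤ T := fun n hn =>
    card_divisors_le_maxCardDivisors (hn.trans (Nat.pow_le_pow_right hM (by lia)))
  have hT1 : 1 ≤ T := by simpa using hτ 1 (Nat.one_le_pow _ _ hM)
  have hT2 : 2 * T ^ 2 ≤ M ^ 2 := by nlinarith [Nat.pow_le_pow_right hT1 (by lia : 2 ≤ 3)]
  have hlarge : ∀ Q ∈ 𝒬, ∃ χ : DirichletCharacter ℝ Q, χ ≠ 1 ∧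
      ((M ^ 2 : ℕ) : ℝ) / (2 * T ^ 2) ≤ |∑ r ∈ Icc 1 (M ^ 2), χ (r : ZMod Q)| := fun Q hQ =>
    (hasSquareMultiples_or_exists_large_sum (hodd Q hQ) (hτ Q (hle Q hQ)) hT2).resolve_left
      (hbad Q hQ)
  choose! χ hχ hsum using hlarge
  have hcard_le : #𝒬 ≤ M ^ s := by
    simpa using card_le_card fun Q hQ => mem_Icc.mpr ⟨(hodd Q hQ).pos, hle Q hQ⟩
  refine (hT5.trans_le hcard).not_ge (card_le_of_large_character_sums (R := M ^ 2) (X := M ^ s)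
    (hk ▸ even_two_mul s) (by positivity) ?_ (by lia) (by rw [← pow_mul])
    (fun Q hQ => (hodd Q hQ).pos.ne') hle hχ hsum fun Q hQ Q' hQ' hne => ?_)
  · calc #𝒬 * (M ^ s) ^ 2 ≤ M ^ s * (M ^ s) ^ 2 := by gcongr
      _ = M ^ (3 * s) := by ring
      _ ≤ M ^ (2 * k) := Nat.pow_le_pow_right hM (by lia)
      _ = (M ^ 2) ^ k := pow_mul M 2 k
  · rw [lt_div_iff₀ (by positivity)]
    have hnat : #Q.divisors * Q.gcd Q' * (2 * T ^ 2) < M ^ 2 := calc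
      #Q.divisors * Q.gcd Q' * (2 * T ^ 2) ≤ T * M * (2 * T ^ 2) := by
        gcongr
        · exact hτ Q (hle Q hQ)
        · exact hgcd Q hQ Q' hQ' hne
      _ = 2 * T ^ 3 * M := by ring
      _ < M * M := by gcongr
      _ = M ^ 2 := (sq M).symm
    exact_mod_cast hnat

lemma gcd_add_mul_le {b h x y M : ℕ} (hbh : b.Coprime h) (hx : x ≤ M) (hy : y ≤ M) (hxy : x ≠ y) :
    (b + x * h).gcd (b + y * h) ≤ M := by
  wlog hlt : x < y generalizing x y
  · rw [Nat.gcd_comm]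
    exact this hy hx hxy.symm (by lia)
  have hdiff : (b + x * h).gcd (b + y * h) ∣ (y - x) * h := by
    have hsub := Nat.dvd_sub (Nat.gcd_dvd_right (b + x * h) (b + y * h))
      (Nat.gcd_dvd_left (b + x * h) (b + y * h))
    rwa [Nat.add_sub_add_left, ← Nat.sub_mul] at hsub
  have hcop : ((b + x * h).gcd (b + y * h)).Coprime h :=
    ((Nat.coprime_add_mul_right_left b h x).mpr hbh).coprime_dvd_left (Nat.gcd_dvd_left _ _)
  exact (Nat.le_of_dvd (by lia) (hcop.dvd_of_dvd_mul_right hdiff)).trans (by lia)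

lemma eventually_exists_hasSquareMultiples_add_mul (m : ℕ) :
    ∀ᶠ M : ℕ in atTop, ∀ b h : ℕ, Even h → b.Coprime h → h ≠ 0 → b ≤ h → h < (M + 1) ^ m →
      ∃ y ∈ Icc 1 M, HasSquareMultiples (b + y * h) (M ^ 2) := by
  filter_upwards [eventually_exists_hasSquareMultiples (2 * m + 2), eventually_ge_atTop 2]
    with M hM hM2 b h heven hbh hh hb hhM
  have hinj : Function.Injective fun y => b + y * h := fun x y hxy =>
    Nat.eq_of_mul_eq_mul_right (Nat.pos_of_ne_zero hh) (Nat.add_left_cancel hxy)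
  have hodd (y : ℕ) : Odd (b + y * h) :=
    (hbh.coprime_dvd_right heven.two_dvd).odd_of_right.add_even (heven.mul_left y)
  have hle : ∀ y ∈ Icc 1 M, b + y * h ≤ M ^ (2 * m + 2) := fun y hy => calc
    b + y * h ≤ h + M * h := add_le_add hb (Nat.mul_le_mul_right h (mem_Icc.mp hy).2)
    _ = (M + 1) * h := by ring
    _ ≤ (M + 1) * (M + 1) ^ m := by gcongr
    _ = (M + 1) ^ (m + 1) := (pow_succ' _ _).symm
    _ ≤ (M ^ 2) ^ (m + 1) := by gcongr; nlinarith
    _ = M ^ (2 * m + 2) := by rw [← pow_mul, mul_add_one]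
  obtain ⟨Q, hQ, hsq⟩ := hM ((Icc 1 M).image fun y => b + y * h)
    (by rw [card_image_of_injective _ hinj, Nat.card_Icc, Nat.add_sub_cancel])
    (forall_mem_image.mpr fun y _ => hodd y) (forall_mem_image.mpr hle)
    (forall_mem_image.mpr fun x hx => forall_mem_image.mpr fun y hy hne =>
      gcd_add_mul_le hbh (mem_Icc.mp hx).2 (mem_Icc.mp hy).2 fun h => hne (h ▸ rfl))
  obtain ⟨y, hy, rfl⟩ := mem_image.mp hQ
  exact ⟨y, hy, hsq⟩

end GoodModuli

/-! ### Rational approximations with good denominators -/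

section Approximation

lemma nint_le_abs_sub (x : ℝ) (z : ℤ) : nint x ≤ |x - z| :=
  round_le x z

lemma exists_pos_le_nint {θ : ℝ} (hθ : Irrational θ) (N : ℕ) :
    ∃ c > 0, ∀ k : ℕ, k ≠ 0 → k ≤ N → c ≤ nint (k * θ) := by
  obtain ⟨c, hc, h⟩ :=
    ((hθ.eventually_forall_le_dist_cast_div_of_denom_le N).filter_mono nhdsWithin_le_nhds).and
      (self_mem_nhdsWithin : ∀ᶠ c : ℝ in nhdsWithin 0 (Set.Ioi 0), 0 < c) |>.exists
  refine ⟨c, h, fun k hk hkN => ?_⟩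
  have hk1 : (1 : ℝ) ≤ k := mod_cast Nat.one_le_iff_ne_zero.mpr hk
  calc c ≤ |θ - round (k * θ) / k| := hc k hkN _
    _ ≤ k * |θ - round (k * θ) / k| := le_mul_of_one_le_left (abs_nonneg _) hk1
    _ = |k * (θ - round (k * θ) / k)| := by rw [abs_mul, Nat.abs_cast]
    _ = nint (k * θ) := by rw [mul_sub, mul_div_cancel₀ _ (by positivity), nint]

lemma exists_isCoprime_abs_mul_sub_le {θ : ℝ} (hθ : Irrational θ) (N : ℕ) :
    ∃ (p : ℤ) (q : ℕ), 0 < q ∧ N ≤ q ∧ IsCoprime p q ∧ |q * θ - p| ≤ 1 / q := by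
  obtain ⟨c, hc, hcN⟩ := exists_pos_le_nint hθ N
  obtain ⟨n, hn⟩ := exists_nat_one_div_lt hc
  obtain ⟨x, hx, hxn⟩ := Real.exists_rat_abs_sub_le_and_den_le θ n.succ_pos
  have hden : (0 : ℝ) < x.den := mod_cast x.den_pos
  have hxn' : (x.den : ℝ) ≤ n + 1 := mod_cast hxn
  have happrox : |x.den * θ - x.num| ≤ 1 / (n + 1) := calc
    |x.den * θ - x.num| = |θ - x| * x.den := by
      rw [← abs_of_pos hden, ← abs_mul, abs_of_pos hden, sub_mul, mul_comm θ]
      congr 2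
      exact_mod_cast (Rat.mul_den_eq_num x).symm
    _ ≤ 1 / ((n.succ + 1) * x.den) * x.den := by gcongr
    _ = 1 / (n + 1 + 1) := by push_cast; field_simp
    _ ≤ 1 / (n + 1) := by gcongr; linarith
  refine ⟨x.num, x.den, x.den_pos, ?_, x.isCoprime_num_den, happrox.trans (by gcongr)⟩
  by_contra! hlt
  linarith [(hcN x.den x.den_ne_zero hlt.le).trans (nint_le_abs_sub _ x.num)]

lemma exists_odd_mul_sub_mul_eq_one {p : ℤ} {q : ℕ} (hq : q ≠ 0) (hpq : IsCoprime p q) :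
    ∃ (b : ℕ) (a : ℤ), Odd b ∧ b ≤ 2 * q ∧ a * q - p * b = 1 := by
  obtain ⟨u, v, huv⟩ := hpq
  have hq' : (0 : ℤ) < q := by lia
  obtain ⟨b, hb⟩ := Int.eq_ofNat_of_zero_le (Int.emod_nonneg (-u) hq'.ne')
  have hbq : b < q := by have := Int.emod_lt_of_pos (-u) hq'; lia
  obtain ⟨a, hab⟩ : ∃ a : ℤ, a * q - p * b = 1 :=
    ⟨v - p * (-u / q), by linear_combination huv - p * (Int.emod_add_mul_ediv (-u) q) + p * hb⟩
  obtain hodd | heven := b.even_or_odd.symm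
  · exact ⟨b, a, hodd, by lia, hab⟩
  · refine ⟨b + q, a + p, heven.add_odd ?_, by lia, by push_cast; linear_combination hab⟩
    by_contra hq_even
    rw [Nat.not_odd_iff_even] at hq_even
    have hone : Even (1 : ℤ) := by
      rw [← hab]
      exact (((Int.even_coe_nat q).mpr hq_even).mul_left a).sub
        (((Int.even_coe_nat b).mpr heven).mul_left p)
    exact Int.not_even_one hone

lemma abs_mul_sub_le_of_mul_sub_mul_eq_one {θ a b p q : ℝ} (hq : 0 < q) (hb : 0 ≤ b)
    (hbq : b ≤ 2 * q) (hab : a * q - p * b = 1) (hθ : |q * θ - p| ≤ 1 / q) :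
    |b * θ - a| ≤ 3 / q := by
  have hdiff : b * θ - a = b / q * (q * θ - p) - 1 / q := by
    field_simp
    linear_combination -hab
  calc |b * θ - a| ≤ |b / q * (q * θ - p)| + |1 / q| := hdiff ▸ abs_sub _ _
    _ = b / q * |q * θ - p| + 1 / q := by
      rw [abs_mul, abs_of_nonneg (by positivity : 0 ≤ b / q), abs_of_pos (one_div_pos.mpr hq)]
    _ ≤ 2 * (1 / q) + 1 / q := by
      gcongr
      rwa [div_le_iff₀ hq]
    _ = 3 / q := by ring

lemma abs_add_mul_sub_le {θ a b p q y M : ℝ} (hq : 0 < q) (hb : 0 ≤ b) (hbq : b ≤ 2 * q)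
    (hy : 1 ≤ y) (hyM : y ≤ M) (hθ : |q * θ - p| ≤ 1 / q) (hθ' : |b * θ - a| ≤ 3 / q) :
    |(b + y * (2 * q)) * θ - (a + 2 * y * p)| ≤ 20 * M ^ 2 / (b + y * (2 * q)) := by
  have hM : 1 ≤ M := hy.trans hyM
  calc |(b + y * (2 * q)) * θ - (a + 2 * y * p)|
      = |(b * θ - a) + 2 * y * (q * θ - p)| := by ring_nf
    _ ≤ |b * θ - a| + |2 * y * (q * θ - p)| := abs_add_le _ _
    _ = |b * θ - a| + 2 * y * |q * θ - p| := by
      rw [abs_mul, abs_of_nonneg (by positivity : 0 ≤ 2 * y)]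
    _ ≤ 3 / q + 2 * M * (1 / q) := by gcongr
    _ = (3 + 2 * M) / q := by ring
    _ ≤ 5 * M / q := by gcongr; linarith
    _ = 20 * M ^ 2 / (4 * M * q) := by field_simp; ring
    _ ≤ 20 * M ^ 2 / (b + y * (2 * q)) := by gcongr; nlinarith

lemma exists_hasSquareMultiples_abs_mul_sub_le {θ : ℝ} (hθ : Irrational θ) {m : ℕ} (hm : m ≠ 0)
    (K : ℕ) :
    ∃ (M Q : ℕ) (a : ℤ), K ≤ M ∧ 1 < Q ∧ M ^ m ≤ Q ∧ IsCoprime a Q ∧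
      HasSquareMultiples Q (M ^ 2) ∧ |Q * θ - a| ≤ 20 * M ^ 2 / Q := by
  obtain ⟨M₀, hM₀⟩ := eventually_atTop.mp (eventually_exists_hasSquareMultiples_add_mul m)
  obtain ⟨p, q, hq, hNq, hpq, hqθ⟩ := exists_isCoprime_abs_mul_sub_le hθ ((M₀ + K + 1) ^ m)
  obtain ⟨b, a, hodd, hbq, hab⟩ := exists_odd_mul_sub_mul_eq_one hq.ne' hpq
  have hcop : b.Coprime (2 * q) := by
    refine (Nat.coprime_two_right.mpr hodd).mul_right (Nat.isCoprime_iff_coprime.mp ?_)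
    exact ⟨-p, a, by linear_combination hab⟩
  obtain ⟨M, hM⟩ : ∃ M, M = Nat.nthRoot m (2 * q) := ⟨_, rfl⟩
  have hMle : M ^ m ≤ 2 * q := (Nat.le_nthRoot_iff hm).mp hM.le
  have hK : M₀ + K + 1 ≤ M := hM ▸ (Nat.le_nthRoot_iff hm).mpr (by lia)
  obtain ⟨y, hy, hgood⟩ := hM₀ M (by lia) b (2 * q) (even_two_mul q) hcop (by lia) hbq
    (hM ▸ Nat.lt_pow_nthRoot_add_one hm _)
  obtain ⟨hy1, hyM⟩ := Finset.mem_Icc.mp hy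
  have hqQ : 2 * q ≤ b + y * (2 * q) :=
    (Nat.le_mul_of_pos_left _ hy1).trans (Nat.le_add_left _ _)
  refine ⟨M, b + y * (2 * q), a + 2 * y * p, by lia, by lia, hMle.trans hqQ, ?_, hgood, ?_⟩
  · exact ⟨q, -p, by push_cast; linear_combination hab⟩
  · have hq' : (0 : ℝ) < q := mod_cast hq
    have hbq' : (b : ℝ) ≤ 2 * q := mod_cast hbq
    push_cast
    exact abs_add_mul_sub_le hq' b.cast_nonneg hbq' (mod_cast hy1) (mod_cast hyM) hqθ
      (abs_mul_sub_le_of_mul_sub_mul_eq_one hq' b.cast_nonneg hbq' (mod_cast hab) hqθ)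

end Approximation

/-! ### Small squares -/

section Squares

lemma exists_small_dvd_sub_mul {Q : ℕ} (hQ : 0 < Q) (ν : ℤ) {t : ℕ} (ht : 0 < t) :
    ∃ k n : ℤ, 0 < k ∧ k ≤ t ∧ |n| * (t + 1) ≤ Q ∧ (Q : ℤ) ∣ n - k * ν := by
  have hQ' : (0 : ℝ) < Q := mod_cast hQ
  obtain ⟨j, k, hk0, hkt, hjk⟩ := Real.exists_int_int_abs_mul_sub_le (ν / Q) ht
  refine ⟨k, k * ν - j * Q, hk0, hkt, ?_, -j, by ring⟩
  rw [le_div_iff₀ (by positivity)] at hjk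
  have hreal : |(k : ℝ) * ν - j * Q| * (t + 1) ≤ Q := calc
    |(k : ℝ) * ν - j * Q| * (t + 1) = |Q * ((k : ℝ) * (ν / Q) - j)| * (t + 1) := by
      congr 2
      field_simp
    _ = Q * (|(k : ℝ) * (ν / Q) - j| * (t + 1)) := by rw [abs_mul, abs_of_pos hQ', mul_assoc]
    _ ≤ Q := mul_le_of_le_one_right hQ'.le hjk
  exact_mod_cast hreal

lemma exists_small_sq_mul_sub_dvd {Q r : ℕ} {A l : (ZMod Q)ˣ} (hl : (l : ZMod Q) ^ 2 = r * A)
    {a : ℤ} (ha : (a : ZMod Q) = A) {t : ℕ} (ht : 0 < t) (htQ : t < Q) :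
    ∃ k n : ℤ, 0 < k ∧ k ≤ t ∧ n ≠ 0 ∧ |n| * (t + 1) ≤ Q ∧ (Q : ℤ) ∣ n ^ 2 * a - r * k ^ 2 := by
  obtain ⟨ν, hν⟩ := ZMod.intCast_surjective ((A⁻¹ * l : (ZMod Q)ˣ) : ZMod Q)
  obtain ⟨k, n, hk0, hkt, hn, hdvd⟩ := exists_small_dvd_sub_mul (ht.trans htQ) ν ht
  have hnk : (n : ZMod Q) = k * ((A⁻¹ * l : (ZMod Q)ˣ) : ZMod Q) := by
    rw [← sub_eq_zero, ← hν]
    exact_mod_cast (ZMod.intCast_zmod_eq_zero_iff_dvd _ Q).mpr hdvd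
  refine ⟨k, n, hk0, hkt, ?_, hn, ?_⟩
  · rintro rfl
    have hk : (k : ZMod Q) = 0 := (Units.mul_left_eq_zero _).mp (by rw [← hnk, Int.cast_zero])
    have := Int.le_of_dvd hk0 ((ZMod.intCast_zmod_eq_zero_iff_dvd k Q).mp hk)
    lia
  · rw [← ZMod.intCast_zmod_eq_zero_iff_dvd]
    push_cast at hnk ⊢
    rw [hnk, ha, mul_pow, mul_pow, hl]
    linear_combination (k ^ 2 * r * ((A⁻¹ : (ZMod Q)ˣ) * A + 1)) * A.inv_mul

lemma abs_sq_mul_sub_le {s n k r a z : ℝ} (hs : 0 < s) (hr : 0 ≤ r) (hn : n ^ 2 ≤ s ^ 3)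
    (hk : k ^ 2 ≤ s) (hz : n ^ 2 * a - r * k ^ 2 = s ^ 2 * z) (θ : ℝ) :
    |n ^ 2 * θ - z| ≤ r / s + s * |s ^ 2 * θ - a| := by
  have hsplit : n ^ 2 * θ - z = r * k ^ 2 / s ^ 2 + n ^ 2 / s ^ 2 * (s ^ 2 * θ - a) := by
    field_simp
    linear_combination hz
  calc |n ^ 2 * θ - z|
      ≤ |r * k ^ 2 / s ^ 2| + |n ^ 2 / s ^ 2 * (s ^ 2 * θ - a)| := hsplit ▸ abs_add_le _ _
    _ = r * k ^ 2 / s ^ 2 + n ^ 2 / s ^ 2 * |s ^ 2 * θ - a| := by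
      rw [abs_mul, abs_of_nonneg (by positivity : 0 ≤ r * k ^ 2 / s ^ 2),
        abs_of_nonneg (by positivity : 0 ≤ n ^ 2 / s ^ 2)]
    _ ≤ r * s / s ^ 2 + s ^ 3 / s ^ 2 * |s ^ 2 * θ - a| := by gcongr
    _ = r / s + s * |s ^ 2 * θ - a| := by field_simp

lemma exists_sq_le_sqrt_le {Q : ℕ} (hQ : 1 < Q) :
    ∃ t : ℕ, 0 < t ∧ t < Q ∧ (t : ℝ) ^ 2 ≤ √Q ∧ √Q ≤ ((t : ℝ) + 1) ^ 2 := by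
  refine ⟨Q.sqrt.sqrt, ?_, (Nat.sqrt_le_self _).trans_lt (Nat.sqrt_lt_self hQ), ?_, ?_⟩
  · rw [Nat.sqrt_pos, Nat.sqrt_pos]
    exact hQ.pos
  · calc (Q.sqrt.sqrt : ℝ) ^ 2 ≤ Q.sqrt := mod_cast Nat.sqrt_le' Q.sqrt
      _ ≤ √Q := Real.nat_sqrt_le_real_sqrt
  · calc √(Q : ℝ) ≤ Q.sqrt + 1 := Real.real_sqrt_lt_nat_sqrt_succ.le
      _ ≤ ((Q.sqrt.sqrt : ℝ) + 1) ^ 2 := mod_cast Nat.succ_le_of_lt (Nat.lt_succ_sqrt' Q.sqrt)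

lemma HasSquareMultiples.exists_nint_sq_mul_le {Q R : ℕ} (h : HasSquareMultiples Q R)
    (hQ : 1 < Q) {a : ℤ} (ha : IsCoprime a Q) (θ : ℝ) :
    ∃ n : ℕ, 0 < n ∧ (n : ℝ) ^ 2 ≤ √Q ^ 3 ∧
      nint ((n : ℝ) ^ 2 * θ) ≤ R / √Q + √Q * |Q * θ - a| := by
  obtain ⟨A, hA⟩ := (ZMod.coe_int_isUnit_iff_isCoprime a Q).mpr ha.symm
  obtain ⟨r, hr, l, hl⟩ := h A
  obtain ⟨t, ht0, htQ, hts, hst⟩ := exists_sq_le_sqrt_le hQ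
  have hs : 0 < √(Q : ℝ) := Real.sqrt_pos.mpr (mod_cast hQ.pos)
  have hsQ : √(Q : ℝ) ^ 2 = Q := Real.sq_sqrt Q.cast_nonneg
  obtain ⟨k, n, hk0, hkt, hn0, hnt, z, hz⟩ := exists_small_sq_mul_sub_dvd hl hA.symm ht0 htQ
  have hn : (n : ℝ) ^ 2 ≤ √Q ^ 3 := by
    have hnt' : |(n : ℝ)| * (t + 1) ≤ Q := mod_cast hnt
    refine le_of_mul_le_mul_right ?_ hs
    calc (n : ℝ) ^ 2 * √Q ≤ (n : ℝ) ^ 2 * (t + 1) ^ 2 := by gcongr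
      _ = (|(n : ℝ)| * (t + 1)) ^ 2 := by rw [mul_pow, sq_abs]
      _ ≤ (√(Q : ℝ) ^ 2) ^ 2 := by rw [hsQ]; gcongr
      _ = √Q ^ 3 * √Q := by ring
  have hk : (k : ℝ) ^ 2 ≤ √Q := by
    refine le_trans ?_ hts
    have : (0 : ℝ) < k := mod_cast hk0
    gcongr
    exact_mod_cast hkt
  have hz' : (n : ℝ) ^ 2 * a - r * (k : ℝ) ^ 2 = √Q ^ 2 * z := by
    rw [hsQ]
    exact_mod_cast hz
  have hcast : ((n.natAbs : ℕ) : ℝ) ^ 2 = (n : ℝ) ^ 2 := by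
    rw [Nat.cast_natAbs, Int.cast_abs, sq_abs]
  refine ⟨n.natAbs, Int.natAbs_pos.mpr hn0, hcast ▸ hn, ?_⟩
  rw [hcast]
  calc nint ((n : ℝ) ^ 2 * θ) ≤ |(n : ℝ) ^ 2 * θ - z| := nint_le_abs_sub _ z
    _ ≤ r / √Q + √Q * |√Q ^ 2 * θ - a| := abs_sq_mul_sub_le hs r.cast_nonneg hn hk hz' θ
    _ ≤ R / √Q + √Q * |Q * θ - a| := by
      rw [hsQ]
      gcongr
      exact (Finset.mem_Icc.mp hr).2

lemma rpow_mul_le_div {n s M x e : ℝ} {m : ℕ} (hn : 1 ≤ n) (hM : 1 ≤ M) (hs : 0 < s)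
    (he : e ≤ 2 / 3) (hem : 4 ≤ e * m) (hns : n ^ 2 ≤ s ^ 3) (hMs : M ^ m ≤ s ^ 2) {C : ℝ}
    (hC : 0 ≤ C) (hx : x ≤ C * M ^ 2 / s) : n ^ (2 / 3 - e) * x ≤ C / M := by
  have he0 : 0 ≤ e := (pos_of_mul_pos_left (by linarith) m.cast_nonneg).le
  have hn' : n ^ (2 / 3 - e) ≤ s ^ (1 - 3 / 2 * e) := calc
    n ^ (2 / 3 - e) = (n ^ 2) ^ ((2 / 3 - e) / 2) := by
      rw [← Real.rpow_natCast_mul (by positivity)]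
      congr 1
      push_cast
      ring
    _ ≤ (s ^ 3) ^ ((2 / 3 - e) / 2) := by gcongr
    _ = s ^ (1 - 3 / 2 * e) := by
      rw [← Real.rpow_natCast_mul (by positivity)]
      congr 1
      push_cast
      ring
  have hM' : M ^ 3 ≤ s ^ (3 / 2 * e) := calc
    M ^ 3 = M ^ (3 : ℝ) := by norm_cast
    _ ≤ M ^ (m * (3 / 4 * e)) := Real.rpow_le_rpow_of_exponent_le hM (by linarith)
    _ = (M ^ m) ^ (3 / 4 * e) := Real.rpow_natCast_mul (by positivity) _ _
    _ ≤ (s ^ 2) ^ (3 / 4 * e) := by gcongr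
    _ = s ^ (3 / 2 * e) := by
      rw [← Real.rpow_natCast_mul hs.le]
      congr 1
      push_cast
      ring
  calc n ^ (2 / 3 - e) * x ≤ n ^ (2 / 3 - e) * (C * M ^ 2 / s) := by gcongr
    _ ≤ s ^ (1 - 3 / 2 * e) * (C * M ^ 2 / s) := by gcongr
    _ = s ^ (1 - 3 / 2 * e) * M ^ 3 * (C / (s * M)) := by field_simp
    _ ≤ s ^ (1 - 3 / 2 * e) * s ^ (3 / 2 * e) * (C / (s * M)) := by gcongr
    _ = s * (C / (s * M)) := by rw [← Real.rpow_add hs, sub_add_cancel, Real.rpow_one]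
    _ = C / M := by field_simp

lemma exists_rpow_mul_nint_sq_mul_lt {θ : ℝ} (hθ : Irrational θ) {e : ℝ} (he : 0 < e)
    (he' : e ≤ 2 / 3) {δ : ℝ} (hδ : 0 < δ) :
    ∃ n : ℕ, 0 < n ∧ (n : ℝ) ^ (2 / 3 - e) * nint ((n : ℝ) ^ 2 * θ) < δ := by
  obtain ⟨m, hm⟩ := exists_nat_ge (4 / e)
  have hm0 : m ≠ 0 := by
    rintro rfl
    exact (hm.trans_lt' (by positivity)).ne' Nat.cast_zero
  obtain ⟨K, hK⟩ := exists_nat_gt (21 / δ)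
  obtain ⟨M, Q, a, hKM, hQ, hMQ, ha, hgood, happrox⟩ :=
    exists_hasSquareMultiples_abs_mul_sub_le hθ hm0 K
  obtain ⟨n, hn0, hnQ, hn⟩ := hgood.exists_nint_sq_mul_le hQ ha θ
  have hQ0 : (0 : ℝ) < Q := mod_cast hQ.pos
  have hs : 0 < √(Q : ℝ) := Real.sqrt_pos.mpr hQ0
  have hsQ : √(Q : ℝ) ^ 2 = Q := Real.sq_sqrt hQ0.le
  have hKM' : (K : ℝ) ≤ M := mod_cast hKM
  have hM0 : (0 : ℝ) < M := (hK.trans_le hKM').trans_le' (by positivity)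
  have hnint : nint ((n : ℝ) ^ 2 * θ) ≤ 21 * M ^ 2 / √Q := calc
    nint ((n : ℝ) ^ 2 * θ) ≤ (M ^ 2 : ℕ) / √Q + √Q * (20 * M ^ 2 / √Q ^ 2) :=
      hn.trans (by rw [hsQ]; gcongr)
    _ = 21 * M ^ 2 / √Q := by
      push_cast
      field_simp
      ring
  refine ⟨n, hn0, ?_⟩
  calc (n : ℝ) ^ (2 / 3 - e) * nint ((n : ℝ) ^ 2 * θ) ≤ 21 / M :=
      rpow_mul_le_div (mod_cast hn0) (Nat.one_le_cast.mpr (mod_cast hM0)) hs he'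
        ((div_le_iff₀' he).mp hm) hnQ (by rw [hsQ]; exact_mod_cast hMQ) (by norm_num) hnint
    _ < δ := by
      rw [div_lt_comm₀ hM0 hδ]
      exact hK.trans_le hKM'

lemma frequently_rpow_mul_nint_sq_mul_lt {θ : ℝ} (hθ : Irrational θ) {c : ℝ} (hc : 0 ≤ c)
    (h : ∀ δ > 0, ∃ n : ℕ, 0 < n ∧ (n : ℝ) ^ c * nint ((n : ℝ) ^ 2 * θ) < δ) {δ : ℝ}
    (hδ : 0 < δ) : ∃ᶠ n : ℕ in atTop, (n : ℝ) ^ c * nint ((n : ℝ) ^ 2 * θ) < δ := by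
  rw [frequently_atTop]
  intro N
  obtain ⟨μ, hμ, hμN⟩ := exists_pos_le_nint hθ (N ^ 2)
  obtain ⟨n, hn0, hn⟩ := h (min δ μ) (lt_min hδ hμ)
  refine ⟨n, ?_, hn.trans_le (min_le_left _ _)⟩
  by_contra! hlt
  have hlarge : μ ≤ nint ((n : ℝ) ^ 2 * θ) := by
    simpa only [Nat.cast_pow] using hμN (n ^ 2) (by positivity) (Nat.pow_le_pow_left hlt.le 2)
  refine (hn.trans_le (min_le_right _ _)).not_ge (hlarge.trans ?_)
  exact le_mul_of_one_le_left (abs_nonneg _) (Real.one_le_rpow (mod_cast hn0) hc)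

end Squares

/-- Zaharescu's theorem on approximation by squares. -/
theorem stmt14 (ε : ℝ) (hε : 0 < ε) (θ : ℝ) (hθ : Irrational θ) :
    ∀ ε' : ℝ, 0 < ε' →
      ∃ᶠ q : ℕ in atTop, (q : ℝ) ^ ((2 : ℝ) / 3 - ε) * nint ((q : ℝ) ^ 2 * θ) < ε' := by
  intro ε' hε'
  have he : min ε (2 / 3) ≤ 2 / 3 := min_le_right _ _
  have hfreq := frequently_rpow_mul_nint_sq_mul_lt hθ (sub_nonneg.mpr he)
    (fun δ hδ => exists_rpow_mul_nint_sq_mul_lt hθ (lt_min hε (by norm_num)) he hδ) hε'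
  refine (hfreq.and_eventually (eventually_ge_atTop 1)).mono fun q ⟨hq, hq1⟩ => hq.trans_le' ?_
  have hq1' : (1 : ℝ) ≤ q := mod_cast hq1
  have hnint : 0 ≤ nint ((q : ℝ) ^ 2 * θ) := abs_nonneg _
  gcongr
  exact min_le_left _ _
end

section
/- Let σ = 1.94696... be the largest real root of x⁴ − 2x² − 4x + 1 = 0. There exist real numbers θ^1, θ^2, linearly independent over ℤ together with 1 (no nonzero integer triple (a,b,c) satisfies aθ^1 + bθ^2 + c = 0), such that for every pair of integers (x_1, x_2) with x_1 ≥ 0, x_2 ≥ 0 and max(x_1, x_2) ≥ 2^{200}, one has ‖θ^1 x_1 + θ^2 x_2‖ ≥ 1 / (2^{300} · (max(x_1, x_2))^σ). -/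
open Filter

/-!
We construct unimodular bases `E, F, G` of `ℤ³` at scales `N` that are squared from one basis to
the next, and a linear form whose values on `E, F, G` have the signs `+, -, +` and the sizes
`N ^ (-24)`, `N ^ (-26)`, at most `N ^ (-48)`. The projections of `E, F, G` to the plane have sizes
`N ^ 5`, `N ^ 14`, `N ^ 10` and lie in the open positive quadrant, almost parallel to each other.
The form is obtained by compactness, since the signs at one scale force the signs and the relative
sizes at the previous one.

Changing the sign of `x₁` moves the points in question to the quadrant `x ≤ 0 ≤ y`. There
a combination `α • E + β • F + γ • G` needs cancellation between basis vectors. If `α` or `γ`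
vanishes, the signs of the values prevent the form from cancelling along; otherwise Cramer's rule
for `α` or `γ` shows that the form is not too small. Depending on the case, the point has size at
least about `N ^ k` and the form is at least about `N ^ (-m)` for one of the pairs `(k, m)`
`(14, 26), (8, 15), (8, 13), (10, 19), (13, 24)`. The largest quotient `m / k` is `19 / 10`, which
is less than `σ`.
-/

lemma const_mul_pow_le_pow {c N : ℝ} (hc : 1 ≤ c) (hN : c ≤ N) {j k : ℕ} (hjk : j < k) :
    c * N ^ j ≤ N ^ k := by
  have hN0 : 0 ≤ N := by linarith
  calc c * N ^ j ≤ N * N ^ j := by gcongr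
    _ = N ^ (j + 1) := (pow_succ' N j).symm
    _ ≤ N ^ k := pow_le_pow_right₀ (hc.trans hN) hjk

lemma one_le_abs_cast {n : ℤ} (hn : n ≠ 0) : (1 : ℝ) ≤ |(n : ℝ)| := by
  exact_mod_cast Int.one_le_abs hn

lemma abs_le_abs_add_of_mul_nonneg {a b : ℝ} (h : 0 ≤ a * b) : |a| ≤ |a + b| :=
  sq_le_sq.1 (by linarith [add_sq a b, sq_nonneg b])

lemma exists_mul_add_mul_eq {a b c d : ℝ} (h : a * d - b * c ≠ 0) (e f : ℝ) :
    ∃ x y, x * a + y * b = e ∧ x * c + y * d = f :=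
  ⟨(e * d - f * b) / (a * d - b * c), (f * a - e * c) / (a * d - b * c),
    by rw [div_mul_eq_mul_div, div_mul_eq_mul_div, ← add_div, div_eq_iff h]; ring,
    by rw [div_mul_eq_mul_div, div_mul_eq_mul_div, ← add_div, div_eq_iff h]; ring⟩

lemma norm_le_of_mem_Icc {u : ℝ × ℝ} {a b c : ℝ} (ha : 0 ≤ a) (hbc : b ≤ c)
    (h₁ : u.1 ∈ Set.Icc a b) (h₂ : u.2 ∈ Set.Icc a b) : ‖u‖ ≤ c := by
  have abs_le {x : ℝ} (hx : x ∈ Set.Icc a b) : |x| ≤ c := by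
    rw [abs_of_nonneg (ha.trans hx.1)]
    exact hx.2.trans hbc
  exact norm_prod_le_iff.2 ⟨abs_le h₁, abs_le h₂⟩

/-- The area spanned by two plane vectors, counted with the orientation `s = ±1`. -/
def area (s : ℝ) (u v : ℝ × ℝ) : ℝ := s * (u.1 * v.2 - u.2 * v.1)

lemma abs_area_le {s : ℝ} (hs : |s| = 1) (u v : ℝ × ℝ) : |area s u v| ≤ 2 * ‖u‖ * ‖v‖ := by
  calc |area s u v| = |u.1 * v.2 - u.2 * v.1| := by rw [area, abs_mul, hs, one_mul]
    _ ≤ |u.1| * |v.2| + |u.2| * |v.1| := by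
      simpa only [abs_mul] using abs_sub (u.1 * v.2) (u.2 * v.1)
    _ ≤ ‖u‖ * ‖v‖ + ‖u‖ * ‖v‖ := by
      gcongr
      exacts [norm_fst_le u, norm_snd_le v, norm_snd_le u, norm_fst_le v]
    _ = 2 * ‖u‖ * ‖v‖ := by ring

/-- The quadrant `x ≤ 0 ≤ y` of the plane. The basis vectors below lie in the open positive
quadrant, so that a nontrivial combination of two of them falls here only by cancellation. -/
def secondQuadrant : Set (ℝ × ℝ) := Set.Iic 0 ×ˢ Set.Ici 0

section Sector

variable {u v : ℝ × ℝ} {α β : ℤ}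

lemma mul_neg_of_mem_secondQuadrant (hu₁ : 0 < u.1) (hu₂ : 0 < u.2) (hv₁ : 0 < v.1)
    (hv₂ : 0 < v.2) (h : α • u + β • v ∈ secondQuadrant) :
    (α = 0 ∧ β = 0) ∨ (α * β : ℝ) < 0 := by
  obtain ⟨h₁, h₂⟩ : α * u.1 + β * v.1 ≤ 0 ∧ 0 ≤ α * u.2 + β * v.2 := by
    simpa [secondQuadrant] using h
  rcases lt_trichotomy (β : ℝ) 0 with hβ | hβ | hβ
  · have hα : 0 < (α : ℝ) * u.2 := by linarith [mul_neg_of_neg_of_pos hβ hv₂]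
    exact .inr (mul_neg_of_pos_of_neg (pos_of_mul_pos_left hα hu₂.le) hβ)
  · rw [hβ, zero_mul, add_zero] at h₁ h₂
    have hα : (α : ℝ) = 0 :=
      le_antisymm (nonpos_of_mul_nonpos_left h₁ hu₁) (nonneg_of_mul_nonneg_left h₂ hu₂)
    exact .inl ⟨by exact_mod_cast hα, by exact_mod_cast hβ⟩
  · have hα : (α : ℝ) * u.1 < 0 := by linarith [mul_pos hβ hv₁]
    exact .inr (mul_neg_of_neg_of_pos (neg_of_mul_neg_left hα hu₁.le) hβ)

lemma abs_mul_le_of_mem_secondQuadrant {m : ℝ} (hv₁ : m ≤ v.1) (hv₂ : m ≤ v.2)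
    (hαβ : (α * β : ℝ) < 0) (h : α • u + β • v ∈ secondQuadrant) :
    |(β : ℝ)| * m ≤ |(α : ℝ)| * ‖u‖ := by
  obtain ⟨h₁, h₂⟩ : α * u.1 + β * v.1 ≤ 0 ∧ 0 ≤ α * u.2 + β * v.2 := by
    simpa [secondQuadrant] using h
  rcases mul_neg_iff.1 hαβ with ⟨hα, hβ⟩ | ⟨hα, hβ⟩
  · rw [abs_of_pos hα, abs_of_neg hβ]
    calc -(β : ℝ) * m ≤ -β * v.2 := by gcongr; linarith
      _ ≤ α * u.2 := by linarith
      _ ≤ α * ‖u‖ := by gcongr; exact (le_abs_self _).trans (norm_snd_le u)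
  · rw [abs_of_neg hα, abs_of_pos hβ]
    calc (β : ℝ) * m ≤ β * v.1 := by gcongr
      _ ≤ -α * u.1 := by linarith
      _ ≤ -α * ‖u‖ := by gcongr; exacts [by linarith, (le_abs_self _).trans (norm_fst_le u)]

end Sector

/-- Three vectors `E, F, G`, thought of as a basis of a lattice. -/
structure Triple (M : Type*) where
  E : M
  F : M
  G : M

namespace Triple

section Group

variable {M M' : Type*} [AddCommGroup M] [AddCommGroup M']

/-- The image of a triple under a homomorphism: its coordinates, or the values of a linear form. -/
def map (f : M →+ M') (t : Triple M) : Triple M' := ⟨f t.E, f t.F, f t.G⟩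

/-- The vector with coordinates `α, β, γ` in the basis `t`. -/
def comb (t : Triple M) (α β γ : ℤ) : M := α • t.E + β • t.F + γ • t.G

/-- The triple generates the whole group. -/
def Spans (t : Triple M) : Prop := ∀ v, ∃ α β γ, t.comb α β γ = v

/-- The basis following `t`. It is unimodular over `t`: from `H = E + N ^ 2 • F` and the new basis
one recovers `F = (N ^ 4 + 1) • H - G'` and then `E = H - N ^ 2 • F`. -/
def next (N : ℤ) (t : Triple M) : Triple M where
  E := t.G
  F := t.E + N ^ 2 • t.F + N ^ 18 • t.G
  G := (N ^ 4 + 1) • (t.E + N ^ 2 • t.F) - t.F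

lemma map_comb (f : M →+ M') (t : Triple M) (α β γ : ℤ) :
    (t.map f).comb α β γ = f (t.comb α β γ) := by
  simp only [comb, map, map_add, map_zsmul]

lemma map_next (f : M →+ M') (N : ℤ) (t : Triple M) : (t.next N).map f = (t.map f).next N := by
  simp only [next, map, map_add, map_sub, map_zsmul]

lemma Spans.next {t : Triple M} (h : t.Spans) (N : ℤ) : (t.next N).Spans := by
  intro v
  obtain ⟨α, β, γ, rfl⟩ := h v
  -- Replace `E` and `F` by their expressions in terms of `H = F' - N ^ 18 • E'` and `G'`.
  refine ⟨γ - N ^ 18 * (α * (1 - N ^ 2 * (N ^ 4 + 1)) + β * (N ^ 4 + 1)),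
    α * (1 - N ^ 2 * (N ^ 4 + 1)) + β * (N ^ 4 + 1), α * N ^ 2 - β, ?_⟩
  simp only [comb, Triple.next]
  module

end Group

section Values

variable {t : Triple ℝ} {N : ℤ}

lemma next_F (t : Triple ℝ) (N : ℤ) : (t.next N).F = t.E + N ^ 2 * t.F + N ^ 18 * t.G := by
  simp only [next, zsmul_eq_mul, Int.cast_pow]

lemma next_G (t : Triple ℝ) (N : ℤ) :
    (t.next N).G = (N ^ 4 + 1) * (t.E + N ^ 2 * t.F) - t.F := by
  simp only [next, zsmul_eq_mul, Int.cast_add, Int.cast_pow, Int.cast_one]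

lemma comb_eq (t : Triple ℝ) (α β γ : ℤ) : t.comb α β γ = α * t.E + β * t.F + γ * t.G := by
  simp only [comb, zsmul_eq_mul]

/-- Sizes of one coordinate of the basis vectors at scale `N`. The terms subtracted from the upper
bounds make the condition inductive. -/
structure HasSize (N : ℝ) (t : Triple ℝ) : Prop where
  E_mem : t.E ∈ Set.Icc (N ^ 5) (3 * N ^ 5 - N ^ 4)
  F_mem : t.F ∈ Set.Icc (N ^ 14) (3 * N ^ 14 - N ^ 13 / 2)
  G_mem : t.G ∈ Set.Icc (N ^ 10) (3 * N ^ 10 - N ^ 8)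

lemma HasSize.next (hN : 1024 ≤ (N : ℝ)) (h : t.HasSize N) :
    (t.next N).HasSize ((N : ℝ) ^ 2) := by
  obtain ⟨⟨hE, hE'⟩, ⟨hF, hF'⟩, ⟨hG, hG'⟩⟩ := h
  have pow_le {j k : ℕ} (hjk : j < k) : 1024 * (N : ℝ) ^ j ≤ N ^ k :=
    const_mul_pow_le_pow (by norm_num) hN hjk
  have pos (k : ℕ) : 0 < (N : ℝ) ^ k := by positivity
  refine ⟨?_, ?_, ?_⟩
  · rw [← pow_mul, ← pow_mul]
    exact ⟨hG, hG'⟩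
  · rw [next_F]
    have hF₂ := mul_le_mul_of_nonneg_left hF' (pos 2).le
    have hG₁ := mul_le_mul_of_nonneg_left hG (pos 18).le
    have hG₂ := mul_le_mul_of_nonneg_left hG' (pos 18).le
    have hF₁ := mul_nonneg (pos 2).le ((pos 14).le.trans hF)
    constructor
    · linarith [pos 5]
    · linarith [pos 4, pos 15, pow_le (show 5 < 26 by norm_num), pow_le (show 16 < 26 by norm_num)]
  · rw [next_G]
    generalize (N : ℝ) = n at *
    have hc : n ^ 6 ≤ (n ^ 4 + 1) * n ^ 2 - 1 := by nlinarith
    have hE₁ := mul_nonneg (pos 4).le ((pos 5).le.trans hE)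
    have hE₂ := mul_le_mul_of_nonneg_left hE' (pos 4).le
    have hF₁ := mul_le_mul hc hF (pos 14).le (by nlinarith)
    have hF₂ := mul_le_mul_of_nonneg_left hF' ((pos 6).le.trans hc)
    constructor
    · linarith [pos 5]
    · have := pow_le (show 9 < 19 by norm_num)
      linarith [pos 4, pos 5, pos 8, pos 13, pos 15, pos 14, pow_le (show 5 < 19 by norm_num),
        pow_le (show 16 < 19 by norm_num), pow_le (show 13 < 19 by norm_num)]

/-- The sign pattern of a linear form on the basis vectors. -/
structure IsSigned (t : Triple ℝ) : Prop where
  E_nonneg : 0 ≤ t.E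
  F_nonpos : t.F ≤ 0
  G_nonneg : 0 ≤ t.G

/-- Sign pattern and relative sizes of the values of a linear form that is small on the basis
vectors at scale `N`. -/
structure IsDecaying (N : ℝ) (t : Triple ℝ) : Prop extends t.IsSigned where
  sub_one_mul_F_le : (N ^ 2 - 1) * -t.F ≤ t.E
  E_le : t.E ≤ N ^ 2 * -t.F
  pow_mul_G_le : N ^ 24 * t.G ≤ t.E

lemma IsSigned.isDecaying_of_next (hN : 1 ≤ (N : ℝ)) (h : (t.next N).IsSigned) :
    t.IsDecaying N := by
  obtain ⟨hG, hF', hG'⟩ := h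
  rw [next_F] at hF'
  rw [next_G] at hG'
  change 0 ≤ t.G at hG
  set H := t.E + N ^ 2 * t.F
  have hN2 : 1 ≤ (N : ℝ) ^ 2 := one_le_pow₀ hN
  have hHG : N ^ 18 * t.G ≤ -H := by linarith
  have hH0 : 0 ≤ -H := le_trans (by positivity) hHG
  have hHF : N ^ 4 * -H ≤ H - t.F := by linarith
  have hFH : 0 ≤ H - t.F := le_trans (by positivity) hHF
  have hFE : (N ^ 2 - 1) * -t.F ≤ t.E := by linarith
  have hGE : N ^ 24 * t.G ≤ t.E :=
    calc (N : ℝ) ^ 24 * t.G = N ^ 6 * (N ^ 18 * t.G) := by ring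
      _ ≤ N ^ 6 * -H := by gcongr
      _ = N ^ 2 * (N ^ 4 * -H) := by ring
      _ ≤ N ^ 2 * (H - t.F) := by gcongr
      _ ≤ t.E := by nlinarith
  exact ⟨⟨le_trans (by positivity) hGE, by linarith, hG⟩, hFE, by linarith, hGE⟩

end Values

section Plane

variable {u : Triple (ℝ × ℝ)} {l : Triple ℝ} {N s : ℝ}

/-- The triple of plane vectors is the projection of a basis at scale `N`, with orientation `s`:
the vectors have sizes `N ^ 5, N ^ 14, N ^ 10`, are almost parallel, and the planes `EF`, `EG`, `FG`
have covolumes at most about `N ^ 13`, `N ^ 15`, `N ^ 24`. -/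
structure IsAdapted (N s : ℝ) (u : Triple (ℝ × ℝ)) : Prop where
  le_scale : 1024 ≤ N
  abs_sign : |s| = 1
  fst_hasSize : (u.map (AddMonoidHom.fst ℝ ℝ)).HasSize N
  snd_hasSize : (u.map (AddMonoidHom.snd ℝ ℝ)).HasSize N
  area_EF_pos : 0 < area s u.E u.F
  area_EF_le : area s u.E u.F ≤ 20 * N ^ 13
  area_EG_pos : 0 < area s u.E u.G
  le_area_FG : N ^ 24 ≤ area s u.F u.G

namespace IsAdapted

lemma scale_pos (h : u.IsAdapted N s) : 0 < N := by linarith [h.le_scale]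

lemma norm_E_le (h : u.IsAdapted N s) : ‖u.E‖ ≤ 3 * N ^ 5 :=
  norm_le_of_mem_Icc (pow_pos h.scale_pos 5).le (sub_le_self _ (pow_pos h.scale_pos 4).le)
    h.fst_hasSize.E_mem h.snd_hasSize.E_mem

lemma norm_F_le (h : u.IsAdapted N s) : ‖u.F‖ ≤ 3 * N ^ 14 :=
  norm_le_of_mem_Icc (pow_pos h.scale_pos 14).le (sub_le_self _
    (half_pos (pow_pos h.scale_pos 13)).le) h.fst_hasSize.F_mem h.snd_hasSize.F_mem

lemma norm_G_le (h : u.IsAdapted N s) : ‖u.G‖ ≤ 3 * N ^ 10 :=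
  norm_le_of_mem_Icc (pow_pos h.scale_pos 10).le (sub_le_self _ (pow_pos h.scale_pos 8).le)
    h.fst_hasSize.G_mem h.snd_hasSize.G_mem

lemma E_pos (h : u.IsAdapted N s) : 0 < u.E.1 ∧ 0 < u.E.2 :=
  ⟨(pow_pos h.scale_pos 5).trans_le h.fst_hasSize.E_mem.1,
    (pow_pos h.scale_pos 5).trans_le h.snd_hasSize.E_mem.1⟩

lemma F_pos (h : u.IsAdapted N s) : 0 < u.F.1 ∧ 0 < u.F.2 :=
  ⟨(pow_pos h.scale_pos 14).trans_le h.fst_hasSize.F_mem.1,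
    (pow_pos h.scale_pos 14).trans_le h.snd_hasSize.F_mem.1⟩

lemma G_pos (h : u.IsAdapted N s) : 0 < u.G.1 ∧ 0 < u.G.2 :=
  ⟨(pow_pos h.scale_pos 10).trans_le h.fst_hasSize.G_mem.1,
    (pow_pos h.scale_pos 10).trans_le h.snd_hasSize.G_mem.1⟩

lemma area_FG_pos (h : u.IsAdapted N s) : 0 < area s u.F u.G :=
  (pow_pos h.scale_pos 24).trans_le h.le_area_FG

lemma area_EG_le (h : u.IsAdapted N s) : area s u.E u.G ≤ 18 * N ^ 15 :=
  calc area s u.E u.G ≤ 2 * ‖u.E‖ * ‖u.G‖ := (le_abs_self _).trans (abs_area_le h.abs_sign _ _)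
    _ ≤ 2 * (3 * N ^ 5) * (3 * N ^ 10) := by
      have := h.scale_pos
      gcongr
      exacts [h.norm_E_le, h.norm_G_le]
    _ = 18 * N ^ 15 := by ring

lemma area_FG_le (h : u.IsAdapted N s) : area s u.F u.G ≤ 18 * N ^ 24 :=
  calc area s u.F u.G ≤ 2 * ‖u.F‖ * ‖u.G‖ := (le_abs_self _).trans (abs_area_le h.abs_sign _ _)
    _ ≤ 2 * (3 * N ^ 14) * (3 * N ^ 10) := by
      have := h.scale_pos
      gcongr
      exacts [h.norm_F_le, h.norm_G_le]
    _ = 18 * N ^ 24 := by ring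

end IsAdapted

lemma area_next_EF (s : ℝ) (u : Triple (ℝ × ℝ)) (N : ℤ) :
    area (-s) (u.next N).E (u.next N).F = area s u.E u.G + N ^ 2 * area s u.F u.G := by
  simp only [area, next, zsmul_eq_mul, Int.cast_pow,
    Prod.fst_add, Prod.fst_mul, Prod.pow_fst, Prod.fst_intCast, Prod.snd_add, Prod.snd_mul,
    Prod.pow_snd, Prod.snd_intCast]
  ring

lemma area_next_EG (s : ℝ) (u : Triple (ℝ × ℝ)) (N : ℤ) :
    area (-s) (u.next N).E (u.next N).G =
      (N ^ 4 + 1) * area s u.E u.G + ((N ^ 4 + 1) * N ^ 2 - 1) * area s u.F u.G := by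
  simp only [area, next, zsmul_eq_mul, Int.cast_add, Int.cast_pow, Int.cast_one,
    Prod.fst_sub, Prod.fst_one, Prod.snd_sub, Prod.snd_one,
    Prod.fst_add, Prod.fst_mul, Prod.pow_fst, Prod.fst_intCast, Prod.snd_add, Prod.snd_mul,
    Prod.pow_snd, Prod.snd_intCast]
  ring

lemma area_next_FG (s : ℝ) (u : Triple (ℝ × ℝ)) (N : ℤ) :
    area (-s) (u.next N).F (u.next N).G = area s u.E u.F +
      N ^ 18 * ((N ^ 4 + 1) * area s u.E u.G + ((N ^ 4 + 1) * N ^ 2 - 1) * area s u.F u.G) := by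
  simp only [area, next, zsmul_eq_mul, Int.cast_add, Int.cast_pow, Int.cast_one,
    Prod.fst_sub, Prod.fst_one, Prod.snd_sub, Prod.snd_one,
    Prod.fst_add, Prod.fst_mul, Prod.pow_fst, Prod.fst_intCast, Prod.snd_add, Prod.snd_mul,
    Prod.pow_snd, Prod.snd_intCast]
  ring

lemma IsAdapted.next {N : ℤ} (h : u.IsAdapted N s) :
    (u.next N).IsAdapted ((N : ℝ) ^ 2) (-s) := by
  have hN := h.le_scale
  have hN0 := h.scale_pos
  have hEG := h.area_EG_pos
  have hFG := h.area_FG_pos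
  have hc : (N : ℝ) ^ 6 ≤ (N ^ 4 + 1) * N ^ 2 - 1 := by nlinarith
  have hc0 : 0 < ((N : ℝ) ^ 4 + 1) * N ^ 2 - 1 := lt_of_lt_of_le (by positivity) hc
  refine ⟨by nlinarith, by rw [abs_neg, h.abs_sign], ?_, ?_, ?_, ?_, ?_, ?_⟩
  · rw [map_next]
    exact h.fst_hasSize.next hN
  · rw [map_next]
    exact h.snd_hasSize.next hN
  · rw [area_next_EF]
    positivity
  · rw [area_next_EF]
    have := const_mul_pow_le_pow (by norm_num) hN (show 15 < 26 by norm_num)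
    have := mul_le_mul_of_nonneg_left h.area_FG_le (pow_pos hN0 2).le
    linarith [h.area_EG_le, pow_pos hN0 26]
  · rw [area_next_EG]
    positivity
  · rw [area_next_FG]
    calc ((N : ℝ) ^ 2) ^ 24 = 0 + N ^ 18 * (0 + N ^ 6 * N ^ 24) := by ring
      _ ≤ _ := by gcongr; exacts [h.area_EF_pos.le, by positivity, h.le_area_FG]

/-- The determinant of three vectors with projections `u` to the plane and third coordinates `l`,
or equally with values `l` of a linear form of which the third coordinate is a summand. -/
def det (s : ℝ) (u : Triple (ℝ × ℝ)) (l : Triple ℝ) : ℝ :=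
  l.E * area s u.F u.G - l.F * area s u.E u.G + l.G * area s u.E u.F

lemma det_next (s : ℝ) (u : Triple (ℝ × ℝ)) (l : Triple ℝ) (N : ℤ) :
    det (-s) (u.next N) (l.next N) = det s u l := by
  rw [det, det, area_next_EF, area_next_EG, area_next_FG, next_F, next_G]
  simp only [next]
  ring

lemma det_mul_alpha (s : ℝ) (u : Triple (ℝ × ℝ)) (l : Triple ℝ) (α β γ : ℤ) :
    det s u l * α = l.comb α β γ * area s u.F u.G - l.F * area s (u.comb α β γ) u.G
      + l.G * area s (u.comb α β γ) u.F := by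
  simp only [det, area, comb, zsmul_eq_mul, Prod.fst_add, Prod.fst_mul, Prod.fst_intCast,
    Prod.snd_add, Prod.snd_mul, Prod.snd_intCast]
  ring

lemma det_mul_gamma (s : ℝ) (u : Triple (ℝ × ℝ)) (l : Triple ℝ) (α β γ : ℤ) :
    det s u l * γ = l.comb α β γ * area s u.E u.F - l.F * area s u.E (u.comb α β γ)
      + l.E * area s u.F (u.comb α β γ) := by
  simp only [det, area, comb, zsmul_eq_mul, Prod.fst_add, Prod.fst_mul, Prod.fst_intCast,
    Prod.snd_add, Prod.snd_mul, Prod.snd_intCast]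
  ring

/-- A basis of `ℤ³` at scale `N`, with projections `u` to the plane, on which a linear form takes
the small values `l`. -/
structure IsReduced (N s : ℝ) (u : Triple (ℝ × ℝ)) (l : Triple ℝ) : Prop
    extends u.IsAdapted N s, l.IsDecaying N where
  det_eq_one : det s u l = 1

namespace IsReduced

lemma E_mul_pow_le (h : IsReduced N s u l) : l.E * N ^ 24 ≤ 1 := by
  have hFD := mul_nonpos_of_nonpos_of_nonneg h.F_nonpos h.area_EG_pos.le
  have hGA := mul_nonneg h.G_nonneg h.area_EF_pos.le
  calc l.E * N ^ 24 ≤ l.E * area s u.F u.G :=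
        mul_le_mul_of_nonneg_left h.le_area_FG h.E_nonneg
    _ ≤ det s u l := by rw [det]; linarith
    _ = 1 := h.det_eq_one

lemma two_mul_neg_F_le (h : IsReduced N s u l) : N ^ 2 * -l.F ≤ 2 * l.E := by
  have : 0 ≤ (N ^ 2 - 2) * -l.F :=
    mul_nonneg (by nlinarith [h.le_scale]) (neg_nonneg.2 h.F_nonpos)
  linarith [h.sub_one_mul_F_le]

lemma le_E_mul_pow (h : IsReduced N s u l) : 1 ≤ 20 * (l.E * N ^ 24) := by
  have hN := h.le_scale
  have hFE : -l.F ≤ l.E := by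
    linarith [h.two_mul_neg_F_le, mul_le_mul_of_nonneg_right (show 2 ≤ N ^ 2 by nlinarith)
      (neg_nonneg.2 h.F_nonpos)]
  have hGE : l.G ≤ l.E :=
    (le_mul_of_one_le_left h.G_nonneg (one_le_pow₀ (by linarith))).trans h.pow_mul_G_le
  have hareas : area s u.F u.G + area s u.E u.G + area s u.E u.F ≤ 20 * N ^ 24 := by
    linarith [h.area_FG_le, h.area_EG_le, h.area_EF_le, pow_pos h.scale_pos 24,
      const_mul_pow_le_pow (by norm_num) hN (show 15 < 24 by norm_num),
      const_mul_pow_le_pow (by norm_num) hN (show 13 < 24 by norm_num)]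
  calc 1 = l.E * area s u.F u.G + -l.F * area s u.E u.G + l.G * area s u.E u.F := by
        rw [← h.det_eq_one, det]; ring
    _ ≤ l.E * area s u.F u.G + l.E * area s u.E u.G + l.E * area s u.E u.F := by
        gcongr
        exacts [h.area_EG_pos.le, h.area_EF_pos.le]
    _ = l.E * (area s u.F u.G + area s u.E u.G + area s u.E u.F) := by ring
    _ ≤ l.E * (20 * N ^ 24) := mul_le_mul_of_nonneg_left hareas h.E_nonneg
    _ = 20 * (l.E * N ^ 24) := by ring

lemma neg_F_mul_pow_le (h : IsReduced N s u l) : -l.F * N ^ 26 ≤ 2 := by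
  linarith [mul_le_mul_of_nonneg_left h.two_mul_neg_F_le (pow_pos h.scale_pos 24).le,
    h.E_mul_pow_le]

lemma le_neg_F_mul_pow (h : IsReduced N s u l) : 1 ≤ 20 * (-l.F * N ^ 26) := by
  linarith [mul_le_mul_of_nonneg_left h.E_le (pow_pos h.scale_pos 24).le, h.le_E_mul_pow]

lemma G_mul_pow_le (h : IsReduced N s u l) : l.G * N ^ 48 ≤ 1 := by
  linarith [mul_le_mul_of_nonneg_left h.pow_mul_G_le (pow_pos h.scale_pos 24).le,
    h.E_mul_pow_le]

variable {α β γ : ℤ}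

lemma abs_alpha_le (h : IsReduced N s u l) (hP : 1024 * ‖u.comb α β γ‖ ≤ N ^ 16) :
    |(α : ℝ)| ≤ |l.comb α β γ| * area s u.F u.G + 1 / 2 := by
  set P := u.comb α β γ
  have hN0 := h.scale_pos
  have hF : |l.F * area s P u.G| ≤ 12 / 1024 :=
    calc |l.F * area s P u.G| ≤ -l.F * (2 * ‖P‖ * ‖u.G‖) := by
          rw [abs_mul, abs_of_nonpos h.F_nonpos]
          exact mul_le_mul_of_nonneg_left (abs_area_le h.abs_sign _ _) (neg_nonneg.2 h.F_nonpos)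
      _ ≤ -l.F * (2 * (N ^ 16 / 1024) * (3 * N ^ 10)) := by
          gcongr
          exacts [neg_nonneg.2 h.F_nonpos, by linarith, h.norm_G_le]
      _ ≤ 12 / 1024 := by linarith [h.neg_F_mul_pow_le]
  have hG : |l.G * area s P u.F| ≤ 6 / 1024 :=
    calc |l.G * area s P u.F| ≤ l.G * (2 * ‖P‖ * ‖u.F‖) := by
          rw [abs_mul, abs_of_nonneg h.G_nonneg]
          exact mul_le_mul_of_nonneg_left (abs_area_le h.abs_sign _ _) h.G_nonneg
      _ ≤ l.G * (2 * (N ^ 16 / 1024) * (3 * N ^ 14)) := by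
          gcongr
          exacts [h.G_nonneg, by linarith, h.norm_F_le]
      _ = 6 / 1024 * (l.G * N ^ 30) := by ring
      _ ≤ 6 / 1024 * (l.G * N ^ 48) := by
          gcongr
          exacts [h.G_nonneg, by linarith [h.le_scale], by norm_num]
      _ ≤ 6 / 1024 := by linarith [h.G_mul_pow_le]
  have hdet := det_mul_alpha s u l α β γ
  rw [h.det_eq_one, one_mul] at hdet
  rw [hdet, ← abs_of_pos h.area_FG_pos, ← abs_mul, abs_of_pos h.area_FG_pos]
  linarith [abs_add_le (l.comb α β γ * area s u.F u.G - l.F * area s P u.G) (l.G * area s P u.F),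
    abs_sub (l.comb α β γ * area s u.F u.G) (l.F * area s P u.G)]

lemma abs_gamma_le (h : IsReduced N s u l) (hP : 1024 * ‖u.comb α β γ‖ ≤ N ^ 10) :
    |(γ : ℝ)| ≤ |l.comb α β γ| * area s u.E u.F + 1 / 2 := by
  set P := u.comb α β γ
  have hN0 := h.scale_pos
  have hF : |l.F * area s u.E P| ≤ 12 / 1024 :=
    calc |l.F * area s u.E P| ≤ -l.F * (2 * ‖u.E‖ * ‖P‖) := by
          rw [abs_mul, abs_of_nonpos h.F_nonpos]
          exact mul_le_mul_of_nonneg_left (abs_area_le h.abs_sign _ _) (neg_nonneg.2 h.F_nonpos)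
      _ ≤ -l.F * (2 * (3 * N ^ 5) * (N ^ 10 / 1024)) := by
          gcongr
          exacts [neg_nonneg.2 h.F_nonpos, h.norm_E_le, by linarith]
      _ = 6 / 1024 * (-l.F * N ^ 15) := by ring
      _ ≤ 6 / 1024 * (-l.F * N ^ 26) := by
          gcongr
          exacts [neg_nonneg.2 h.F_nonpos, by linarith [h.le_scale], by norm_num]
      _ ≤ 12 / 1024 := by linarith [h.neg_F_mul_pow_le]
  have hE : |l.E * area s u.F P| ≤ 6 / 1024 :=
    calc |l.E * area s u.F P| ≤ l.E * (2 * ‖u.F‖ * ‖P‖) := by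
          rw [abs_mul, abs_of_nonneg h.E_nonneg]
          exact mul_le_mul_of_nonneg_left (abs_area_le h.abs_sign _ _) h.E_nonneg
      _ ≤ l.E * (2 * (3 * N ^ 14) * (N ^ 10 / 1024)) := by
          gcongr
          exacts [h.E_nonneg, h.norm_F_le, by linarith]
      _ ≤ 6 / 1024 := by linarith [h.E_mul_pow_le]
  have hdet := det_mul_gamma s u l α β γ
  rw [h.det_eq_one, one_mul] at hdet
  rw [hdet, ← abs_of_pos h.area_EF_pos, ← abs_mul, abs_of_pos h.area_EF_pos]
  linarith [abs_add_le (l.comb α β γ * area s u.E u.F - l.F * area s u.E P) (l.E * area s u.F P),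
    abs_sub (l.comb α β γ * area s u.E u.F) (l.F * area s u.E P)]

lemma eq_zero_of_comb_eq_zero (h : IsReduced N s u l) (hP : 1024 * ‖u.comb α β γ‖ ≤ N ^ 10)
    (h0 : l.comb α β γ = 0) : α = 0 ∧ β = 0 ∧ γ = 0 := by
  have eq_zero {n : ℤ} {a : ℝ} (hn : |(n : ℝ)| ≤ |l.comb α β γ| * a + 1 / 2) : n = 0 := by
    rw [h0, abs_zero, zero_mul] at hn
    exact Int.abs_lt_one_iff.1 (by exact_mod_cast hn.trans_lt (by norm_num : 0 + 1 / 2 < (1 : ℝ)))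
  obtain rfl := eq_zero (h.abs_alpha_le
    (hP.trans (pow_le_pow_right₀ (by linarith [h.le_scale]) (by norm_num))))
  obtain rfl := eq_zero (h.abs_gamma_le hP)
  have hF : l.F ≠ 0 := fun hF => by linarith [hF ▸ h.le_neg_F_mul_pow]
  exact ⟨rfl, by simpa [comb_eq, hF] using h0, rfl⟩

/-! ### Lower bounds on the second quadrant -/

lemma beta_mul_gamma_neg_of_alpha_eq_zero (h : IsReduced N s u l)
    (hP : u.comb 0 β γ ∈ secondQuadrant) (hP0 : u.comb 0 β γ ≠ 0) : (β * γ : ℝ) < 0 := by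
  rw [comb, zero_smul, zero_add] at hP
  refine (mul_neg_of_mem_secondQuadrant h.F_pos.1 h.F_pos.2 h.G_pos.1 h.G_pos.2 hP).resolve_left ?_
  rintro ⟨rfl, rfl⟩
  simp [comb] at hP0

lemma pow_le_norm_comb_of_alpha_eq_zero (h : IsReduced N s u l) (hβ : β ≠ 0) :
    N ^ 14 ≤ 6 * ‖u.comb 0 β γ‖ := by
  have hN0 := h.scale_pos
  have harea : area s (u.comb 0 β γ) u.G = β * area s u.F u.G := by
    simp only [area, comb, zero_smul, zero_add, zsmul_eq_mul, Prod.fst_add, Prod.fst_mul,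
      Prod.fst_intCast, Prod.snd_add, Prod.snd_mul, Prod.snd_intCast]
    ring
  have : N ^ 10 * N ^ 14 ≤ N ^ 10 * (6 * ‖u.comb 0 β γ‖) :=
    calc N ^ 10 * N ^ 14 = 1 * N ^ 24 := by ring
      _ ≤ |(β : ℝ)| * area s u.F u.G := by
        gcongr
        exacts [one_le_abs_cast hβ, h.le_area_FG]
      _ = |area s (u.comb 0 β γ) u.G| := by rw [harea, abs_mul, abs_of_pos h.area_FG_pos]
      _ ≤ 2 * ‖u.comb 0 β γ‖ * ‖u.G‖ := abs_area_le h.abs_sign _ _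
      _ ≤ 2 * ‖u.comb 0 β γ‖ * (3 * N ^ 10) := by gcongr; exact h.norm_G_le
      _ = N ^ 10 * (6 * ‖u.comb 0 β γ‖) := by ring
  exact le_of_mul_le_mul_left this (pow_pos hN0 10)

lemma one_le_abs_comb_mul_pow_of_alpha_eq_zero (h : IsReduced N s u l) (hβ : β ≠ 0)
    (hβγ : (β * γ : ℝ) ≤ 0) : 1 ≤ 20 * (|l.comb 0 β γ| * N ^ 26) := by
  have hFG : 0 ≤ β * l.F * (γ * l.G) := by
    linarith [mul_nonneg_of_nonpos_of_nonpos hβγ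
      (mul_nonpos_of_nonpos_of_nonneg h.F_nonpos h.G_nonneg)]
  have hF : -l.F ≤ |l.comb 0 β γ| :=
    calc -l.F ≤ |(β : ℝ)| * -l.F :=
          le_mul_of_one_le_left (neg_nonneg.2 h.F_nonpos) (one_le_abs_cast hβ)
      _ = |β * l.F| := by rw [abs_mul, abs_of_nonpos h.F_nonpos]
      _ ≤ |β * l.F + γ * l.G| := abs_le_abs_add_of_mul_nonneg hFG
      _ = |l.comb 0 β γ| := by simp [comb_eq]
  linarith [h.le_neg_F_mul_pow, mul_le_mul_of_nonneg_right hF (pow_pos h.scale_pos 26).le]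

lemma one_le_abs_comb_mul_pow_of_gamma_eq_zero (h : IsReduced N s u l)
    (hP : u.comb α β 0 ∈ secondQuadrant) (hα : α ≠ 0) :
    1 ≤ 60 * (|l.comb α β 0| * N ^ 15) := by
  have hN0 := h.scale_pos
  rw [comb, zero_smul, add_zero] at hP
  have hαβ : (α * β : ℝ) < 0 :=
    (mul_neg_of_mem_secondQuadrant h.E_pos.1 h.E_pos.2 h.F_pos.1 h.F_pos.2 hP).resolve_left
      fun h0 => hα h0.1
  have hβ : (1 : ℝ) ≤ |(β : ℝ)| :=
    one_le_abs_cast (by rintro rfl; simp at hαβ)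
  have hN9 : N ^ 9 ≤ 3 * |(α : ℝ)| := by
    have : N ^ 5 * N ^ 9 ≤ N ^ 5 * (3 * |(α : ℝ)|) :=
      calc N ^ 5 * N ^ 9 = 1 * N ^ 14 := by ring
        _ ≤ |(β : ℝ)| * N ^ 14 := by gcongr
        _ ≤ |(α : ℝ)| * ‖u.E‖ :=
          abs_mul_le_of_mem_secondQuadrant h.fst_hasSize.F_mem.1 h.snd_hasSize.F_mem.1 hαβ hP
        _ ≤ |(α : ℝ)| * (3 * N ^ 5) := by gcongr; exact h.norm_E_le
        _ = N ^ 5 * (3 * |(α : ℝ)|) := by ring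
    exact le_of_mul_le_mul_left this (pow_pos hN0 5)
  have hEF : 0 ≤ α * l.E * (β * l.F) := by
    have := mul_nonneg_of_nonpos_of_nonpos hαβ.le
      (mul_nonpos_of_nonneg_of_nonpos h.E_nonneg h.F_nonpos)
    linarith
  calc 1 ≤ 20 * (l.E * N ^ 24) := h.le_E_mul_pow
    _ = 20 * (N ^ 9 * l.E * N ^ 15) := by ring
    _ ≤ 20 * (3 * |(α : ℝ)| * l.E * N ^ 15) := by gcongr; exact h.E_nonneg
    _ = 60 * (|α * l.E| * N ^ 15) := by rw [abs_mul, abs_of_nonneg h.E_nonneg]; ring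
    _ ≤ 60 * (|α * l.E + β * l.F| * N ^ 15) := by
      gcongr ?_ * (?_ * _)
      exact abs_le_abs_add_of_mul_nonneg hEF
    _ = 60 * (|l.comb α β 0| * N ^ 15) := by simp [comb_eq]

lemma abs_alpha_le_mul_pow (h : IsReduced N s u l) (hP : 1024 * ‖u.comb α β γ‖ ≤ N ^ 16)
    (hα : α ≠ 0) : |(α : ℝ)| ≤ 36 * (|l.comb α β γ| * N ^ 24) := by
  have := mul_le_mul_of_nonneg_left h.area_FG_le (abs_nonneg (l.comb α β γ))
  linarith [h.abs_alpha_le hP, one_le_abs_cast hα]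

lemma one_le_abs_comb_mul_pow_of_gamma_ne_zero (h : IsReduced N s u l)
    (hP : 1024 * ‖u.comb α β γ‖ ≤ N ^ 10) (hγ : γ ≠ 0) :
    1 ≤ 40 * (|l.comb α β γ| * N ^ 13) := by
  have := mul_le_mul_of_nonneg_left h.area_EF_le (abs_nonneg (l.comb α β γ))
  linarith [h.abs_gamma_le hP, one_le_abs_cast hγ]

lemma beta_eq_zero_of_abs_alpha_lt (h : IsReduced N s u l) (hPN : ‖u.comb α β γ‖ ≤ N ^ 13)
    (hα : 3 * |(α : ℝ)| < N ^ 5) : β = 0 := by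
  have hN0 := h.scale_pos
  by_contra hβ
  have harea : β * area s u.F u.G = area s (u.comb α β γ) u.G - α * area s u.E u.G := by
    simp only [area, comb, zsmul_eq_mul, Prod.fst_add, Prod.fst_mul, Prod.fst_intCast,
      Prod.snd_add, Prod.snd_mul, Prod.snd_intCast]
    ring
  have : N ^ 24 ≤ 24 * N ^ 23 :=
    calc N ^ 24 = 1 * N ^ 24 := (one_mul _).symm
      _ ≤ |(β : ℝ)| * area s u.F u.G := by
        gcongr
        exacts [one_le_abs_cast hβ, h.le_area_FG]
      _ = |area s (u.comb α β γ) u.G - α * area s u.E u.G| := by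
        rw [← harea, abs_mul, abs_of_pos h.area_FG_pos]
      _ ≤ |area s (u.comb α β γ) u.G| + |α * area s u.E u.G| := abs_sub _ _
      _ ≤ 2 * ‖u.comb α β γ‖ * ‖u.G‖ + |(α : ℝ)| * area s u.E u.G := by
        rw [abs_mul, abs_of_pos h.area_EG_pos]
        gcongr
        exact abs_area_le h.abs_sign _ _
      _ ≤ 2 * N ^ 13 * (3 * N ^ 10) + N ^ 5 * (18 * N ^ 15) := by
        gcongr
        exacts [h.norm_G_le, h.area_EG_pos.le, by linarith [abs_nonneg (α : ℝ)], h.area_EG_le]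
      _ = 6 * N ^ 23 + 18 * N ^ 20 := by ring
      _ ≤ 6 * N ^ 23 + 18 * N ^ 23 := by
        gcongr
        exacts [by linarith [h.le_scale], by norm_num]
      _ = 24 * N ^ 23 := by ring
  linarith [const_mul_pow_le_pow (by norm_num) h.le_scale (show 23 < 24 by norm_num),
    pow_pos hN0 23]

lemma pow_le_abs_alpha (h : IsReduced N s u l) (hP : u.comb α β γ ∈ secondQuadrant)
    (hPN : ‖u.comb α β γ‖ ≤ N ^ 13) (hγ : γ ≠ 0) : N ^ 5 ≤ 3 * |(α : ℝ)| := by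
  by_contra! hlt
  -- Now `β = 0`, and `α • E` is too short to cancel `γ • G`.
  obtain rfl := h.beta_eq_zero_of_abs_alpha_lt hPN hlt
  rw [comb, zero_smul, add_zero] at hP
  have hN0 := h.scale_pos
  have hαγ : (α * γ : ℝ) < 0 :=
    (mul_neg_of_mem_secondQuadrant h.E_pos.1 h.E_pos.2 h.G_pos.1 h.G_pos.2 hP).resolve_left
      fun h0 => hγ h0.2
  have : N ^ 5 * N ^ 5 ≤ N ^ 5 * (3 * |(α : ℝ)|) :=
    calc N ^ 5 * N ^ 5 = 1 * N ^ 10 := by ring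
      _ ≤ |(γ : ℝ)| * N ^ 10 := by gcongr; exact one_le_abs_cast hγ
      _ ≤ |(α : ℝ)| * ‖u.E‖ :=
        abs_mul_le_of_mem_secondQuadrant h.fst_hasSize.G_mem.1 h.snd_hasSize.G_mem.1 hαγ hP
      _ ≤ |(α : ℝ)| * (3 * N ^ 5) := by gcongr; exact h.norm_E_le
      _ = N ^ 5 * (3 * |(α : ℝ)|) := by ring
  exact hlt.not_ge (le_of_mul_le_mul_left this (pow_pos hN0 5))

lemma one_le_abs_comb_mul_pow_of_norm_le_pow (h : IsReduced N s u l)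
    (hP : u.comb α β γ ∈ secondQuadrant) (hPN : ‖u.comb α β γ‖ ≤ N ^ 13) (hα : α ≠ 0)
    (hγ : γ ≠ 0) : 1 ≤ 108 * (|l.comb α β γ| * N ^ 19) := by
  have hPN' : 1024 * ‖u.comb α β γ‖ ≤ N ^ 16 := by
    linarith [const_mul_pow_le_pow (by norm_num) h.le_scale (show 13 < 16 by norm_num)]
  have : N ^ 5 * 1 ≤ N ^ 5 * (108 * (|l.comb α β γ| * N ^ 19)) := by
    linarith [h.pow_le_abs_alpha hP hPN hγ, h.abs_alpha_le_mul_pow hPN' hα]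
  exact le_of_mul_le_mul_left this (pow_pos h.scale_pos 5)

lemma one_le_abs_comb_mul_pow (h : IsReduced N s u l)
    (hP : u.comb α β γ ∈ secondQuadrant) (hP0 : u.comb α β γ ≠ 0)
    (hPN : 1024 * ‖u.comb α β γ‖ ≤ N ^ 16) : 1 ≤ 2 ^ 7 * (|l.comb α β γ| * N ^ 26) := by
  have hN1 : 1 ≤ N := by linarith [h.le_scale]
  rcases eq_or_ne α 0 with rfl | hα
  · have hβγ := h.beta_mul_gamma_neg_of_alpha_eq_zero hP hP0
    have hβ : β ≠ 0 := by rintro rfl; simp at hβγ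
    have hL : 0 ≤ |l.comb 0 β γ| * N ^ 26 := by positivity
    linarith [h.one_le_abs_comb_mul_pow_of_alpha_eq_zero hβ hβγ.le, hL]
  · calc (1 : ℝ) ≤ |(α : ℝ)| := one_le_abs_cast hα
      _ ≤ 36 * (|l.comb α β γ| * N ^ 24) := h.abs_alpha_le_mul_pow hPN hα
      _ ≤ 2 ^ 7 * (|l.comb α β γ| * N ^ 26) := by gcongr <;> norm_num

lemma exists_one_le_abs_comb_mul_pow (h : IsReduced N s u l)
    (hP : u.comb α β γ ∈ secondQuadrant) (hP0 : u.comb α β γ ≠ 0)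
    (hP₁ : N ^ 8 ≤ 1024 * ‖u.comb α β γ‖) (hP₂ : 1024 * ‖u.comb α β γ‖ ≤ N ^ 16) :
    ∃ k m : ℕ, 10 * m ≤ 19 * k ∧ N ^ k ≤ 1024 * ‖u.comb α β γ‖ ∧
      1 ≤ 2 ^ 7 * (|l.comb α β γ| * N ^ m) := by
  have hN0 := h.scale_pos
  have hL (m : ℕ) : 0 ≤ |l.comb α β γ| * N ^ m := by positivity
  rcases eq_or_ne α 0 with rfl | hα
  · have hβγ := h.beta_mul_gamma_neg_of_alpha_eq_zero hP hP0
    have hβ : β ≠ 0 := by rintro rfl; simp at hβγ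
    exact ⟨14, 26, by norm_num,
      by linarith [h.pow_le_norm_comb_of_alpha_eq_zero (γ := γ) hβ, norm_nonneg (u.comb 0 β γ)],
      by linarith [h.one_le_abs_comb_mul_pow_of_alpha_eq_zero hβ hβγ.le, hL 26]⟩
  rcases eq_or_ne γ 0 with rfl | hγ
  · exact ⟨8, 15, by norm_num, hP₁,
      by linarith [h.one_le_abs_comb_mul_pow_of_gamma_eq_zero hP hα, hL 15]⟩
  rcases le_total (1024 * ‖u.comb α β γ‖) (N ^ 10) with hP₁₀ | hP₁₀
  · exact ⟨8, 13, by norm_num, hP₁,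
      by linarith [h.one_le_abs_comb_mul_pow_of_gamma_ne_zero hP₁₀ hγ, hL 13]⟩
  rcases le_total ‖u.comb α β γ‖ (N ^ 13) with hP₁₃ | hP₁₃
  · exact ⟨10, 19, by norm_num, hP₁₀,
      by linarith [h.one_le_abs_comb_mul_pow_of_norm_le_pow hP hP₁₃ hα hγ, hL 19]⟩
  · exact ⟨13, 24, by norm_num, by linarith [norm_nonneg (u.comb α β γ)],
      by linarith [h.abs_alpha_le_mul_pow hP₂ hα, one_le_abs_cast hα, hL 24]⟩

end IsReduced

end Plane

end Triple

/-! ### The sequence of bases -/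

/-- The scale of the `i`-th basis; it is squared at every step. -/
def scale (i : ℕ) : ℤ := 2 ^ (10 * 2 ^ i)

lemma scale_zero : scale 0 = 2 ^ 10 := rfl

lemma scale_succ (i : ℕ) : scale (i + 1) = scale i ^ 2 := by
  rw [scale, scale, ← pow_mul, pow_succ, mul_assoc]

lemma one_le_scale (i : ℕ) : 1 ≤ (scale i : ℝ) := by
  rw [scale, Int.cast_pow]
  exact one_le_pow₀ (by norm_num)

lemma exists_lt_scale (T : ℝ) : ∃ i, T < scale i := by
  obtain ⟨n, hn⟩ := exists_nat_gt T
  have hpow : n ≤ 2 ^ (10 * 2 ^ n) := by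
    have := (Nat.lt_two_pow_self (n := n)).le
    have := (Nat.lt_two_pow_self (n := 10 * 2 ^ n)).le
    omega
  refine ⟨n, hn.trans_le ?_⟩
  rw [scale]
  exact_mod_cast hpow

lemma exists_scale_pow_le {T : ℝ} (hT : (scale 0 : ℝ) ^ 8 ≤ T) :
    ∃ i, (scale i : ℝ) ^ 8 ≤ T ∧ T ≤ (scale i : ℝ) ^ 16 := by
  classical
  have hex : ∃ i, T < (scale i : ℝ) ^ 8 := by
    obtain ⟨i, hi⟩ := exists_lt_scale T
    exact ⟨i, hi.trans_le (le_self_pow₀ (one_le_scale i) (by norm_num))⟩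
  obtain ⟨i, hi⟩ : ∃ i, Nat.find hex = i + 1 :=
    Nat.exists_eq_succ_of_ne_zero fun h0 => hT.not_gt (h0 ▸ Nat.find_spec hex)
  have hspec := Nat.find_spec hex
  rw [hi, scale_succ, Int.cast_pow, ← pow_mul] at hspec
  exact ⟨i, not_lt.1 (Nat.find_min hex (by omega)), hspec.le⟩

/-- The projection of `ℤ³` to the plane of the first two coordinates. -/
def proj : ℤ × ℤ × ℤ →+ ℝ × ℝ := AddMonoidHom.mk' (fun v => (v.1, v.2.1)) fun v w => by
  simp only [Prod.fst_add, Prod.snd_add, Int.cast_add, Prod.mk_add_mk]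

/-- The linear form `θ.1 * x + θ.2 * y + z` on `ℤ³`. -/
def form (θ : ℝ × ℝ) : ℤ × ℤ × ℤ →+ ℝ :=
  AddMonoidHom.mk' (fun v => θ.1 * v.1 + θ.2 * v.2.1 + v.2.2) fun v w => by
    simp only [Prod.fst_add, Prod.snd_add, Int.cast_add]
    ring

lemma proj_apply (v : ℤ × ℤ × ℤ) : proj v = ((v.1 : ℝ), (v.2.1 : ℝ)) := rfl

lemma form_apply (θ : ℝ × ℝ) (v : ℤ × ℤ × ℤ) :
    form θ v = θ.1 * v.1 + θ.2 * v.2.1 + v.2.2 := rfl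

/-- The initial basis of `ℤ³`, at scale `N = 2 ^ 10`: its vectors are `(N ^ 5 + 1, N ^ 5, 0)`,
`(N ^ 14 + N ^ 9 + 1, N ^ 14 + 1, 0)` and `(N ^ 10, 2 * N ^ 10, 1)`. -/
def base : Triple (ℤ × ℤ × ℤ) where
  E := (2 ^ 50 + 1, 2 ^ 50, 0)
  F := (2 ^ 140 + 2 ^ 90 + 1, 2 ^ 140 + 1, 0)
  G := (2 ^ 100, 2 ^ 101, 1)

/-- The sequence of bases of `ℤ³`, the `i`-th one at scale `scale i`. -/
def ladder : ℕ → Triple (ℤ × ℤ × ℤ)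
  | 0 => base
  | i + 1 => (ladder i).next (scale i)

lemma base_spans : base.Spans := by
  rintro ⟨x, y, z⟩
  refine ⟨(x - 2 ^ 100 * z) * (2 ^ 140 + 1) - (y - 2 ^ 101 * z) * (2 ^ 140 + 2 ^ 90 + 1),
    (2 ^ 50 + 1) * (y - 2 ^ 101 * z) - 2 ^ 50 * (x - 2 ^ 100 * z), z, ?_⟩
  simp only [Triple.comb, base, Prod.smul_mk, Prod.mk_add_mk, smul_eq_mul, Prod.mk.injEq]
  refine ⟨?_, ?_, ?_⟩ <;> ring

lemma ladder_spans (i : ℕ) : (ladder i).Spans := by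
  induction i with
  | zero => exact base_spans
  | succ i ih => exact ih.next _

lemma isAdapted_base : (base.map proj).IsAdapted (2 ^ 10) 1 := by
  constructor
  case fst_hasSize | snd_hasSize => constructor <;> norm_num [Triple.map, base, proj_apply]
  all_goals norm_num [Triple.map, base, proj_apply, area]

lemma isAdapted_ladder (i : ℕ) : ((ladder i).map proj).IsAdapted (scale i) ((-1) ^ i) := by
  induction i with
  | zero =>
    simpa only [ladder, scale_zero, Int.cast_pow, Int.cast_ofNat, pow_zero] using isAdapted_base
  | succ i ih =>
    rw [ladder, Triple.map_next, scale_succ, Int.cast_pow, pow_succ (-1), mul_neg_one]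
    exact ih.next

lemma det_base (θ : ℝ × ℝ) : Triple.det 1 (base.map proj) (base.map (form θ)) = 1 := by
  simp only [Triple.det, area, Triple.map, base, proj_apply, form_apply]
  push_cast
  ring

lemma det_ladder (θ : ℝ × ℝ) (i : ℕ) :
    Triple.det ((-1) ^ i) ((ladder i).map proj) ((ladder i).map (form θ)) = 1 := by
  induction i with
  | zero => exact det_base θ
  | succ i ih =>
    rw [ladder, Triple.map_next, Triple.map_next, pow_succ, mul_neg_one, Triple.det_next, ih]

/-! ### Existence of the linear form -/

/-- The coefficients of the linear forms with the prescribed signs on the `i`-th basis. -/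
def signCone (i : ℕ) : Set (ℝ × ℝ) := {θ | ((ladder i).map (form θ)).IsSigned}

lemma isClosed_signCone (i : ℕ) : IsClosed (signCone i) := by
  have hcont (v : ℤ × ℤ × ℤ) : Continuous fun θ => form θ v := by
    simp only [form_apply]
    fun_prop
  have : signCone i = {θ | 0 ≤ form θ (ladder i).E} ∩ {θ | form θ (ladder i).F ≤ 0} ∩
      {θ | 0 ≤ form θ (ladder i).G} :=
    Set.ext fun θ => ⟨fun h => ⟨⟨h.E_nonneg, h.F_nonpos⟩, h.G_nonneg⟩, fun h => ⟨h.1.1, h.1.2, h.2⟩⟩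
  rw [this]
  exact ((isClosed_le continuous_const (hcont _)).inter
    (isClosed_le (hcont _) continuous_const)).inter (isClosed_le continuous_const (hcont _))

lemma isDecaying_of_mem_signCone_succ {θ : ℝ × ℝ} {i : ℕ} (h : θ ∈ signCone (i + 1)) :
    ((ladder i).map (form θ)).IsDecaying (scale i) := by
  rw [signCone, Set.mem_ofPred_eq, ladder, Triple.map_next] at h
  exact h.isDecaying_of_next (one_le_scale i)

lemma signCone_zero_subset : signCone 0 ⊆ Set.Icc (-2 ^ 200, -2 ^ 200) (2 ^ 200, 2 ^ 200) := by
  rintro θ ⟨hE, hF, hG⟩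
  simp only [ladder, Triple.map, base, form_apply] at hE hF hG
  push_cast at hE hF hG
  refine ⟨⟨?_, ?_⟩, ?_, ?_⟩ <;> dsimp only <;> linarith

lemma signCone_nonempty (i : ℕ) : (signCone i).Nonempty := by
  set u := (ladder i).map proj
  have hpos : 0 < area ((-1) ^ i) u.F u.G := (isAdapted_ladder i).area_FG_pos
  obtain ⟨x, y, hF, hG⟩ := exists_mul_add_mul_eq (right_ne_zero_of_mul hpos.ne')
    (-(ladder i).F.2.2 : ℝ) (-(ladder i).G.2.2)
  have hF0 : ((ladder i).map (form (x, y))).F = 0 := by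
    change x * u.F.1 + y * u.F.2 + (ladder i).F.2.2 = 0
    linarith
  have hG0 : ((ladder i).map (form (x, y))).G = 0 := by
    change x * u.G.1 + y * u.G.2 + (ladder i).G.2.2 = 0
    linarith
  have hdet := det_ladder (x, y) i
  rw [Triple.det, hF0, hG0, zero_mul, zero_mul, sub_zero, add_zero] at hdet
  exact ⟨(x, y), nonneg_of_mul_nonneg_left (zero_le_one.trans hdet.ge) hpos, hF0.le, hG0.ge⟩

/-- The linear form with coefficients `θ` is reduced with respect to all bases of the ladder. -/
def IsAdmissible (θ : ℝ × ℝ) : Prop :=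
  ∀ i, Triple.IsReduced (scale i) ((-1) ^ i) ((ladder i).map proj) ((ladder i).map (form θ))

lemma exists_isAdmissible : ∃ θ, IsAdmissible θ := by
  obtain ⟨θ, hθ⟩ := IsCompact.nonempty_iInter_of_sequence_nonempty_isCompact_isClosed signCone
    (fun i _ h => (isDecaying_of_mem_signCone_succ h).toIsSigned) signCone_nonempty
    (isCompact_Icc.of_isClosed_subset (isClosed_signCone 0) signCone_zero_subset)
    isClosed_signCone
  rw [Set.mem_iInter] at hθ
  exact ⟨θ, fun i => ⟨isAdapted_ladder i, isDecaying_of_mem_signCone_succ (hθ (i + 1)),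
    det_ladder θ i⟩⟩

/-! ### The lower bound -/

lemma one_le_norm_proj {P : ℤ × ℤ × ℤ} (hP : proj P ≠ 0) : 1 ≤ ‖proj P‖ := by
  have hP' : P.1 ≠ 0 ∨ P.2.1 ≠ 0 := by
    by_contra! h
    simp [proj_apply, h] at hP
  rcases hP' with h | h
  · exact (one_le_abs_cast h).trans (norm_fst_le (proj P))
  · exact (one_le_abs_cast h).trans (norm_snd_le (proj P))

lemma pow_le_mul_rpow {N T σ : ℝ} {k m : ℕ} (hN : 1 ≤ N) (hT : 1 ≤ T) (hσ : 19 / 10 ≤ σ)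
    (hkm : 10 * m ≤ 19 * k) (h : N ^ k ≤ 1024 * T) : N ^ m ≤ 2 ^ 19 * T ^ σ := by
  have hkm' : (m : ℝ) ≤ k * (19 / 10) := by
    have : (10 * m : ℝ) ≤ 19 * k := by exact_mod_cast hkm
    linarith
  calc N ^ m = N ^ (m : ℝ) := (Real.rpow_natCast N m).symm
    _ ≤ N ^ ((k : ℝ) * (19 / 10)) := Real.rpow_le_rpow_of_exponent_le hN hkm'
    _ = (N ^ k) ^ (19 / 10 : ℝ) := by rw [Real.rpow_mul (by linarith), Real.rpow_natCast]
    _ ≤ (1024 * T) ^ (19 / 10 : ℝ) := Real.rpow_le_rpow (by positivity) h (by norm_num)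
    _ = 2 ^ 19 * T ^ (19 / 10 : ℝ) := by
      rw [Real.mul_rpow (by norm_num) (by linarith),
        show (1024 : ℝ) = 2 ^ (10 : ℝ) by norm_num, ← Real.rpow_mul (by norm_num)]
      norm_num
    _ ≤ 2 ^ 19 * T ^ σ := by gcongr

namespace IsAdmissible

variable {θ : ℝ × ℝ} {P : ℤ × ℤ × ℤ}

lemma eq_zero_of_form_eq_zero (hθ : IsAdmissible θ) (hP : form θ P = 0) : P = 0 := by
  obtain ⟨i, hi⟩ := exists_lt_scale (1024 * ‖proj P‖)
  obtain ⟨α, β, γ, rfl⟩ := ladder_spans i P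
  rw [← Triple.map_comb] at hP hi
  obtain ⟨rfl, rfl, rfl⟩ := (hθ i).eq_zero_of_comb_eq_zero
    (hi.le.trans (le_self_pow₀ (one_le_scale i) (by norm_num))) hP
  simp only [Triple.comb, zero_smul, add_zero]

lemma exists_one_le_abs_form_mul_pow (hθ : IsAdmissible θ) (hP : proj P ∈ secondQuadrant)
    (hP0 : proj P ≠ 0) (hN : (scale 0 : ℝ) ^ 8 ≤ 1024 * ‖proj P‖) :
    ∃ i k m : ℕ, 10 * m ≤ 19 * k ∧ (scale i : ℝ) ^ k ≤ 1024 * ‖proj P‖ ∧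
      1 ≤ 2 ^ 7 * (|form θ P| * (scale i : ℝ) ^ m) := by
  obtain ⟨i, hi₁, hi₂⟩ := exists_scale_pow_le hN
  obtain ⟨α, β, γ, rfl⟩ := ladder_spans i P
  simp only [← Triple.map_comb] at *
  exact ⟨i, (hθ i).exists_one_le_abs_comb_mul_pow hP hP0 hi₁ hi₂⟩

lemma one_le_abs_form_mul_pow (hθ : IsAdmissible θ) (hP : proj P ∈ secondQuadrant)
    (hP0 : proj P ≠ 0) (hN : 1024 * ‖proj P‖ ≤ (scale 0 : ℝ) ^ 16) :
    1 ≤ 2 ^ 7 * (|form θ P| * (scale 0 : ℝ) ^ 26) := by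
  obtain ⟨α, β, γ, rfl⟩ := ladder_spans 0 P
  rw [← Triple.map_comb] at *
  exact (hθ 0).one_le_abs_comb_mul_pow hP hP0 hN

lemma one_le_abs_form_mul_rpow (hθ : IsAdmissible θ) {σ : ℝ} (hσ : 19 / 10 ≤ σ)
    (hP : proj P ∈ secondQuadrant) (hP0 : proj P ≠ 0) :
    1 ≤ 2 ^ 300 * (|form θ P| * ‖proj P‖ ^ σ) := by
  have hT := one_le_norm_proj hP0
  rcases le_total (1024 * ‖proj P‖) ((scale 0 : ℝ) ^ 8) with hN | hN
  · have hTσ : 1 ≤ ‖proj P‖ ^ σ := Real.one_le_rpow hT (by linarith)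
    have hconst : (2 : ℝ) ^ 7 * (scale 0 : ℝ) ^ 26 ≤ 2 ^ 300 := by
      rw [scale_zero, Int.cast_pow, Int.cast_ofNat, ← pow_mul, ← pow_add]
      exact pow_le_pow_right₀ one_le_two (by norm_num)
    calc (1 : ℝ) ≤ 2 ^ 7 * (|form θ P| * (scale 0 : ℝ) ^ 26) := hθ.one_le_abs_form_mul_pow hP hP0
          (hN.trans (pow_le_pow_right₀ (one_le_scale 0) (by norm_num)))
      _ = 2 ^ 7 * (scale 0 : ℝ) ^ 26 * (|form θ P| * 1) := by ring
      _ ≤ 2 ^ 300 * (|form θ P| * ‖proj P‖ ^ σ) := by gcongr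
  · obtain ⟨i, k, m, hkm, hk, hm⟩ := hθ.exists_one_le_abs_form_mul_pow hP hP0 hN
    calc (1 : ℝ) ≤ 2 ^ 7 * (|form θ P| * (scale i : ℝ) ^ m) := hm
      _ ≤ 2 ^ 7 * (|form θ P| * (2 ^ 19 * ‖proj P‖ ^ σ)) := by
        gcongr
        exact pow_le_mul_rpow (one_le_scale i) hT hσ hkm hk
      _ = 2 ^ 26 * (|form θ P| * ‖proj P‖ ^ σ) := by ring
      _ ≤ 2 ^ 300 * (|form θ P| * ‖proj P‖ ^ σ) := by gcongr <;> norm_num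

end IsAdmissible

lemma nineteen_tenths_le_of_forall_root_le {σ : ℝ}
    (hσ : ∀ x : ℝ, x ^ 4 - 2 * x ^ 2 - 4 * x + 1 = 0 → x ≤ σ) : 19 / 10 ≤ σ := by
  obtain ⟨x, hx, hroot⟩ := intermediate_value_Icc (a := (19 / 10 : ℝ)) (b := 2) (by norm_num)
    (f := fun x => x ^ 4 - 2 * x ^ 2 - 4 * x + 1) (by fun_prop)
    (show (0 : ℝ) ∈ Set.Icc _ _ by constructor <;> norm_num)
  exact hx.1.trans (hσ x hroot)

theorem stmt16_general {σ : ℝ} (hσ : 19 / 10 ≤ σ) :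
    ∃ θ₁ θ₂ : ℝ,
      (∀ a b c : ℤ, (a : ℝ) * θ₁ + (b : ℝ) * θ₂ + (c : ℝ) = 0 →
        a = 0 ∧ b = 0 ∧ c = 0) ∧
      ∀ x₁ x₂ : ℤ, 0 ≤ x₁ → 0 ≤ x₂ → 0 < max x₁ x₂ →
        1 / (2 ^ 300 * ((max x₁ x₂ : ℤ) : ℝ) ^ σ) ≤ nint (θ₁ * x₁ + θ₂ * x₂) := by
  obtain ⟨θ, hθ⟩ := exists_isAdmissible
  refine ⟨-θ.1, θ.2, fun a b c h => ?_, fun x₁ x₂ h₁ h₂ hmax => ?_⟩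
  · have : form θ (-a, b, c) = 0 := by
      rw [form_apply]
      push_cast
      linarith
    simpa using hθ.eq_zero_of_form_eq_zero this
  · set P : ℤ × ℤ × ℤ := (-x₁, x₂, -round (-θ.1 * x₁ + θ.2 * x₂))
    have hform : nint (-θ.1 * x₁ + θ.2 * x₂) = |form θ P| := by
      rw [form_apply, nint]
      dsimp only [P]
      push_cast
      ring_nf
    have hnorm : ‖proj P‖ = ((max x₁ x₂ : ℤ) : ℝ) := by
      have : ‖proj P‖ = max ‖(x₁ : ℝ)‖ ‖(x₂ : ℝ)‖ := by simp [P, proj_apply]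
      rw [this, Real.norm_of_nonneg (by exact_mod_cast h₁),
        Real.norm_of_nonneg (by exact_mod_cast h₂), Int.cast_max]
    have hP0 : 0 < ‖proj P‖ := by rw [hnorm]; exact_mod_cast hmax
    have hP : proj P ∈ secondQuadrant := by
      simp [P, proj_apply, secondQuadrant, h₁, h₂]
    rw [hform, ← hnorm, div_le_iff₀ (by positivity)]
    exact (hθ.one_le_abs_form_mul_rpow hσ hP (norm_pos_iff.1 hP0)).trans_eq (mul_left_comm _ _ _)

/-- Moshchevitin's counterexample to W.M. Schmidt's conjecture. -/
theorem stmt16 (σ : ℝ) (hσ : σ ^ 4 - 2 * σ ^ 2 - 4 * σ + 1 = 0)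
    (hσmax : ∀ x : ℝ, x ^ 4 - 2 * x ^ 2 - 4 * x + 1 = 0 → x ≤ σ) :
    ∃ θ₁ θ₂ : ℝ,
      (∀ a b c : ℤ, (a : ℝ) * θ₁ + (b : ℝ) * θ₂ + (c : ℝ) = 0 →
        a = 0 ∧ b = 0 ∧ c = 0) ∧
      ∀ x₁ x₂ : ℤ, 0 ≤ x₁ → 0 ≤ x₂ → 2 ^ 200 ≤ max x₁ x₂ →
        1 / (2 ^ 300 * ((max x₁ x₂ : ℤ) : ℝ) ^ σ) ≤ nint (θ₁ * x₁ + θ₂ * x₂) := by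
  obtain ⟨θ₁, θ₂, hind, hbound⟩ :=
    stmt16_general (nineteen_tenths_le_of_forall_root_le hσmax)
  exact ⟨θ₁, θ₂, hind, fun x₁ x₂ h₁ h₂ h => hbound x₁ x₂ h₁ h₂ (lt_of_lt_of_le (by norm_num) h)⟩
end

section
/- Let θ_1, θ_2, θ_3 be real numbers such that 1, θ_1, θ_2, θ_3 are linearly independent over ℚ. Define ψ(t) = min over integers x with 0 < x ≤ t of max_{1≤j≤3} ‖xθ_j‖, and set ω = sup{ γ ≥ 0 : liminf_{t→∞} t^γ ψ(t) < ∞ } and ω̂ = sup{ γ ≥ 0 : limsup_{t→∞} t^γ ψ(t) < ∞ } (here ω̂ < 1 since the numbers are linearly independent). Then ω ≥ (ω̂/2) · ( ω̂/(1−ω̂) + √( (ω̂/(1−ω̂))² + 4ω̂/(1−ω̂) ) ). -/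
open Filter

/-- The irrationality measure function for simultaneous approximation to three reals:
`psi3 θ t = min_{x ∈ ℤ, 0 < x ≤ t} max_{1 ≤ j ≤ 3} ‖x θ_j‖`. -/
noncomputable def psi3 (θ : Fin 3 → ℝ) (t : ℝ) : ℝ :=
  sInf {v : ℝ | ∃ x : ℤ, 0 < x ∧ (x : ℝ) ≤ t ∧
    v = max (nint (x * θ 0)) (max (nint (x * θ 1)) (nint (x * θ 2)))}

/-!
Let `q j` be the denominators of the best approximations `z j` to `θ`, and `ζ j` the distance of
`q j • θ` to the integer lattice. Two consecutive best approximations form a basis of the integer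
points of their plane, and the area of their parallelogram is comparable to `ζ j * q (j + 1)`.

Since the `z j` span at least four dimensions, there are arbitrarily late indices `i < k` such that
`z i`, `z k`, `z (k + 1)`, `z (k + 2)` are independent while `z (i + 1), …, z (k + 1)` lie in one
plane. The area of the last parallelogram of this coplanar run is at most a constant times that of
the first, and some `4 × 4` minor of the four independent points is a nonzero integer; together
`q (k + 1) ≪ ζ i * (ζ (i + 1) * q (i + 2)) * (ζ (k + 1) * q (k + 2))`.

If `α` is a uniform exponent then `ζ j ≪ q (j + 1) ^ (-α)`, and if `β = α * g` is not an ordinary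
exponent then moreover `q (j + 1) ≪ q j ^ g`. Inserting both gives an upper bound for `q (i + 2)`,
which is absurd, unless `(1 - α) * g ^ 2 ≥ α * (g + 1)`. The positive root of this quadratic gives
the claimed bound.
-/

open Module Submodule

section LinearAlgebra

theorem exists_last_not {p : ℕ → Prop} {a b : ℕ} (hab : a ≤ b) (ha : ¬p a) :
    ∃ i, a ≤ i ∧ i ≤ b ∧ ¬p i ∧ ∀ l, i < l → l ≤ b → p l := by
  classical
  refine ⟨Nat.findGreatest (¬p ·) b, Nat.le_findGreatest hab ha, Nat.findGreatest_le b,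
    Nat.findGreatest_spec (P := (¬p ·)) hab ha, fun l hil hlb => ?_⟩
  exact not_not.1 (Nat.findGreatest_is_greatest hil hlb)

variable {K V : Type*} [DivisionRing K] [AddCommGroup V] [Module K V]

theorem finrank_span_triple_le (a b c : V) : Set.finrank K {a, b, c} ≤ 3 := by
  classical
  have h := finrank_span_finset_le_card (R := K) {a, b, c}
  simp only [Finset.coe_insert, Finset.coe_singleton] at h
  exact h.trans Finset.card_le_three

theorem exists_finrank_span_image_Icc_eq [FiniteDimensional K V] (z : ℕ → V) (N : ℕ) :
    ∃ m, Set.finrank K (z '' Set.Icc N m) = Set.finrank K (z '' Set.Ici N) := by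
  let W : ℕ →o Submodule K V :=
    ⟨fun m => span K (z '' Set.Icc N m),
      fun _ _ h => span_mono (Set.image_mono (Set.Icc_subset_Icc_right h))⟩
  obtain ⟨m, hm⟩ := WellFoundedGT.monotone_chain_condition W
  refine ⟨m, congrArg (fun U : Submodule K V => finrank K U) (le_antisymm ?_ ?_)⟩
  · exact span_mono (Set.image_mono Set.Icc_subset_Ici_self)
  · rw [span_le]
    rintro _ ⟨l, hl, rfl⟩
    have hmem : z l ∈ W (max m l) := subset_span ⟨l, ⟨hl, le_max_right _ _⟩, rfl⟩
    rwa [← hm _ (le_max_left _ _)] at hmem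

/-- `k + 2` is the first index at which the vectors from `z N` on span four dimensions. -/
theorem exists_first_jump_to_four [FiniteDimensional K V] (z : ℕ → V) {N : ℕ}
    (hrank : 4 ≤ Set.finrank K (z '' Set.Ici N)) :
    ∃ k, z (k + 2) ∉ span K (z '' Set.Icc N (k + 1)) ∧
      ∃ i, N ≤ i ∧ i < k ∧ z i ∉ span K {z k, z (k + 1)} := by
  classical
  have hex : ∃ m, 4 ≤ Set.finrank K (z '' Set.Icc N m) :=
    (exists_finrank_span_image_Icc_eq z N).imp fun _ hm => hrank.trans_eq hm.symm
  have not_le_triple {m : ℕ} (hm : 4 ≤ Set.finrank K (z '' Set.Icc N m)) (a b c : V) :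
      ¬ ∀ l, N ≤ l → l ≤ m → z l ∈ span K {a, b, c} := fun h => by
    have hle : span K (z '' Set.Icc N m) ≤ span K {a, b, c} :=
      span_le.2 <| Set.image_subset_iff.2 fun l hl => h l hl.1 hl.2
    exact absurd (hm.trans (finrank_mono hle)) (finrank_span_triple_le a b c).not_gt
  obtain ⟨m, hm, hmin⟩ : ∃ m, 4 ≤ Set.finrank K (z '' Set.Icc N m) ∧
      ∀ l < m, ¬ 4 ≤ Set.finrank K (z '' Set.Icc N l) :=
    ⟨Nat.find hex, Nat.find_spec hex, fun _ => Nat.find_min hex⟩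
  have hNm : N + 2 ≤ m := by
    by_contra! hlt
    refine not_le_triple hm (z N) (z (N + 1)) 0 fun l hNl hlm => subset_span ?_
    obtain rfl | rfl : l = N ∨ l = N + 1 := by omega
    all_goals simp
  obtain ⟨k, rfl⟩ : ∃ k, m = k + 2 := ⟨m - 2, by omega⟩
  refine ⟨k, fun hmem => hmin (k + 1) (by omega) (hm.trans (finrank_mono ?_)), ?_⟩
  · rw [span_le, Set.image_subset_iff]
    rintro l ⟨hNl, hlk⟩
    obtain rfl | hlk := hlk.eq_or_lt
    exacts [hmem, subset_span ⟨l, ⟨hNl, by omega⟩, rfl⟩]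
  · by_contra! hplane
    refine not_le_triple hm (z (k + 2)) (z k) (z (k + 1)) fun l hNl hlm => ?_
    rcases lt_or_ge l k with hlk | hkl
    · exact span_mono (Set.subset_insert _ _) (hplane l hNl hlk)
    · obtain rfl | rfl | rfl : l = k ∨ l = k + 1 ∨ l = k + 2 := by omega
      all_goals exact subset_span (by simp)

theorem exists_linearIndependent_quadruple [FiniteDimensional K V] (z : ℕ → V)
    (hpair : ∀ j, LinearIndependent K ![z j, z (j + 1)]) {N : ℕ}
    (hrank : 4 ≤ Set.finrank K (z '' Set.Ici N)) :
    ∃ i k, N ≤ i ∧ i < k ∧ (∀ l, i < l → l ≤ k + 1 → z l ∈ span K {z k, z (k + 1)}) ∧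
      LinearIndependent K ![z (k + 2), z i, z k, z (k + 1)] := by
  obtain ⟨k, hk, i₀, hNi₀, hi₀k, hi₀⟩ := exists_first_jump_to_four z hrank
  obtain ⟨i, hi₀i, hik, hi, hplane⟩ :=
    exists_last_not (p := fun l => z l ∈ span K {z k, z (k + 1)}) hi₀k.le hi₀
  have hik : i < k := hik.lt_of_ne fun h => hi (h ▸ subset_span (by simp))
  refine ⟨i, k, hNi₀.trans hi₀i, hik, fun l hil hlk => ?_, ?_⟩
  · rcases hlk.lt_or_eq with hlk | rfl
    exacts [hplane l hil (by omega), subset_span (by simp)]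
  · refine linearIndependent_finCons.2 ⟨linearIndependent_finCons.2 ⟨hpair k, ?_⟩, fun hmem => ?_⟩
    · simpa [Matrix.range_cons, Set.pair_comm] using hi
    · refine hk (span_mono ?_ hmem)
      rintro _ ⟨l, rfl⟩
      fin_cases l
      exacts [⟨i, ⟨by omega, by omega⟩, rfl⟩, ⟨k, ⟨by omega, by omega⟩, rfl⟩,
        ⟨k + 1, ⟨by omega, by omega⟩, rfl⟩]

end LinearAlgebra

section Determinant

variable {m : Type*} [Fintype m] [DecidableEq m]

theorem abs_det_le_of_abs_le_mul {A : Matrix m m ℝ} {x y : m → ℝ}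
    (hA : ∀ i j, |A i j| ≤ x i * y j) :
    |A.det| ≤ (Fintype.card m).factorial * ((∏ i, x i) * ∏ j, y j) := by
  have hterm (σ : Equiv.Perm m) :
      |((Equiv.Perm.sign σ : ℤ) : ℝ) * ∏ j, A (σ j) j| ≤ (∏ i, x i) * ∏ j, y j :=
    calc |((Equiv.Perm.sign σ : ℤ) : ℝ) * ∏ j, A (σ j) j| = ∏ j, |A (σ j) j| := by
          rw [abs_mul, ← Int.cast_abs, Equiv.Perm.sign_abs, Int.cast_one, one_mul,
            Finset.abs_prod]
      _ ≤ ∏ j, x (σ j) * y j := Finset.prod_le_prod (fun _ _ => abs_nonneg _) fun _ _ => hA _ _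
      _ = (∏ i, x i) * ∏ j, y j := by rw [Finset.prod_mul_distrib, Equiv.prod_comp σ x]
  rw [Matrix.det_apply']
  calc |∑ σ : Equiv.Perm m, ((Equiv.Perm.sign σ : ℤ) : ℝ) * ∏ j, A (σ j) j|
      ≤ ∑ _σ : Equiv.Perm m, (∏ i, x i) * ∏ j, y j :=
        (Finset.abs_sum_le_sum_abs _ _).trans (Finset.sum_le_sum fun σ _ => hterm σ)
    _ = (Fintype.card m).factorial * ((∏ i, x i) * ∏ j, y j) := by
        simp only [Finset.sum_const, Finset.card_univ, Fintype.card_perm, nsmul_eq_mul]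

theorem exists_det_submatrix_ne_zero {n K : Type*} [Finite n] [Field K] {M : Matrix m n K}
    (hM : LinearIndependent K M.row) {i : m} {c : n} (hc : M i c ≠ 0) :
    ∃ f : m ↪ n, c ∈ Set.range f ∧ (M.submatrix id f).det ≠ 0 := by
  have := Fintype.ofFinite n
  have hsingle : LinearIndepOn K M.col {c} :=
    LinearIndepOn.singleton fun h0 => hc (congrFun h0 i)
  obtain ⟨b, -, hcb, hspan, hb⟩ := exists_linearIndepOn_extension hsingle (Set.subset_univ _)
  have := Fintype.ofFinite b
  have hrange : span K (Set.range M.col) = span K (Set.range fun j : b => M.col j) := by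
    rw [← Set.image_eq_range, ← Set.image_univ]
    exact le_antisymm (span_le.2 hspan) (span_mono (Set.image_mono (Set.subset_univ b)))
  have hcard : Fintype.card m = Fintype.card b := by
    rw [← hM.rank_matrix, M.rank_eq_finrank_span_cols, hrange, finrank_span_eq_card hb]
  let e : m ≃ b := Fintype.equivOfCardEq hcard
  refine ⟨e.toEmbedding.trans (.subtype _), ⟨e.symm ⟨c, hcb rfl⟩, by simp⟩, ?_⟩
  have hcols : LinearIndependent K (M.submatrix id (e.toEmbedding.trans (.subtype _))).col :=
    hb.comp e e.injective
  exact ((Matrix.isUnit_iff_isUnit_det _).1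
    (Matrix.linearIndependent_cols_iff_isUnit.1 hcols)).ne_zero

end Determinant

section Records

variable {R : Type*} [LinearOrder R] {d : ℕ → R} {q : ℕ → ℕ}

/-- The positive integer `n` is a record of `d` if `d n` is smaller than all `d x`, `0 < x < n`. -/
def IsRecord (d : ℕ → R) (n : ℕ) : Prop :=
  0 < n ∧ ∀ x, 0 < x → x < n → d n < d x

theorem exists_isRecord_le (d : ℕ → R) {x : ℕ} (hx : 0 < x) :
    ∃ n, IsRecord d n ∧ n ≤ x ∧ d n ≤ d x := by
  induction x using Nat.strong_induction_on with
  | h x ih =>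
    by_cases hrec : IsRecord d x
    · exact ⟨x, hrec, le_rfl, le_rfl⟩
    · obtain ⟨y, hy, hyx, hd⟩ : ∃ y, 0 < y ∧ y < x ∧ d y ≤ d x := by
        simpa only [IsRecord, hx, true_and, not_forall, not_lt, exists_prop] using hrec
      obtain ⟨n, hn, hny, hdn⟩ := ih y hyx hy
      exact ⟨n, hn, hny.trans hyx.le, hdn.trans hd⟩

theorem infinite_setOf_isRecord (hd : ∀ m, 0 < m → ∃ n, 0 < n ∧ d n < d m) :
    {n | IsRecord d n}.Infinite := fun hfin => by
  obtain ⟨n₁, hn₁, -⟩ := exists_isRecord_le d one_pos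
  obtain ⟨m, hm, hmin⟩ := Set.exists_min_image _ d hfin ⟨n₁, hn₁⟩
  obtain ⟨x, hx, hxm⟩ := hd m hm.1
  obtain ⟨n, hn, -, hnx⟩ := exists_isRecord_le d hx
  exact absurd (hmin n hn) (hnx.trans_lt hxm).not_ge

/-- `q` is the increasing sequence of the records of `d`; for `d = latticeDist θ` these are the
denominators of the best approximations to `θ`. -/
structure IsRecordSeq (d : ℕ → R) (q : ℕ → ℕ) : Prop where
  strictMono : StrictMono q
  pos : ∀ j, 0 < q j
  lt : ∀ j, d (q (j + 1)) < d (q j)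
  le : ∀ j x, 0 < x → x < q (j + 1) → d (q j) ≤ d x

theorem exists_isRecordSeq (hd : ∀ m, 0 < m → ∃ n, 0 < n ∧ d n < d m) :
    ∃ q, IsRecordSeq d q := by
  have hinf := infinite_setOf_isRecord hd
  have hmono : StrictMono (Nat.nth (IsRecord d)) := Nat.nth_strictMono hinf
  have hrec (j : ℕ) : IsRecord d (Nat.nth (IsRecord d) j) := Nat.nth_mem_of_infinite hinf j
  have hlt (j : ℕ) : d (Nat.nth (IsRecord d) (j + 1)) < d (Nat.nth (IsRecord d) j) :=
    (hrec _).2 _ (hrec j).1 (hmono j.lt_succ_self)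
  refine ⟨Nat.nth (IsRecord d), hmono, fun j => (hrec j).1, hlt, fun j x hx hxj => ?_⟩
  obtain ⟨n, hn, hnx, hdn⟩ := exists_isRecord_le d hx
  obtain hnj | hnj := (Nat.le_nth_of_lt_nth_succ (hnx.trans_lt hxj) hn).lt_or_eq
  · exact ((hrec j).2 n hn.1 hnj).le.trans hdn
  · exact hnj ▸ hdn

namespace IsRecordSeq

theorem cast_pos (h : IsRecordSeq d q) (j : ℕ) : (0 : ℝ) < q j :=
  Nat.cast_pos.2 (h.pos j)

theorem cast_lt (h : IsRecordSeq d q) (j : ℕ) : (q j : ℝ) < q (j + 1) :=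
  Nat.cast_lt.2 (h.strictMono j.lt_succ_self)

theorem antitone (h : IsRecordSeq d q) : Antitone fun j => d (q j) :=
  antitone_nat_of_succ_le fun j => (h.lt j).le

theorem tendsto_cast (h : IsRecordSeq d q) : Tendsto (fun j => (q j : ℝ)) atTop atTop :=
  tendsto_natCast_atTop_atTop.comp h.strictMono.tendsto_atTop

end IsRecordSeq

end Records

section LatticePoints

variable {ι : Type*}

/-- The error vector `p - x θ` of the lattice point `w = (x, p)`. Lattice points are indexed by
`Option ι`, with the denominator `x` at `none`. -/
def approxErr (θ : ι → ℝ) (w : Option ι → ℤ) : ι → ℝ :=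
  fun j => w (some j) - w none * θ j

/-- The lattice point with denominator `x` whose other coordinates are nearest to `x θ`. -/
noncomputable def nearestPoint (θ : ι → ℝ) (x : ℕ) : Option ι → ℤ :=
  fun i => i.elim (x : ℤ) fun j => round (x * θ j)

/-- The lattice point `nearestPoint θ x` as a vector over `ℚ`, where its span is taken. -/
noncomputable def nearestPointRat (θ : ι → ℝ) (x : ℕ) : Option ι → ℚ :=
  fun i => nearestPoint θ x i

/-- The minors of the pair `u`, `v` that involve the denominators. Their maximum is comparable to
the area of the parallelogram spanned by two consecutive best approximations. -/
def denomMinors (u v : Option ι → ℤ) : ι → ℤ :=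
  fun j => u none * v (some j) - v none * u (some j)

@[simp]
theorem nearestPoint_none (θ : ι → ℝ) (x : ℕ) : nearestPoint θ x none = x := rfl

theorem nint_natAbs_mul_le (θ : ι → ℝ) (w : Option ι → ℤ) (j : ι) :
    nint ((w none).natAbs * θ j) ≤ |approxErr θ w j| := by
  obtain ⟨ε, hε, hw⟩ : ∃ ε : ℤ, |(ε : ℝ)| = 1 ∧ ((w none).natAbs : ℤ) = ε * w none := by
    rcases Int.natAbs_eq (w none) with h | h
    · exact ⟨1, by simp, by omega⟩
    · exact ⟨-1, by simp, by omega⟩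
  have hw : ((w none).natAbs : ℝ) = ε * w none := by
    rw [← Int.cast_natCast, hw, Int.cast_mul]
  calc nint ((w none).natAbs * θ j)
      ≤ |(w none).natAbs * θ j - (ε * w (some j) : ℤ)| := round_le _ _
    _ = |(ε : ℝ)| * |approxErr θ w j| := by
        rw [hw, ← abs_mul, abs_sub_comm, approxErr]
        push_cast
        ring_nf
    _ = |approxErr θ w j| := by rw [hε, one_mul]

theorem cast_denomMinors (θ : ι → ℝ) (u v : Option ι → ℤ) :
    (fun j => (denomMinors u v j : ℝ)) =
      (u none : ℝ) • approxErr θ v - (v none : ℝ) • approxErr θ u := by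
  ext j
  simp only [denomMinors, approxErr, Pi.sub_apply, Pi.smul_apply, smul_eq_mul]
  push_cast
  ring

theorem denomMinors_linear_combination (a b c d : ℤ) (u v : Option ι → ℤ) :
    denomMinors (a • u + b • v) (c • u + d • v) = (a * d - b * c) • denomMinors u v := by
  ext j
  simp only [denomMinors, Pi.add_apply, Pi.smul_apply, smul_eq_mul]
  ring

theorem linearIndependent_of_denomMinors_ne_zero {u v : Option ι → ℤ} (hu : u none ≠ 0)
    (huv : denomMinors u v ≠ 0) :
    LinearIndependent ℚ ![fun i => (u i : ℚ), fun i => (v i : ℚ)] := by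
  refine (LinearIndependent.pair_iff' fun h => hu (by simpa using congrFun h none)).2
    fun a ha => huv (funext fun j => ?_)
  have hv (i : Option ι) : (v i : ℚ) = a * u i := (congrFun ha i).symm
  have hj : (denomMinors u v j : ℚ) = 0 := by
    simp only [denomMinors]
    push_cast
    rw [hv, hv]
    ring
  exact_mod_cast hj

variable [Fintype ι]

/-- The distance `max_j ‖x θ_j‖` of `x θ` to the integer lattice; the sup norm of `ι → ℝ` is the
maximum over `j`. -/
noncomputable def latticeDist (θ : ι → ℝ) (x : ℕ) : ℝ :=
  ‖fun j => nint (x * θ j)‖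

/-- The irrationality measure function `ψ` of a finite family of reals; `psi3` is the case of
three numbers. -/
noncomputable def psi (θ : ι → ℝ) (t : ℝ) : ℝ :=
  sInf (latticeDist θ '' {x | 0 < x ∧ (x : ℝ) ≤ t})

theorem norm_approxErr_nearestPoint (θ : ι → ℝ) (x : ℕ) :
    ‖approxErr θ (nearestPoint θ x)‖ = latticeDist θ x := by
  have h (j : ι) : ‖approxErr θ (nearestPoint θ x) j‖₊ = ‖nint (x * θ j)‖₊ := by
    ext
    simp [approxErr, nearestPoint, nint, abs_sub_comm]
  simp only [latticeDist, Pi.norm_def, h]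

theorem latticeDist_natAbs_le (θ : ι → ℝ) (w : Option ι → ℤ) :
    latticeDist θ (w none).natAbs ≤ ‖approxErr θ w‖ := by
  refine (pi_norm_le_iff_of_nonneg (norm_nonneg _)).2 fun j => ?_
  calc ‖nint ((w none).natAbs * θ j)‖ = nint ((w none).natAbs * θ j) := abs_abs _
    _ ≤ ‖approxErr θ w j‖ := nint_natAbs_mul_le θ w j
    _ ≤ ‖approxErr θ w‖ := norm_le_pi_norm _ j

theorem latticeDist_nonneg (θ : ι → ℝ) (x : ℕ) : 0 ≤ latticeDist θ x := norm_nonneg _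

theorem latticeDist_le_half (θ : ι → ℝ) (x : ℕ) : latticeDist θ x ≤ 1 / 2 :=
  (pi_norm_le_iff_of_nonneg one_half_pos.le).2 fun _ => (abs_abs _).trans_le (abs_sub_round _)

theorem norm_intCast_comp (m : ι → ℤ) : ‖fun j => (m j : ℝ)‖ = ‖m‖ := rfl

theorem norm_denomMinors_le {u v : Option ι → ℤ} (θ : ι → ℝ) :
    ‖denomMinors u v‖ ≤ |(u none : ℝ)| * ‖approxErr θ v‖ + |(v none : ℝ)| * ‖approxErr θ u‖ := by
  rw [← norm_intCast_comp, cast_denomMinors θ]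
  exact (norm_sub_le _ _).trans_eq (by simp only [norm_smul, Real.norm_eq_abs])

theorem abs_sub_le_norm_denomMinors (u v : Option ι → ℤ) (θ : ι → ℝ) :
    |(|(u none : ℝ)| * ‖approxErr θ v‖ - |(v none : ℝ)| * ‖approxErr θ u‖)| ≤
      ‖denomMinors u v‖ := by
  simp only [← norm_intCast_comp, cast_denomMinors θ, ← Real.norm_eq_abs (Int.cast _), ← norm_smul]
  exact abs_norm_sub_norm_le _ _

theorem psi_le_latticeDist (θ : ι → ℝ) {t : ℝ} {x : ℕ} (hx : 0 < x) (hxt : x ≤ t) :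
    psi θ t ≤ latticeDist θ x := by
  refine csInf_le ⟨0, ?_⟩ ⟨x, ⟨hx, hxt⟩, rfl⟩
  rintro _ ⟨y, -, rfl⟩
  exact latticeDist_nonneg θ y

theorem nonempty_image_latticeDist (θ : ι → ℝ) {t : ℝ} (ht : 1 ≤ t) :
    (latticeDist θ '' {x | 0 < x ∧ (x : ℝ) ≤ t}).Nonempty :=
  ⟨_, 1, ⟨one_pos, by simpa using ht⟩, rfl⟩

theorem psi3_eq_psi (θ : Fin 3 → ℝ) : psi3 θ = psi θ := by
  have hdist (x : ℕ) : latticeDist θ x =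
      max (nint (x * θ 0)) (max (nint (x * θ 1)) (nint (x * θ 2))) := by
    have hnorm (j : Fin 3) : ‖nint (x * θ j)‖ = nint (x * θ j) := abs_abs _
    refine eq_of_forall_ge_iff fun b => ?_
    rw [latticeDist, pi_norm_le_iff_of_nonempty]
    simp only [hnorm, Fin.forall_fin_succ, max_le_iff]
    simp
  funext t
  refine congrArg sInf (Set.ext fun v => ⟨?_, ?_⟩)
  · rintro ⟨x, hx, hxt, rfl⟩
    lift x to ℕ using hx.le
    exact ⟨x, ⟨mod_cast hx, mod_cast hxt⟩, hdist x⟩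
  · rintro ⟨x, ⟨hx, hxt⟩, rfl⟩
    exact ⟨x, mod_cast hx, mod_cast hxt, hdist x⟩

end LatticePoints

section Rank

variable {ι : Type*} [Fintype ι] {θ : ι → ℝ}

theorem latticeDist_pos (hrank : 2 ≤ Set.finrank ℚ (insert 1 (Set.range θ))) {x : ℕ}
    (hx : 0 < x) : 0 < latticeDist θ x := by
  refine (latticeDist_nonneg θ x).lt_of_ne' fun h0 => ?_
  have hrational (j : ι) : θ j = (round (x * θ j) / x : ℚ) • (1 : ℝ) := by
    have hj : nint (x * θ j) = 0 := congrFun (norm_eq_zero.1 h0) j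
    rw [Rat.smul_one_eq_cast]
    push_cast
    rw [eq_div_iff (by positivity)]
    linarith [abs_eq_zero.1 hj]
  have hle : span ℚ (insert 1 (Set.range θ)) ≤ span ℚ {1} := by
    rw [span_le, Set.insert_subset_iff]
    refine ⟨mem_span_singleton_self 1, ?_⟩
    rintro _ ⟨j, rfl⟩
    exact mem_span_singleton.2 ⟨_, (hrational j).symm⟩
  have h1 := hrank.trans (finrank_mono hle)
  rw [finrank_span_singleton one_ne_zero] at h1
  omega

/-- A nonzero value of the form at `(1, θ)` would make its value at `nearestPoint θ x` grow
linearly in `x`. -/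
theorem linearCombination_eq_zero_of_infinite (c : Option ι → ℚ) {S : Set ℕ} (hS : S.Infinite)
    (hc : ∀ x ∈ S, ∑ i, c i * nearestPointRat θ x i = 0) :
    ∑ i, c i • (i.elim 1 θ : ℝ) = 0 := by
  by_contra hL
  set L : ℝ := ∑ i, c i • (i.elim 1 θ : ℝ) with hLdef
  have hbound (x : ℕ) (hx : x ∈ S) : x * |L| ≤ ∑ j, |(c (some j) : ℝ)| := by
    have herr : x * L = -∑ j, c (some j) * approxErr θ (nearestPoint θ x) j := by
      have h0 : (∑ i, c i * nearestPoint θ x i : ℝ) = 0 := by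
        exact_mod_cast congrArg (Rat.cast (K := ℝ)) (hc x hx)
      rw [Fintype.sum_option, nearestPoint_none, Int.cast_natCast] at h0
      simp only [hLdef, Fintype.sum_option, Rat.smul_def, Option.elim, approxErr, mul_sub,
        Finset.sum_sub_distrib, nearestPoint_none, Int.cast_natCast, mul_add, Finset.mul_sum]
      simp only [mul_left_comm (x : ℝ)]
      linarith
    calc x * |L| = |∑ j, c (some j) * approxErr θ (nearestPoint θ x) j| := by
          rw [← Nat.abs_cast x, ← abs_mul, herr, abs_neg]
      _ ≤ ∑ j, |c (some j) * approxErr θ (nearestPoint θ x) j| := Finset.abs_sum_le_sum_abs _ _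
      _ ≤ ∑ j, |(c (some j) : ℝ)| := Finset.sum_le_sum fun j _ => by
          have hj := norm_le_pi_norm (approxErr θ (nearestPoint θ x)) j
          rw [norm_approxErr_nearestPoint, Real.norm_eq_abs] at hj
          rw [abs_mul]
          exact mul_le_of_le_one_right (abs_nonneg _) (by linarith [latticeDist_le_half θ x])
  obtain ⟨B, hB⟩ := exists_nat_gt ((∑ j, |(c (some j) : ℝ)|) / |L|)
  obtain ⟨x, hx, hBx⟩ := hS.exists_gt B
  have hBx : (B : ℝ) < x := Nat.cast_lt.2 hBx
  exact absurd (hbound x hx) ((div_lt_iff₀ (abs_pos.2 hL)).1 (hB.trans hBx)).not_ge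

theorem finrank_le_finrank_span_nearestPoint {ι : Type*} [Finite ι] (θ : ι → ℝ)
    {S : Set ℕ} (hS : S.Infinite) :
    Set.finrank ℚ (insert 1 (Set.range θ)) ≤ Set.finrank ℚ (nearestPointRat θ '' S) := by
  have := Fintype.ofFinite ι
  let e := (Pi.basisFun ℚ (Option ι)).constr (M' := ℚ) ℚ
  let eval : Dual ℚ (Option ι → ℚ) →ₗ[ℚ] ℝ :=
    Fintype.linearCombination ℚ (fun i : Option ι => i.elim 1 θ) ∘ₗ e.symm.toLinearMap
  have hrange : LinearMap.range eval = span ℚ (insert 1 (Set.range θ)) := by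
    rw [LinearEquiv.range_comp, Fintype.range_linearCombination, Option.range_elim]
  set W := span ℚ (nearestPointRat θ '' S)
  have hker : W.dualAnnihilator ≤ LinearMap.ker eval := fun f hf => by
    refine linearCombination_eq_zero_of_infinite (e.symm f) hS fun x hx => ?_
    have hfx : f (nearestPointRat θ x) = 0 :=
      (mem_dualAnnihilator f).1 hf _ (subset_span ⟨x, hx, rfl⟩)
    rw [← e.apply_symm_apply f, Basis.constr_apply_fintype] at hfx
    simpa [mul_comm] using hfx
  have hdual := eval.finrank_range_add_finrank_ker
  rw [hrange, Subspace.dual_finrank_eq, ← Subspace.finrank_add_finrank_dualAnnihilator_eq W]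
    at hdual
  have := finrank_mono hker
  change finrank ℚ (span ℚ (insert 1 (Set.range θ))) ≤ finrank ℚ W
  omega

end Rank

section Minors

variable {ι m : Type*} [Fintype m]

/-- Subtracting multiples of the denominator column turns the other columns of a minor into
approximation errors. -/
theorem det_submatrix_eq_det_approxErr [DecidableEq m] (θ : ι → ℝ) (w : m → Option ι → ℤ)
    {f : m → Option ι} {k : m} (hk : f k = none) :
    (Matrix.of fun r i => (w r (f i) : ℝ)).det =
      (Matrix.of fun r i => (f i).elim (w r none : ℝ) (approxErr θ (w r))).det := by
  rw [← Matrix.det_transpose, ← Matrix.det_transpose (Matrix.of fun r i => (f i).elim _ _)]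
  refine Matrix.det_eq_of_forall_row_eq_smul_add_const (fun i => (f i).elim 0 θ) k
    (by rw [hk]; rfl) fun i r => ?_
  cases hi : f i <;> simp [hi, hk, approxErr, mul_comm]

variable [Fintype ι] {θ : ι → ℝ}

theorem one_le_of_linearIndependent {w : m → Option ι → ℤ}
    (hw : LinearIndependent ℚ fun r i => (w r i : ℚ)) {r₀ : m} (hr₀ : w r₀ none ≠ 0)
    {Z : m → ℝ} {T : ℝ} (hZ : ∀ r, ‖approxErr θ (w r)‖ ≤ Z r)
    (hT : ∀ r, |(w r none : ℝ)| ≤ Z r * T) :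
    1 ≤ (Fintype.card m).factorial * ((∏ r, Z r) * T) := by
  classical
  obtain ⟨f, ⟨k, hk⟩, hdet⟩ := exists_det_submatrix_ne_zero
    (M := Matrix.of fun r i => (w r i : ℚ)) hw (i := r₀) (c := none)
    (Int.cast_ne_zero.2 hr₀)
  have hcast : ((Matrix.of fun r i => w r (f i)).det : ℚ) ≠ 0 := by
    rw [Int.cast_det]
    exact hdet
  have hone : (1 : ℝ) ≤ |((Matrix.of fun r i => w r (f i)).det : ℝ)| :=
    mod_cast Int.one_le_abs (Int.cast_ne_zero.1 hcast)
  have hentry (r i : m) :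
      |(f i).elim (w r none : ℝ) (approxErr θ (w r))| ≤ Z r * if i = k then T else 1 := by
    split_ifs with hi
    · simpa [hi, hk] using hT r
    · obtain ⟨j, hj⟩ := Option.ne_none_iff_exists'.1 fun h0 => hi (f.injective (h0.trans hk.symm))
      simpa [hj] using (norm_le_pi_norm (approxErr θ (w r)) j).trans (hZ r)
  rw [Int.cast_det] at hone
  calc 1 ≤ |(Matrix.of fun r i => (w r (f i) : ℝ)).det| := hone
    _ ≤ (Fintype.card m).factorial * ((∏ r, Z r) * ∏ i, if i = k then T else 1) := by
        rw [det_submatrix_eq_det_approxErr θ w hk]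
        exact abs_det_le_of_abs_le_mul hentry
    _ = (Fintype.card m).factorial * ((∏ r, Z r) * T) := by
        rw [Finset.prod_ite_eq' Finset.univ k fun _ => T, if_pos (Finset.mem_univ k)]

end Minors

section BestApproximations

namespace IsRecordSeq

variable {ι : Type*} [Fintype ι] {θ : ι → ℝ} {q : ℕ → ℕ}

theorem latticeDist_apply_pos (h : IsRecordSeq (latticeDist θ) q) (j : ℕ) :
    0 < latticeDist θ (q j) :=
  (latticeDist_nonneg θ _).trans_lt (h.lt j)

theorem eq_zero_of_norm_approxErr_lt (h : IsRecordSeq (latticeDist θ) q) {j : ℕ}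
    {w : Option ι → ℤ} (hw : |(w none : ℝ)| < q (j + 1))
    (herr : ‖approxErr θ w‖ < latticeDist θ (q j)) : w = 0 := by
  have hnone : w none = 0 := by
    by_contra hne
    have hlt : (w none).natAbs < q (j + 1) := by
      rw [← Nat.cast_lt (α := ℝ), Nat.cast_natAbs, Int.cast_abs]
      exact hw
    exact absurd ((h.le j _ (Int.natAbs_pos.2 hne) hlt).trans (latticeDist_natAbs_le θ w))
      herr.not_ge
  have hsome (i : ι) : w (some i) = 0 := by
    have hi : |(w (some i) : ℝ)| < 1 := by
      calc |(w (some i) : ℝ)| = ‖approxErr θ w i‖ := by simp [approxErr, hnone]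
        _ ≤ ‖approxErr θ w‖ := norm_le_pi_norm _ i
        _ < 1 := by linarith [latticeDist_le_half θ (q j)]
    exact Int.abs_lt_one_iff.1 (mod_cast hi)
  exact funext fun i => i.rec hnone hsome

theorem eq_zero_of_abs_le_half (h : IsRecordSeq (latticeDist θ) q) {k : ℕ} {w : Option ι → ℤ}
    {s t : ℝ} (hw : ∀ i, (w i : ℝ) =
      s * nearestPoint θ (q k) i + t * nearestPoint θ (q (k + 1)) i)
    (hs : |s| ≤ 1 / 2) (ht : |t| ≤ 1 / 2) : w = 0 := by
  refine h.eq_zero_of_norm_approxErr_lt (j := k) ?_ ?_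
  · calc |(w none : ℝ)| = |s * q k + t * q (k + 1)| := by simp [hw]
      _ ≤ |s| * q k + |t| * q (k + 1) := by
          simpa only [abs_mul, Nat.abs_cast] using abs_add_le (s * q k) (t * q (k + 1))
      _ ≤ 1 / 2 * q k + 1 / 2 * q (k + 1) := by gcongr
      _ < q (k + 1) := by linarith [h.cast_lt k]
  · have herr : approxErr θ w =
        s • approxErr θ (nearestPoint θ (q k)) + t • approxErr θ (nearestPoint θ (q (k + 1))) := by
      ext i
      simp only [approxErr, Pi.add_apply, Pi.smul_apply, smul_eq_mul, hw]
      ring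
    calc ‖approxErr θ w‖ ≤ |s| * latticeDist θ (q k) + |t| * latticeDist θ (q (k + 1)) := by
          rw [herr]
          exact (norm_add_le _ _).trans_eq (by
            simp only [norm_smul, norm_approxErr_nearestPoint, Real.norm_eq_abs])
      _ ≤ 1 / 2 * latticeDist θ (q k) + 1 / 2 * latticeDist θ (q (k + 1)) := by
          gcongr <;> exact latticeDist_nonneg θ _
      _ < latticeDist θ (q k) := by linarith [h.lt k]

/-- Two consecutive best approximations are a basis of the integer points of their plane: rounding
the coefficients leaves a remainder too small to be nonzero. -/
theorem exists_nearestPoint_eq_zsmul_add_zsmul (h : IsRecordSeq (latticeDist θ) q) {k x : ℕ}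
    (hx : nearestPointRat θ x ∈ span ℚ {nearestPointRat θ (q k), nearestPointRat θ (q (k + 1))}) :
    ∃ a b : ℤ, nearestPoint θ x = a • nearestPoint θ (q k) + b • nearestPoint θ (q (k + 1)) := by
  obtain ⟨s, t, hst⟩ := mem_span_pair.1 hx
  have hw (i : Option ι) : (nearestPoint θ x i : ℝ) =
      s * nearestPoint θ (q k) i + t * nearestPoint θ (q (k + 1)) i := by
    exact_mod_cast (congrFun hst i).symm
  refine ⟨round (s : ℝ), round (t : ℝ), sub_eq_zero.1 (h.eq_zero_of_abs_le_half (k := k)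
    (fun i => ?_) (abs_sub_round (s : ℝ)) (abs_sub_round (t : ℝ)))⟩
  simp only [Pi.sub_apply, Pi.add_apply, Pi.smul_apply, smul_eq_mul, Int.cast_sub, Int.cast_add,
    Int.cast_mul, hw]
  ring

theorem norm_denomMinors_le_two_mul (h : IsRecordSeq (latticeDist θ) q) (j : ℕ) :
    ‖denomMinors (nearestPoint θ (q j)) (nearestPoint θ (q (j + 1)))‖ ≤
      2 * (latticeDist θ (q j) * q (j + 1)) := by
  have hle := norm_denomMinors_le θ (u := nearestPoint θ (q j)) (v := nearestPoint θ (q (j + 1)))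
  simp only [nearestPoint_none, Int.cast_natCast, Nat.abs_cast, norm_approxErr_nearestPoint] at hle
  have hmul := mul_le_mul (h.cast_lt j).le (h.lt j).le (latticeDist_nonneg θ _) (h.cast_pos _).le
  linarith

/-- If `q j` is close to `q (j + 1)` the two terms of the minor may cancel; one then subtracts the
first point from the second, which does not change the minor. -/
theorem mul_le_three_mul_norm_denomMinors (h : IsRecordSeq (latticeDist θ) q) (j : ℕ) :
    latticeDist θ (q j) * q (j + 1) ≤
      3 * ‖denomMinors (nearestPoint θ (q j)) (nearestPoint θ (q (j + 1)))‖ := by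
  set u := nearestPoint θ (q j)
  set v := nearestPoint θ (q (j + 1))
  have hζ := h.latticeDist_apply_pos j
  have hq := h.cast_lt j
  have hu : ‖approxErr θ u‖ = latticeDist θ (q j) := norm_approxErr_nearestPoint θ _
  rcases le_or_gt (3 * (q j : ℝ)) (2 * q (j + 1)) with hfar | hclose
  · have hv : ‖approxErr θ v‖ ≤ latticeDist θ (q j) :=
      (norm_approxErr_nearestPoint θ _).trans_le (h.lt j).le
    have hle := (neg_le_abs _).trans (abs_sub_le_norm_denomMinors u v θ)
    simp only [u, v, nearestPoint_none, Int.cast_natCast, Nat.abs_cast] at hle hu hv ⊢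
    nlinarith [mul_le_mul_of_nonneg_left hv (h.cast_pos j).le]
  · have hdenom : (((v - u) none : ℤ) : ℝ) = q (j + 1) - q j := by simp [u, v]
    have hvu : latticeDist θ (q j) ≤ ‖approxErr θ (v - u)‖ := by
      by_contra! hlt
      have h0 := h.eq_zero_of_norm_approxErr_lt (w := v - u) (j := j)
        (by rw [hdenom, abs_of_pos (by linarith)]; linarith [h.cast_pos j]) hlt
      rw [h0] at hdenom
      simp only [Pi.zero_apply, Int.cast_zero] at hdenom
      linarith
    have hminor : denomMinors u (v - u) = denomMinors u v := by
      simpa [sub_eq_neg_add] using denomMinors_linear_combination 1 0 (-1) 1 u v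
    have hle := (le_abs_self _).trans (abs_sub_le_norm_denomMinors u (v - u) θ)
    rw [hminor, hu, hdenom, abs_of_pos (sub_pos.2 hq)] at hle
    simp only [u, nearestPoint_none, Int.cast_natCast, Nat.abs_cast] at hle hvu ⊢
    nlinarith [mul_le_mul_of_nonneg_left hvu (h.cast_pos j).le]

theorem denomMinors_ne_zero (h : IsRecordSeq (latticeDist θ) q) (j : ℕ) :
    denomMinors (nearestPoint θ (q j)) (nearestPoint θ (q (j + 1))) ≠ 0 := fun h0 => by
  have hle := h.mul_le_three_mul_norm_denomMinors j
  rw [h0, norm_zero, mul_zero] at hle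
  exact hle.not_gt (mul_pos (h.latticeDist_apply_pos j) (h.cast_pos _))

theorem linearIndependent_consecutive (h : IsRecordSeq (latticeDist θ) q) (j : ℕ) :
    LinearIndependent ℚ ![nearestPointRat θ (q j), nearestPointRat θ (q (j + 1))] :=
  linearIndependent_of_denomMinors_ne_zero (by simpa using (h.pos j).ne') (h.denomMinors_ne_zero j)

/-- The parallelogram of `q i`, `q (i + 1)` has an integral multiple of the area of that of `q k`,
`q (k + 1)`. -/
theorem mul_le_six_mul_of_mem_span (h : IsRecordSeq (latticeDist θ) q) {i k : ℕ}
    (hi : nearestPointRat θ (q i) ∈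
      span ℚ {nearestPointRat θ (q k), nearestPointRat θ (q (k + 1))})
    (hi' : nearestPointRat θ (q (i + 1)) ∈
      span ℚ {nearestPointRat θ (q k), nearestPointRat θ (q (k + 1))}) :
    latticeDist θ (q k) * q (k + 1) ≤ 6 * (latticeDist θ (q i) * q (i + 1)) := by
  obtain ⟨a, b, hab⟩ := h.exists_nearestPoint_eq_zsmul_add_zsmul hi
  obtain ⟨c, d, hcd⟩ := h.exists_nearestPoint_eq_zsmul_add_zsmul hi'
  have hminor := denomMinors_linear_combination a b c d
    (nearestPoint θ (q k)) (nearestPoint θ (q (k + 1)))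
  rw [← hab, ← hcd] at hminor
  have hdet : a * d - b * c ≠ 0 := fun h0 =>
    h.denomMinors_ne_zero i (by rw [hminor, h0, zero_smul])
  have harea : ‖denomMinors (nearestPoint θ (q k)) (nearestPoint θ (q (k + 1)))‖ ≤
      ‖denomMinors (nearestPoint θ (q i)) (nearestPoint θ (q (i + 1)))‖ := by
    rw [hminor, norm_smul, Int.norm_eq_abs]
    exact le_mul_of_one_le_left (norm_nonneg _) (mod_cast Int.one_le_abs hdet)
  linarith [h.mul_le_three_mul_norm_denomMinors k, h.norm_denomMinors_le_two_mul i]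

theorem one_le_of_linearIndependent_quadruple (h : IsRecordSeq (latticeDist θ) q) {i k : ℕ}
    (hik : i < k) (hw : LinearIndependent ℚ ![nearestPointRat θ (q (k + 2)),
      nearestPointRat θ (q i), nearestPointRat θ (q k), nearestPointRat θ (q (k + 1))]) :
    1 ≤ 24 * (latticeDist θ (q i) * latticeDist θ (q k) * latticeDist θ (q (k + 1)) *
      q (k + 2)) := by
  let e : Fin 4 → ℕ := ![k + 2, i, k, k + 1]
  have he (r : Fin 4) : e r ≤ k + 2 := by fin_cases r <;> simp [e]; omega
  have hpos := h.latticeDist_apply_pos (k + 2)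
  have hle : (1 : ℝ) ≤ _ := one_le_of_linearIndependent (θ := θ)
    (w := fun r => nearestPoint θ (q (e r)))
    (by convert hw using 1; ext r; fin_cases r <;> rfl) (r₀ := 0)
    (by simpa using (h.pos _).ne') (Z := fun r => latticeDist θ (q (e r)))
    (T := q (k + 2) / latticeDist θ (q (k + 2)))
    (fun r => (norm_approxErr_nearestPoint θ _).le) fun r => by
      rw [nearestPoint_none, Int.cast_natCast, Nat.abs_cast, ← mul_div_assoc, le_div_iff₀ hpos,
        mul_comm]
      have hq : (q (e r) : ℝ) ≤ q (k + 2) := Nat.cast_le.2 (h.strictMono.monotone (he r))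
      exact mul_le_mul (h.antitone (he r)) hq (Nat.cast_nonneg _) (latticeDist_nonneg θ _)
  have hfour : (Nat.factorial 4 : ℝ) = 24 := by norm_num [Nat.factorial]
  simp only [Fin.prod_univ_four, Fintype.card_fin, hfour] at hle
  calc 1 ≤ _ := hle
    _ = _ := by
      simp only [e, Matrix.cons_val]
      field_simp

theorem exists_succ_le_mul (h : IsRecordSeq (latticeDist θ) q)
    (hrank : 4 ≤ Set.finrank ℚ (insert 1 (Set.range θ))) (N : ℕ) :
    ∃ i k, N ≤ i ∧ i < k ∧ (q (k + 1) : ℝ) ≤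
      144 * (latticeDist θ (q i) * (latticeDist θ (q (i + 1)) * q (i + 2)) *
        (latticeDist θ (q (k + 1)) * q (k + 2))) := by
  have htail : (q '' Set.Ici N).Infinite :=
    (Set.Ici_infinite N).image h.strictMono.injective.injOn
  have hspan := hrank.trans (finrank_le_finrank_span_nearestPoint θ htail)
  rw [Set.image_image] at hspan
  obtain ⟨i, k, hNi, hik, hplane, hindep⟩ :=
    exists_linearIndependent_quadruple _ h.linearIndependent_consecutive hspan
  have harea := h.mul_le_six_mul_of_mem_span (hplane (i + 1) (by omega) (by omega))
    (hplane (i + 2) (by omega) (by omega))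
  have hdet := h.one_le_of_linearIndependent_quadruple hik hindep
  refine ⟨i, k, hNi, hik, ?_⟩
  have hi := latticeDist_nonneg θ (q i)
  have hk := latticeDist_nonneg θ (q (k + 1))
  calc (q (k + 1) : ℝ) = q (k + 1) * 1 := (mul_one _).symm
    _ ≤ q (k + 1) * (24 * (latticeDist θ (q i) * latticeDist θ (q k) *
          latticeDist θ (q (k + 1)) * q (k + 2))) := by gcongr
    _ = 24 * (latticeDist θ (q i) * (latticeDist θ (q k) * q (k + 1)) *
          (latticeDist θ (q (k + 1)) * q (k + 2))) := by ring
    _ ≤ 24 * (latticeDist θ (q i) * (6 * (latticeDist θ (q (i + 1)) * q (i + 2))) *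
          (latticeDist θ (q (k + 1)) * q (k + 2))) := by gcongr
    _ = _ := by ring

end IsRecordSeq

end BestApproximations

section Exponents

namespace IsRecordSeq

variable {ι : Type*} [Fintype ι] {θ : ι → ℝ} {q : ℕ → ℕ}

theorem latticeDist_le_psi (h : IsRecordSeq (latticeDist θ) q) {j : ℕ} {t : ℝ} (ht : 1 ≤ t)
    (htq : t < q (j + 1)) : latticeDist θ (q j) ≤ psi θ t := by
  refine le_csInf (nonempty_image_latticeDist θ ht) ?_
  rintro _ ⟨x, ⟨hx, hxt⟩, rfl⟩
  exact h.le j x hx (Nat.cast_lt.1 (hxt.trans_lt htq))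

theorem exists_eventually_log_le (h : IsRecordSeq (latticeDist θ) q) {α C : ℝ}
    (hC : ∀ᶠ t in atTop, t ^ α * psi θ t ≤ C) :
    ∃ c, ∀ᶠ j in atTop, Real.log (latticeDist θ (q j)) ≤ c - α * Real.log (q (j + 1)) := by
  refine ⟨Real.log C + α * Real.log 2, ?_⟩
  have hhalf : Tendsto (fun j => (q (j + 1) / 2 : ℝ)) atTop atTop :=
    (h.tendsto_cast.comp (tendsto_add_atTop_nat 1)).atTop_div_const two_pos
  filter_upwards [hhalf.eventually hC, hhalf.eventually_ge_atTop 1] with j hj hj1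
  have hq : (0 : ℝ) < q (j + 1) := h.cast_pos _
  have hζ := h.latticeDist_apply_pos j
  have hpow : 0 < (q (j + 1) / 2 : ℝ) ^ α := by positivity
  have hle : (q (j + 1) / 2 : ℝ) ^ α * latticeDist θ (q j) ≤ C :=
    (mul_le_mul_of_nonneg_left (h.latticeDist_le_psi hj1 (half_lt_self hq)) hpow.le).trans hj
  have hlog := Real.log_le_log (mul_pos hpow hζ) hle
  rw [Real.log_mul hpow.ne' hζ.ne', Real.log_rpow (half_pos hq),
    Real.log_div hq.ne' two_ne_zero] at hlog
  linarith

theorem eventually_log_pos (h : IsRecordSeq (latticeDist θ) q) {β : ℝ}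
    (hβ : ∀ᶠ t in atTop, 1 < t ^ β * psi θ t) :
    ∀ᶠ j in atTop, 0 < β * Real.log (q j) + Real.log (latticeDist θ (q j)) := by
  filter_upwards [h.tendsto_cast.eventually hβ] with j hj
  have hpow : 0 < (q j : ℝ) ^ β := Real.rpow_pos_of_pos (h.cast_pos j) β
  have hlt : 1 < (q j : ℝ) ^ β * latticeDist θ (q j) :=
    hj.trans_le (mul_le_mul_of_nonneg_left (psi_le_latticeDist θ (h.pos j) le_rfl) hpow.le)
  have hlog := Real.log_pos hlt
  rwa [Real.log_mul hpow.ne' (h.latticeDist_apply_pos j).ne', Real.log_rpow (h.cast_pos j)] at hlog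

theorem exists_log_succ_le (h : IsRecordSeq (latticeDist θ) q)
    (hrank : 4 ≤ Set.finrank ℚ (insert 1 (Set.range θ))) (N : ℕ) :
    ∃ i k, N ≤ i ∧ i < k ∧ Real.log (q (k + 1)) ≤ Real.log 144 +
      (Real.log (latticeDist θ (q i)) +
        (Real.log (latticeDist θ (q (i + 1))) + Real.log (q (i + 2))) +
        (Real.log (latticeDist θ (q (k + 1))) + Real.log (q (k + 2)))) := by
  obtain ⟨i, k, hNi, hik, hle⟩ := h.exists_succ_le_mul hrank N
  refine ⟨i, k, hNi, hik, (Real.log_le_log (h.cast_pos _) hle).trans_eq ?_⟩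
  have hζ (j : ℕ) : latticeDist θ (q j) ≠ 0 := (h.latticeDist_apply_pos j).ne'
  have hq (j : ℕ) : (q j : ℝ) ≠ 0 := (h.cast_pos j).ne'
  have hζq (j l : ℕ) : latticeDist θ (q j) * q l ≠ 0 := mul_ne_zero (hζ j) (hq l)
  rw [Real.log_mul (by norm_num) (mul_ne_zero (mul_ne_zero (hζ _) (hζq _ _)) (hζq _ _)),
    Real.log_mul (mul_ne_zero (hζ _) (hζq _ _)) (hζq _ _), Real.log_mul (hζ _) (hζq _ _),
    Real.log_mul (hζ _) (hq _), Real.log_mul (hζ _) (hq _)]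

end IsRecordSeq

variable {ι : Type*} [Fintype ι] {θ : ι → ℝ} {α g : ℝ}

theorem exists_isRecordSeq_latticeDist (hrank : 2 ≤ Set.finrank ℚ (insert 1 (Set.range θ)))
    {C : ℝ} (hα : 0 < α) (hC : ∀ᶠ t in atTop, t ^ α * psi θ t ≤ C) :
    ∃ q, IsRecordSeq (latticeDist θ) q := by
  refine exists_isRecordSeq fun m hm => ?_
  have hgrowth : ∀ᶠ t : ℝ in atTop, C < t ^ α * latticeDist θ m :=
    ((tendsto_rpow_atTop hα).atTop_mul_const (latticeDist_pos hrank hm)).eventually_gt_atTop C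
  obtain ⟨t, htC, hCt, ht⟩ := (hC.and (hgrowth.and (eventually_ge_atTop 1))).exists
  have hpsi : psi θ t < latticeDist θ m :=
    lt_of_mul_lt_mul_left (htC.trans_lt hCt) (by positivity)
  obtain ⟨_, ⟨n, ⟨hn, -⟩, rfl⟩, hlt⟩ :=
    exists_lt_of_csInf_lt (nonempty_image_latticeDist θ ht) hpsi
  exact ⟨n, hn, hlt⟩

/-- Here `A`, `B`, `C`, `D` are the logarithms of `q (i + 1)`, `q (i + 2)`, `q (k + 1)` and
`q (k + 2)`. -/
theorem mul_le_of_growth {A B C D K c : ℝ} (hg : 0 ≤ g) (hα : 0 ≤ α) (hα1 : α ≤ 1)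
    (hαg : (1 - α) * g ≤ 1) (hBC : B ≤ C) (hB : B ≤ c + g * A) (hD : D ≤ c + g * C)
    (hC : C + α * A ≤ K + (1 - α) * (B + D)) :
    (α * (g + 1) - (1 - α) * g ^ 2) * B ≤ g * K + (α + g * (1 - α)) * c := by
  have hαD := mul_le_mul_of_nonneg_left hD (sub_nonneg.2 hα1)
  have hαBC := mul_le_mul_of_nonneg_left hBC (sub_nonneg.2 hαg)
  have hAB : (1 - (1 - α) * g) * B + α * A ≤ K + (1 - α) * (B + c) := by linarith
  linarith [mul_le_mul_of_nonneg_left hAB hg, mul_le_mul_of_nonneg_left hB hα]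

theorem frequently_rpow_mul_psi_le_one (hrank : 4 ≤ Set.finrank ℚ (insert 1 (Set.range θ)))
    (hα : 0 < α) (hα1 : α < 1) (hg : 0 < g) (hαg : (1 - α) * g ^ 2 < α * (g + 1))
    {C : ℝ} (hC : ∀ᶠ t in atTop, t ^ α * psi θ t ≤ C) :
    ∃ᶠ t in atTop, t ^ (α * g) * psi θ t ≤ 1 := by
  intro hcon
  simp only [not_le] at hcon
  obtain ⟨q, h⟩ := exists_isRecordSeq_latticeDist (by omega) hα hC
  obtain ⟨c, hc⟩ := h.exists_eventually_log_le hC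
  have hgrowth : ∀ᶠ j in atTop, Real.log (q (j + 1)) ≤ c / α + g * Real.log (q j) := by
    filter_upwards [hc, h.eventually_log_pos hcon] with j hj hpos
    refine le_of_mul_le_mul_left ?_ hα
    rw [mul_add, mul_div_cancel₀ c hα.ne']
    linarith
  set K := Real.log 144 + 3 * c
  have hlarge := (Real.tendsto_log_atTop.comp h.tendsto_cast).eventually_gt_atTop
    ((g * K + (α + g * (1 - α)) * (c / α)) / (α * (g + 1) - (1 - α) * g ^ 2))
  obtain ⟨N, hN⟩ := eventually_atTop.1 (hc.and (hgrowth.and hlarge))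
  obtain ⟨i, k, hNi, hik, hlog⟩ := h.exists_log_succ_le hrank N
  have hmono : Real.log (q (i + 2)) ≤ Real.log (q (k + 1)) :=
    Real.log_le_log (h.cast_pos _) (Nat.cast_le.2 (h.strictMono.monotone (by omega)))
  have hαg1 : (1 - α) * g ≤ 1 := by
    by_contra! hlt
    nlinarith [mul_lt_mul_of_pos_right hlt hg]
  have hbound := mul_le_of_growth hg.le hα.le hα1.le hαg1 hmono (hN (i + 1) (by omega)).2.1
    (hN (k + 1) (by omega)).2.1 (K := K) (by
      linarith [(hN i hNi).1, (hN (i + 1) (by omega)).1, (hN (k + 1) (by omega)).1])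
  have hB := (div_lt_iff₀' (sub_pos.2 hαg)).1 (hN (i + 2) (by omega)).2.2
  exact hbound.not_gt hB

theorem exists_sq_lt_mul_add_one {a y : ℝ} (ha : 0 < a) (hy : y < (a + √(a ^ 2 + 4 * a)) / 2) :
    ∃ g, 0 < g ∧ y < g ∧ g ^ 2 < a * (g + 1) := by
  set G := (a + √(a ^ 2 + 4 * a)) / 2
  have hG : G ^ 2 = a * (G + 1) := by
    have hsq := Real.sq_sqrt (show 0 ≤ a ^ 2 + 4 * a by positivity)
    linear_combination hsq / 4
  have haG : a < G := by
    have hG0 : 0 < G := by positivity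
    exact lt_of_mul_lt_mul_right (by linarith) hG0.le
  obtain ⟨g, hg, hgG⟩ := exists_between (max_lt (ha.trans haG) hy)
  obtain ⟨hg0, hyg⟩ := max_lt_iff.1 hg
  refine ⟨g, hg0, hyg, ?_⟩
  have hfactor : g ^ 2 - a * (g + 1) = (g - G) * (g + (G - a)) := by linear_combination hG
  exact sub_neg.1 (hfactor.trans_lt
    (mul_neg_of_neg_of_pos (sub_neg.2 hgG) (add_pos hg0 (sub_pos.2 haG))))

theorem exists_exponents {S : Set ℝ} {w x : ℝ} (hS : IsLUB S w) (hw : 0 < w) (hw1 : w < 1)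
    (hx : x < w / 2 * (w / (1 - w) + √((w / (1 - w)) ^ 2 + 4 * w / (1 - w)))) :
    ∃ α ∈ S, ∃ g, 0 < α ∧ α < 1 ∧ 0 < g ∧ x < α * g ∧ (1 - α) * g ^ 2 < α * (g + 1) := by
  have hw1' : 0 < 1 - w := sub_pos.2 hw1
  obtain ⟨g, hg, hxg, hsq⟩ : ∃ g, 0 < g ∧ x / w < g ∧ g ^ 2 < w / (1 - w) * (g + 1) := by
    refine exists_sq_lt_mul_add_one (div_pos hw hw1') ((div_lt_iff₀ hw).2 ?_)
    rw [← mul_div_assoc]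
    linarith
  have hwg : (1 - w) * g ^ 2 < w * (g + 1) := by
    rw [div_mul_eq_mul_div, lt_div_iff₀ hw1'] at hsq
    linarith
  have hopen : IsOpen {α : ℝ | 0 < α ∧ α < 1 ∧ x < α * g ∧ (1 - α) * g ^ 2 < α * (g + 1)} :=
    (isOpen_lt (by fun_prop) (by fun_prop)).and <| (isOpen_lt (by fun_prop) (by fun_prop)).and <|
      (isOpen_lt (by fun_prop) (by fun_prop)).and <| isOpen_lt (by fun_prop) (by fun_prop)
  have hnhds := hopen.mem_nhds ⟨hw, hw1, (div_lt_iff₀' hw).1 hxg, hwg⟩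
  obtain ⟨α, hαS, hα, hα1, hxα, hαg⟩ :=
    ((hS.frequently_mem hS.nonempty).and_eventually (mem_nhdsWithin_of_mem_nhds hnhds)).exists
  exact ⟨α, hαS, g, hα, hα1, hg, hxα, hαg⟩

/-- For `w = 1` the left side only has the junk value given by `x / 0 = 0`. -/
theorem mul_add_sqrt_nonpos {w : ℝ} (hw : w = 0 ∨ 1 ≤ w) :
    w / 2 * (w / (1 - w) + √((w / (1 - w)) ^ 2 + 4 * w / (1 - w))) ≤ 0 := by
  obtain rfl | hw1 := hw
  · simp
  have ha : w / (1 - w) ≤ 0 := div_nonpos_of_nonneg_of_nonpos (by linarith) (by linarith)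
  have hsqrt : √((w / (1 - w)) ^ 2 + 4 * w / (1 - w)) ≤ -(w / (1 - w)) := by
    rw [Real.sqrt_le_left (by linarith), mul_div_assoc]
    linarith
  exact mul_nonpos_of_nonneg_of_nonpos (by linarith) (by linarith)

theorem eventually_rpow_zero_mul_psi_le (θ : ι → ℝ) :
    ∀ᶠ t : ℝ in atTop, t ^ (0 : ℝ) * psi θ t ≤ 1 / 2 := by
  filter_upwards [eventually_ge_atTop 1] with t ht
  rw [Real.rpow_zero, one_mul]
  exact (psi_le_latticeDist θ one_pos (mod_cast ht)).trans (latticeDist_le_half θ 1)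

end Exponents

theorem finrank_insert_range_eq_four {θ : Fin 3 → ℝ}
    (hindep : LinearIndependent ℚ ![(1 : ℝ), θ 0, θ 1, θ 2]) :
    Set.finrank ℚ (insert 1 (Set.range θ)) = 4 := by
  have hvec : ![(1 : ℝ), θ 0, θ 1, θ 2] = Fin.cons 1 θ := by
    ext i
    fin_cases i <;> rfl
  rw [hvec] at hindep
  rw [← Fin.range_cons]
  exact finrank_span_eq_card hindep

theorem stmt17_general {ι : Type*} [Fintype ι] (θ : ι → ℝ)
    (hrank : 4 ≤ Set.finrank ℚ (insert 1 (Set.range θ)))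
    (omegaHat : ℝ)
    (homegaHat : IsLUB {γ : ℝ | 0 ≤ γ ∧ ∃ C : ℝ,
      ∀ᶠ t : ℝ in atTop, t ^ γ * psi θ t ≤ C} omegaHat) :
    ∀ x : ℝ,
      x < omegaHat / 2 * (omegaHat / (1 - omegaHat) +
        Real.sqrt ((omegaHat / (1 - omegaHat)) ^ 2 + 4 * omegaHat / (1 - omegaHat))) →
      ∃ γ : ℝ, (0 ≤ γ ∧ ∃ C : ℝ, ∃ᶠ t : ℝ in atTop, t ^ γ * psi θ t ≤ C) ∧ x < γ := by
  intro x hx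
  have hzero := eventually_rpow_zero_mul_psi_le θ
  have hnonneg : 0 ≤ omegaHat := homegaHat.1 ⟨le_rfl, _, hzero⟩
  by_cases hω : 0 < omegaHat ∧ omegaHat < 1
  · obtain ⟨α, ⟨-, C, hC⟩, g, hα, hα1, hg, hxαg, hαg⟩ :=
      exists_exponents homegaHat hω.1 hω.2 hx
    exact ⟨α * g, ⟨by positivity, 1, frequently_rpow_mul_psi_le_one hrank hα hα1 hg hαg hC⟩, hxαg⟩
  · have hdegenerate : omegaHat = 0 ∨ 1 ≤ omegaHat := by
      rcases hnonneg.eq_or_lt with h0 | hpos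
      exacts [.inl h0.symm, .inr (not_lt.1 fun h1 => hω ⟨hpos, h1⟩)]
    exact ⟨0, ⟨le_rfl, _, hzero.frequently⟩, hx.trans_le (mul_add_sqrt_nonpos hdegenerate)⟩

/-- Moshchevitin's improvement of Jarník's inequality for `m = 1`, `n = 3`:
`ω ≥ (ω̂/2)(ω̂/(1-ω̂) + √((ω̂/(1-ω̂))² + 4ω̂/(1-ω̂)))`.
The conclusion `ω ≥ RHS`, where `ω = sup{γ ≥ 0 : liminf t^γ ψ(t) < ∞}` (possibly `+∞`),
is expressed as: every real `x < RHS` is exceeded by some element of that set. -/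
theorem stmt17 (θ : Fin 3 → ℝ)
    (hindep : LinearIndependent ℚ ![(1 : ℝ), θ 0, θ 1, θ 2])
    (omegaHat : ℝ)
    (homegaHat : IsLUB {γ : ℝ | 0 ≤ γ ∧ ∃ C : ℝ,
      ∀ᶠ t : ℝ in atTop, t ^ γ * psi3 θ t ≤ C} omegaHat) :
    ∀ x : ℝ,
      x < omegaHat / 2 * (omegaHat / (1 - omegaHat) +
        Real.sqrt ((omegaHat / (1 - omegaHat)) ^ 2 + 4 * omegaHat / (1 - omegaHat))) →
      ∃ γ : ℝ, (0 ≤ γ ∧ ∃ C : ℝ, ∃ᶠ t : ℝ in atTop, t ^ γ * psi3 θ t ≤ C) ∧ x < γ := by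
  rw [psi3_eq_psi] at homegaHat ⊢
  exact stmt17_general θ (finrank_insert_range_eq_four hindep).ge omegaHat homegaHat
end
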